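/- With the apparatus fixed and p sufficiently large in terms of k, suppose that a and b are integers with 0 ≤ a < b ≤ (32tθ)^{−1} and b ≥ ta; put H = 15(t−1)b and g = b − ta. Then there exist an integer h with 0 ≤ h < H and a constant C depending at most on s, k, r, t, N such that ⟦K_{a,b}(X)⟧ ≤ C(X^δ·((M^{g−4h/3})^s·⟦K_{b,tb+h}(X)⟧)^{1/t}·(X/M^b)^{Λ(1−1/t)} + (M^H)^{−r/6}·(X/M^b)^{Λ}). -/

import Mathlib

open Filter MeasureTheory Finset

attribute [local instance] Classical.propDecidable

noncomputable section

/-- Number of integral solutions of the Vinogradov system of degree k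
in 2s variables from [1,X]. -/
def Jcount (s k : ℕ) (X : ℝ) : ℕ :=
  Set.ncard {xy : (Fin s → ℤ) × (Fin s → ℤ) |
    (∀ i, 1 ≤ xy.1 i ∧ (xy.1 i : ℝ) ≤ X) ∧
    (∀ i, 1 ≤ xy.2 i ∧ (xy.2 i : ℝ) ≤ X) ∧
    ∀ j ∈ Finset.Icc 1 k, ∑ i, ((xy.1 i) ^ j - (xy.2 i) ^ j) = 0}

/-- e(z) = exp(2πiz). -/
def ec (z : ℝ) : ℂ := Complex.exp (2 * Real.pi * Complex.I * z)

/-- The unit box [0,1)^k. -/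
def box (k : ℕ) : Set (Fin k → ℝ) := Set.univ.pi fun _ => Set.Ico (0:ℝ) 1

/-- The exponential sum f_c(α;ξ), over 1 ≤ x ≤ X with x ≡ ξ (mod p^c). -/
def fexp (k p : ℕ) (X : ℝ) (c : ℕ) (ξ : ℤ) (α : Fin k → ℝ) : ℂ :=
  ∑ x ∈ (Finset.Icc (1:ℤ) ⌊X⌋).filter (fun x => Int.ModEq ((p:ℤ)^c) x ξ),
    ec (∑ j : Fin k, α j * (x:ℝ)^((j:ℕ)+1))

/-- The set Ξ_c^r(ξ): r-tuples in [1,p^{c+1}], congruent to ξ mod p^c,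
pairwise distinct mod p^{c+1}. -/
def XiSet (p r c : ℕ) (ξ : ℤ) : Set (Fin r → ℤ) :=
  {v | (∀ i, 1 ≤ v i ∧ v i ≤ (p:ℤ)^(c+1)) ∧
       (∀ i, Int.ModEq ((p:ℤ)^c) (v i) ξ) ∧
       Function.Injective fun i => ((v i : ZMod (p^(c+1))))}

/-- The conditioned exponential sum F_c(α;ξ). -/
def Fexp (k p r : ℕ) (X : ℝ) (c : ℕ) (ξ : ℤ) (α : Fin k → ℝ) : ℂ :=
  ∑ᶠ v ∈ XiSet p r c ξ, ∏ i, fexp k p X (c+1) (v i) α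

/-- The mean value I_{a,b}(X;ξ,η). -/
def Iab (k p r s : ℕ) (X : ℝ) (a b : ℕ) (ξ η : ℤ) : ℝ :=
  ∫ α in box k, ‖Fexp k p r X a ξ α‖^2 * ‖fexp k p X b η α‖^(2*s)

/-- The mean value K_{a,b}(X;ξ,η). -/
def Kab (k p r t : ℕ) (X : ℝ) (a b : ℕ) (ξ η : ℤ) : ℝ :=
  ∫ α in box k, ‖Fexp k p r X a ξ α‖^2 * ‖Fexp k p r X b η α‖^(2*t)

/-- I_{a,b}(X): the maximum of I_{a,b}(X;ξ,η) over admissible ξ, η. -/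
def Imax (k p r s : ℕ) (X : ℝ) (a b : ℕ) : ℝ :=
  sSup {v : ℝ | ∃ ξ η : ℤ, 1 ≤ ξ ∧ ξ ≤ (p:ℤ)^a ∧ 1 ≤ η ∧ η ≤ (p:ℤ)^b ∧
    ¬ Int.ModEq (p:ℤ) η ξ ∧ v = Iab k p r s X a b ξ η}

/-- The set Ξ(η) of members of Ξ_0^r(0) avoiding the class of η mod p. -/
def XiTilde (p r : ℕ) (η : ℤ) : Set (Fin r → ℤ) :=
  {v | v ∈ XiSet p r 0 0 ∧ ∀ i, ¬ Int.ModEq (p:ℤ) (v i) η}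

/-- The pre-conditioned sum F(α;η). -/
def Ftilde (k p r : ℕ) (X : ℝ) (η : ℤ) (α : Fin k → ℝ) : ℂ :=
  ∑ᶠ v ∈ XiTilde p r η, ∏ i, fexp k p X 1 (v i) α

/-- The mean value K̃_c(X;η). -/
def Ktilde (k p r t : ℕ) (X : ℝ) (c : ℕ) (η : ℤ) : ℝ :=
  ∫ α in box k, ‖Ftilde k p r X η α‖^2 * ‖Fexp k p r X c η α‖^(2*t)

/-- K_{a,b}(X): for a ≥ 1 the maximum of K_{a,b}(X;ξ,η) over admissible ξ, η;
for a = 0 the pre-congruencing quantity K_{0,b}(X) = max_η K̃_b(X;η). -/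
def Kmax (k p r t : ℕ) (X : ℝ) (a b : ℕ) : ℝ :=
  if a = 0 then sSup {v : ℝ | ∃ η : ℤ, 1 ≤ η ∧ η ≤ (p:ℤ)^b ∧ v = Ktilde k p r t X b η}
  else sSup {v : ℝ | ∃ ξ η : ℤ, 1 ≤ ξ ∧ ξ ≤ (p:ℤ)^a ∧ 1 ≤ η ∧ η ≤ (p:ℤ)^b ∧
    ¬ Int.ModEq (p:ℤ) η ξ ∧ v = Kab k p r t X a b ξ η}

/-- λ = limsup_{Y→∞} log J_{sr,k}(Y)/log Y. -/
def lamExp (k sr : ℕ) : ℝ :=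
  Filter.limsup (fun Y : ℝ => Real.log ((Jcount sr k Y : ℝ)) / Real.log Y) Filter.atTop

/-- θ = (16t)^{-N-1}. -/
def thetaC (t N : ℕ) : ℝ := (16*(t:ℝ)) ^ (-((N:ℝ)+1))

/-- δ = θ/(1000 N t^N). -/
def deltaC (t N : ℕ) : ℝ := thetaC t N / (1000 * (N:ℝ) * (t:ℝ)^N)

/-- M = X^θ. -/
def Mval (t N : ℕ) (X : ℝ) : ℝ := X ^ thetaC t N

/-- κ = r(t+1) - (1/2)(t+r-k)(t+r-k-1+(2r-2)/(t-1)). -/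
def kappa (k r t : ℕ) : ℝ :=
  (r : ℝ) * ((t : ℝ) + 1) -
    (1/2) * ((t : ℝ) + r - k) * ((t : ℝ) + r - k - 1 + (2*(r:ℝ) - 2)/((t:ℝ) - 1))

/-- Λ = λ - 2(s+r) + κ, with s = rt. -/
def LamC (k r t : ℕ) : ℝ := lamExp k (r*(t+1)) - 2*((r*(t+1) : ℕ) : ℝ) + kappa k r t

/-- The normalised mean value ⟦K_{a,b}(X)⟧ = K_{a,b}(X) (X/M^b)^{-2s} (X/M^a)^{κ-2r}. -/
def normK (k p r t N : ℕ) (X : ℝ) (a b : ℕ) : ℝ :=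
  Kmax k p r t X a b * (X / (Mval t N X)^b) ^ (-(2*((r*t : ℕ):ℝ))) *
    (X / (Mval t N X)^a) ^ (kappa k r t - 2*(r:ℝ))

/-- μ = (1/2)(t+r-k)(t+r-k-1). -/
def muC (k r t : ℕ) : ℝ := (1/2) * ((t:ℝ)+r-k) * ((t:ℝ)+r-k-1)

/-- ν = (1/2)(t+r-k)(k+r-t-1). -/
def nuC (k r t : ℕ) : ℝ := (1/2) * ((t:ℝ)+r-k) * ((k:ℝ)+r-t-1)

/-!
In a solution counted by `K_{a,b}` the variables coming from `F_b` are congruent to `η` modulo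
`p ^ b`, so the `r` variables on each side coming from `F_a` satisfy
`∑ (x_i - η) ^ j ≡ ∑ (y_i - η) ^ j (mod p ^ (j b))` for `1 ≤ j ≤ k`. Since the `ξ_i` are distinct
modulo `p ^ (a + 1)`, these congruences leave `O(p ^ (μ b + ν a))` possible tuples of residues
modulo `p ^ (t b)`, and Hölder's inequality bounds `K_{a,b}` by a power of `M` times
`I_{b,tb} ^ (1/t) J ^ (1 - 1/t)`, where `I_{b,c}` is the mean value of `|F_b ^ 2 f_c ^ (2s)|`.

Among the `s` variables of `f_c ^ s`, either some `r` are distinct modulo `p ^ (c + 1)`, or many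
are congruent. Hence `I_{b,c}` is bounded by `K_{b,c}` or by `p ^ (2s/3) I_{b,c+1}`. Iterating from
`c = t b`, either some `K_{b,tb+h}` with `h < H` is reached, or after `H` steps the variables of
`f_c` lie in so sparse a progression that Hölder's inequality and the bound for `J` suffice.
-/

/-! ### Refining finite sets by residue conditions -/

section Refinement

variable {α β ι : Type*}

lemma exists_card_le_mul_card_fiber (S : Finset α) (T : Finset β) (g : α → β)
    (hg : ∀ x ∈ S, g x ∈ T) : ∃ S' ⊆ S, S.card ≤ T.card * S'.card ∧
      ∀ x ∈ S', ∀ y ∈ S', g x = g y := by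
  rcases S.eq_empty_or_nonempty with rfl | ⟨x, hx⟩
  · exact ⟨∅, by simp, by simp, by simp⟩
  · obtain ⟨b, -, hb⟩ := T.exists_max_image (fun b => (S.filter (g · = b)).card) ⟨_, hg x hx⟩
    refine ⟨S.filter (g · = b), filter_subset _ _, ?_, fun x hx y hy => ?_⟩
    · rw [mul_comm]
      exact card_le_mul_card_image_of_maps_to hg _ hb
    · rw [(mem_filter.1 hx).2, (mem_filter.1 hy).2]

lemma exists_subset_modEq_mul {n : ℕ} (hn : 0 < n) (m : ℤ) (S : Finset α) (F : α → ℤ)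
    (hF : ∀ x ∈ S, ∀ y ∈ S, F x ≡ F y [ZMOD m]) :
    ∃ S' ⊆ S, S.card ≤ n * S'.card ∧ ∀ x ∈ S', ∀ y ∈ S', F x ≡ F y [ZMOD m * n] := by
  rcases S.eq_empty_or_nonempty with rfl | ⟨x₀, hx₀⟩
  · exact ⟨∅, by simp, by simp, by simp⟩
  choose! u hu using fun x hx => (hF x₀ hx₀ x hx).dvd
  have hn' : (0 : ℤ) < n := by exact_mod_cast hn
  obtain ⟨S', hS', hcard, hconst⟩ := exists_card_le_mul_card_fiber S (Finset.Ico (0 : ℤ) n)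
    (fun x => u x % n)
    (fun x _ => Finset.mem_Ico.2 ⟨Int.emod_nonneg _ hn'.ne', Int.emod_lt_of_pos _ hn'⟩)
  refine ⟨S', hS', by simpa using hcard, fun x hx y hy => ?_⟩
  have hxy : m * u x + F x₀ ≡ m * u y + F x₀ [ZMOD m * n] :=
    (Int.ModEq.mul_left' (hconst x hx y hy)).add_right _
  rwa [← hu x (hS' hx), ← hu y (hS' hy), sub_add_cancel, sub_add_cancel] at hxy

lemma exists_subset_forall_modEq_mul (I : Finset ι) {n : ι → ℕ} (hn : ∀ i ∈ I, 0 < n i)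
    (m : ι → ℤ) (S : Finset α) (F : ι → α → ℤ)
    (hF : ∀ i ∈ I, ∀ x ∈ S, ∀ y ∈ S, F i x ≡ F i y [ZMOD m i]) :
    ∃ S' ⊆ S, S.card ≤ (∏ i ∈ I, n i) * S'.card ∧
      ∀ i ∈ I, ∀ x ∈ S', ∀ y ∈ S', F i x ≡ F i y [ZMOD m i * n i] := by
  induction I using Finset.induction_on with
  | empty => exact ⟨S, subset_rfl, by simp, by simp⟩
  | insert i I hi ih =>
    obtain ⟨S₁, hS₁, hcard₁, h₁⟩ := ih (fun j hj => hn j (mem_insert_of_mem hj))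
      (fun j hj => hF j (mem_insert_of_mem hj))
    obtain ⟨S₂, hS₂, hcard₂, h₂⟩ := exists_subset_modEq_mul (hn i (mem_insert_self _ _)) (m i) S₁
      (F i) fun x hx y hy => hF i (mem_insert_self _ _) x (hS₁ hx) y (hS₁ hy)
    refine ⟨S₂, hS₂.trans hS₁, ?_, fun j hj x hx y hy => ?_⟩
    · calc S.card ≤ (∏ i ∈ I, n i) * S₁.card := hcard₁
        _ ≤ (∏ i ∈ I, n i) * (n i * S₂.card) := by gcongr
        _ = (∏ i ∈ insert i I, n i) * S₂.card := by rw [prod_insert hi]; ring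
    · rcases mem_insert.1 hj with rfl | hj
      · exact h₂ x hx y hy
      · exact h₁ j hj x (hS₂ hx) y (hS₂ hy)

end Refinement

/-! ### Power sums determine a tuple up to order -/

section PowerSums

variable {K ι : Type*} [Field K] [Fintype ι] {y z : ι → K}

lemma esymm_eq_of_sum_pow_eq (hK : ∀ n : ℕ, 0 < n → n ≤ Fintype.card ι → (n : K) ≠ 0)
    (h : ∀ l : ℕ, 1 ≤ l → l ≤ Fintype.card ι → ∑ i, y i ^ l = ∑ i, z i ^ l) (n : ℕ)
    (hn : n ≤ Fintype.card ι) :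
    (univ.val.map y).esymm n = (univ.val.map z).esymm n := by
  simp only [← MvPolynomial.aeval_esymm_eq_multiset_esymm ι K]
  induction n using Nat.strong_induction_on with
  | _ n ih =>
    rcases Nat.eq_zero_or_pos n with rfl | hpos
    · simp
    have newton (w : ι → K) := congrArg (MvPolynomial.aeval w) (MvPolynomial.mul_esymm_eq_sum ι K n)
    simp only [map_mul, map_natCast, map_sum, map_pow, map_neg, map_one] at newton
    refine mul_left_cancel₀ (hK n hpos hn) ?_
    rw [newton, newton]
    congr 1
    refine sum_congr rfl fun a ha => ?_
    simp only [mem_filter, HasAntidiagonal.mem_antidiagonal] at ha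
    rw [ih a.1 ha.2 (by omega)]
    simp only [MvPolynomial.psum, map_sum, map_pow, MvPolynomial.aeval_X]
    rw [h a.2 (by omega) (by omega)]

lemma exists_perm_of_map_univ_eq {α : Type*} {f g : ι → α} (h : univ.val.map f = univ.val.map g) :
    ∃ σ : Equiv.Perm ι, f = g ∘ σ := by
  have hcard : ∀ c, Fintype.card {i // f i = c} = Fintype.card {i // g i = c} := fun c => by
    simpa [Multiset.count_map, Fintype.card_subtype, Finset.card, eq_comm] using
      congrArg (Multiset.count c) h
  exact ⟨Equiv.ofFiberEquiv fun c => Fintype.equivOfCardEq (hcard c),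
    funext fun i => (Equiv.ofFiberEquiv_map _ i).symm⟩

lemma exists_perm_of_sum_pow_eq (hK : ∀ n : ℕ, 0 < n → n ≤ Fintype.card ι → (n : K) ≠ 0)
    (h : ∀ l : ℕ, 1 ≤ l → l ≤ Fintype.card ι → ∑ i, y i ^ l = ∑ i, z i ^ l) :
    ∃ σ : Equiv.Perm ι, y = z ∘ σ := by
  apply exists_perm_of_map_univ_eq
  rw [← Polynomial.roots_multiset_prod_X_sub_C (univ.val.map y),
    ← Polynomial.roots_multiset_prod_X_sub_C (univ.val.map z)]
  simp only [Multiset.prod_X_sub_X_eq_sum_esymm, Multiset.card_map, card_val, card_univ]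
  congr 1
  refine sum_congr rfl fun j hj => ?_
  rw [esymm_eq_of_sum_pow_eq hK h j (Nat.lt_succ_iff.1 (mem_range.1 hj))]

end PowerSums

lemma natCast_zmod_ne_zero_of_lt {n p : ℕ} (hn : 0 < n) (hnp : n < p) : (n : ZMod p) ≠ 0 :=
  fun h => (Nat.le_of_dvd hn ((ZMod.natCast_eq_zero_iff n p).1 h)).not_gt hnp

/-! ### Nonsingular systems of additive congruences -/

section AdditiveSystems

open Polynomial

variable {ι : Type*} [Fintype ι]

/-- The Jacobian matrix at `y` of the additive system `∑ i, f l (y i)`, with rows indexed by `l`.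
Solutions at which its determinant does not vanish modulo `p` lift uniquely to powers of `p`. -/
def additiveJacobian {R : Type*} [CommRing R] (f : ι → R[X]) (y : ι → R) : Matrix ι ι R :=
  Matrix.of fun l i => (f l).derivative.eval (y i)

lemma det_additiveJacobian_monomial_ne_zero {K : Type*} [Field K] {r m : ℕ} {d y : Fin r → K}
    (hd : ∀ l, d l ≠ 0) (hK : ∀ l : Fin r, ((m + l + 1 : ℕ) : K) ≠ 0)
    (hy : Function.Injective y) (hy0 : ∀ i, y i ^ m ≠ 0) :
    (additiveJacobian (fun l : Fin r => C (d l) * X ^ (m + l + 1)) y).det ≠ 0 := by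
  have hfactor : additiveJacobian (fun l : Fin r => C (d l) * X ^ (m + l + 1)) y =
      Matrix.diagonal (fun l => d l * ((m + l + 1 : ℕ) : K)) * (Matrix.vandermonde y).transpose *
        Matrix.diagonal fun i => y i ^ m := by
    ext l i
    rw [Matrix.mul_diagonal, Matrix.diagonal_mul]
    simp only [additiveJacobian, Matrix.of_apply, Matrix.transpose_apply, Matrix.vandermonde_apply,
      derivative_C_mul_X_pow, eval_mul, eval_C, eval_pow, eval_X, add_tsub_cancel_right]
    ring
  rw [hfactor, Matrix.det_mul, Matrix.det_mul, Matrix.det_diagonal, Matrix.det_diagonal,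
    Matrix.det_transpose]
  exact mul_ne_zero (mul_ne_zero (prod_ne_zero_iff.2 fun l _ => mul_ne_zero (hd l) (hK l))
    (Matrix.det_vandermonde_ne_zero_iff.2 hy)) (prod_ne_zero_iff.2 fun i _ => hy0 i)

variable [DecidableEq ι] {p : ℕ} [Fact p.Prime] {Ψ : ι → ℤ[X]} {y z : ι → ℤ}

lemma modEq_pow_succ_of_det_ne_zero {e : ℕ} (he : 1 ≤ e)
    (hdet : (additiveJacobian (fun l => (Ψ l).map (Int.castRingHom (ZMod p)))
      fun i => (y i : ZMod p)).det ≠ 0)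
    (hyz : ∀ i, y i ≡ z i [ZMOD (p : ℤ) ^ e])
    (hΨ : ∀ l, ∑ i, (Ψ l).eval (y i) ≡ ∑ i, (Ψ l).eval (z i) [ZMOD (p : ℤ) ^ (e + 1)]) (i : ι) :
    y i ≡ z i [ZMOD (p : ℤ) ^ (e + 1)] := by
  have hpe : ((p : ℤ) ^ e) ≠ 0 := pow_ne_zero _ (Nat.cast_ne_zero.2 (NeZero.ne p))
  choose v hv using fun i => (hyz i).dvd
  have hlin : ∀ l, (p : ℤ) ∣ ∑ i, (Ψ l).derivative.eval (y i) * v i := by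
    intro l
    choose q hq using fun i =>
      (Ψ l).exists_mul_sq_add_linear_part_eq_eval_add (y i) ((p : ℤ) ^ e * v i)
    have hsum : ∑ i, (Ψ l).eval (z i) - ∑ i, (Ψ l).eval (y i) =
        (p : ℤ) ^ e * (∑ i, (Ψ l).derivative.eval (y i) * v i
          + (p : ℤ) ^ e * ∑ i, q i * v i ^ 2) := by
      rw [mul_add, Finset.mul_sum, Finset.mul_sum, Finset.mul_sum, ← sum_sub_distrib,
        ← sum_add_distrib]
      refine sum_congr rfl fun i _ => ?_
      rw [show z i = y i + (p : ℤ) ^ e * v i by linear_combination hv i, ← hq i]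
      ring
    have hdvd := (hΨ l).dvd
    rw [hsum, pow_succ] at hdvd
    exact (Int.dvd_iff_dvd_of_dvd_add (Int.dvd_of_mul_dvd_mul_left hpe hdvd)).2
      (dvd_mul_of_dvd_left (dvd_pow_self _ (by omega)) _)
  have hker : (fun i => (v i : ZMod p)) = 0 := by
    refine Matrix.eq_zero_of_mulVec_eq_zero hdet (funext fun l => ?_)
    have := (ZMod.intCast_zmod_eq_zero_iff_dvd _ p).2 (hlin l)
    simpa [Matrix.mulVec, dotProduct, additiveJacobian, Polynomial.derivative_map,
      Polynomial.eval_intCast_map] using this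
  obtain ⟨w, hw⟩ := (ZMod.intCast_zmod_eq_zero_iff_dvd _ p).1 (congrFun hker i)
  exact Int.modEq_iff_dvd.2 ⟨w, by rw [hv i, hw, pow_succ, mul_assoc]⟩

lemma modEq_pow_of_det_ne_zero {L : ℕ}
    (hdet : (additiveJacobian (fun l => (Ψ l).map (Int.castRingHom (ZMod p)))
      fun i => (y i : ZMod p)).det ≠ 0)
    (hyz : ∀ i, y i ≡ z i [ZMOD p])
    (hΨ : ∀ l, ∑ i, (Ψ l).eval (y i) ≡ ∑ i, (Ψ l).eval (z i) [ZMOD (p : ℤ) ^ L]) (i : ι) :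
    y i ≡ z i [ZMOD (p : ℤ) ^ L] := by
  have hlift : ∀ e, 1 ≤ e → e ≤ L → ∀ i, y i ≡ z i [ZMOD (p : ℤ) ^ e] := by
    intro e he
    induction e, he using Nat.le_induction with
    | base => simpa using fun _ => hyz
    | succ e he ih =>
      exact fun heL => modEq_pow_succ_of_det_ne_zero he hdet (ih (by omega))
        fun l => (hΨ l).of_dvd (pow_dvd_pow _ heL)
  rcases Nat.eq_zero_or_pos L with rfl | hL
  · simpa using Int.modEq_one
  · exact hlift L hL le_rfl i

/-- The power sums fix a solution modulo `p` up to a permutation, and each residue class modulo `p`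
has at most one lift modulo `p ^ L`. -/
lemma card_le_factorial_of_det_ne_zero {L : ℕ} (hp : Fintype.card ι < p) (S : Finset (ι → ℤ))
    (hdet : ∀ y ∈ S, (additiveJacobian (fun l => (Ψ l).map (Int.castRingHom (ZMod p)))
      fun i => (y i : ZMod p)).det ≠ 0)
    (hpow : ∀ y ∈ S, ∀ z ∈ S, ∀ l : ℕ, 1 ≤ l → l ≤ Fintype.card ι →
      ∑ i, y i ^ l ≡ ∑ i, z i ^ l [ZMOD p])
    (hΨ : ∀ y ∈ S, ∀ z ∈ S, ∀ l,
      ∑ i, (Ψ l).eval (y i) ≡ ∑ i, (Ψ l).eval (z i) [ZMOD (p : ℤ) ^ L])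
    (hinj : ∀ y ∈ S, ∀ z ∈ S, (∀ i, y i ≡ z i [ZMOD (p : ℤ) ^ L]) → y = z) :
    S.card ≤ (Fintype.card ι).factorial := by
  rcases S.eq_empty_or_nonempty with rfl | ⟨y₀, hy₀⟩
  · simp
  have hperm : ∀ z ∈ S, ∃ σ : Equiv.Perm ι,
      (fun i => (z i : ZMod p)) = (fun i => (y₀ i : ZMod p)) ∘ σ := by
    refine fun z hz => exists_perm_of_sum_pow_eq
      (fun n hn hnr => natCast_zmod_ne_zero_of_lt hn (by omega)) fun l hl hlr => ?_
    exact_mod_cast (ZMod.intCast_eq_intCast_iff _ _ p).2 (hpow z hz y₀ hy₀ l hl hlr)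
  choose! σ hσ using hperm
  rw [← Fintype.card_perm]
  refine Finset.card_le_card_of_injOn σ (by simp) fun y hy z hz hyz => hinj y hy z hz ?_
  refine modEq_pow_of_det_ne_zero (hdet y hy) (fun i => ?_) (hΨ y hy z hz)
  exact (ZMod.intCast_eq_intCast_iff _ _ p).1 (congrFun ((hσ y hy).trans (hyz ▸ (hσ z hz).symm)) i)

end AdditiveSystems

/-! ### Triangulating consecutive powers of a linear polynomial -/

section Triangulation

open Polynomial

lemma eq_zero_of_X_pow_dvd_of_X_pow_dvd_taylor {K : Type*} [Field K] {u : K} (hu : u ≠ 0)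
    {m n : ℕ} {q : K[X]} (h0 : X ^ m ∣ q) (hn : X ^ n ∣ taylor u q) (hq : q.degree < (m + n : ℕ)) :
    q = 0 := by
  obtain ⟨q, rfl⟩ := h0
  by_contra hne
  have hq0 : q ≠ 0 := right_ne_zero_of_mul hne
  have hcop : IsCoprime (X ^ n : K[X]) ((X + C u) ^ m) := by
    refine IsCoprime.pow ⟨-C u⁻¹, C u⁻¹, ?_⟩
    rw [mul_add, ← C_mul, inv_mul_cancel₀ hu]
    simp
  rw [taylor_mul, taylor_X_pow] at hn
  have hdeg := natDegree_le_of_dvd (hcop.dvd_of_dvd_mul_left hn) (by rwa [Ne, taylor_eq_zero])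
  rw [natDegree_X_pow, natDegree_taylor] at hdeg
  rw [← natDegree_lt_iff_degree_lt hne, natDegree_mul (pow_ne_zero _ X_ne_zero) hq0,
    natDegree_X_pow] at hq
  omega

/-- The matrix whose `j`-th column lists the coefficients of `(X + u) ^ (m + 1 + j)` in the degrees
`1, …, n`. -/
def linearPowCoeff {R : Type*} [CommRing R] (m n : ℕ) (u : R) : Matrix (Fin n) (Fin n) R :=
  Matrix.of fun i j => ((X + C u) ^ (m + 1 + (j : ℕ))).coeff ((i : ℕ) + 1)

lemma map_linearPowCoeff {R S : Type*} [CommRing R] [CommRing S] (f : R →+* S) (m n : ℕ) (u : R) :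
    f.mapMatrix (linearPowCoeff m n u) = linearPowCoeff m n (f u) := by
  ext i j
  simp [linearPowCoeff, ← coeff_map]

/-- A relation between the columns is a polynomial `∑ v j * X ^ (m + 1 + j)` whose derivative
vanishes to order `m` at `0` and to order `n` at `u`, which is more than its degree allows. -/
lemma det_linearPowCoeff_ne_zero {K : Type*} [Field K] {m n : ℕ} {u : K} (hu : u ≠ 0)
    (hK : ∀ i : ℕ, 0 < i → i ≤ m + n → (i : K) ≠ 0) : (linearPowCoeff m n u).det ≠ 0 := by
  intro hdet
  obtain ⟨v, hv0, hv⟩ := Matrix.exists_mulVec_eq_zero_iff.2 hdet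
  let Q : K[X] := ∑ j : Fin n, C (v j) * X ^ (m + 1 + (j : ℕ))
  have hQ (i : ℕ) : Q.coeff i = ∑ j : Fin n, if i = m + 1 + j then v j else 0 := by
    simp [Q, coeff_X_pow]
  have hzero : X ^ m ∣ Q.derivative := by
    refine X_pow_dvd_iff.2 fun d hd => ?_
    rw [coeff_derivative, hQ, sum_eq_zero fun j _ => if_neg (by omega), zero_mul]
  have htaylor : X ^ n ∣ taylor u Q.derivative := by
    have hcomm (q : K[X]) : taylor u q.derivative = (taylor u q).derivative := by
      rw [taylor_apply, taylor_apply, derivative_comp, derivative_X_add_C, one_mul]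
    rw [hcomm, X_pow_dvd_iff]
    intro d hd
    have hcoeff : (taylor u Q).coeff (d + 1) = 0 := by
      have := congrFun hv ⟨d, hd⟩
      simp only [Q, map_sum, taylor_mul, taylor_C, taylor_X_pow]
      simpa [Matrix.mulVec, dotProduct, linearPowCoeff, mul_comm] using this
    rw [coeff_derivative, hcoeff, zero_mul]
  have hdegree : Q.derivative.degree < (m + n : ℕ) := by
    refine (degree_lt_iff_coeff_zero _ _).2 fun d hd => ?_
    rw [coeff_derivative, hQ, sum_eq_zero fun j _ => if_neg (by omega), zero_mul]
  have hderiv := eq_zero_of_X_pow_dvd_of_X_pow_dvd_taylor hu hzero htaylor hdegree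
  refine hv0 (funext fun j => ?_)
  have hcoeff : v j * ((m + j + 1 : ℕ) : K) = 0 := by
    have := congrArg (coeff · (m + (j : ℕ))) hderiv
    rw [coeff_derivative, hQ, sum_eq_single j (fun i _ hij => if_neg (by omega)) (by simp)] at this
    simpa [add_right_comm] using this
  exact (mul_eq_zero.1 hcoeff).resolve_right (hK _ (by omega) (by omega))

lemma exists_comb_X_add_C_pow {R : Type*} [CommRing R] (m : ℕ) {n : ℕ} (u : R) (l : Fin n) :
    ∃ (c : Fin n → R) (c₀ : R) (Q : R[X]),
      ∑ j : Fin n, C (c j) * (X + C u) ^ (m + 1 + (j : ℕ)) =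
        C c₀ + C (linearPowCoeff m n u).det * X ^ ((l : ℕ) + 1) + X ^ (n + 1) * Q := by
  let A := linearPowCoeff m n u
  let P : R[X] := ∑ j : Fin n, C (A.adjugate j l) * (X + C u) ^ (m + 1 + (j : ℕ))
  have hcoeff (i : Fin n) : P.coeff ((i : ℕ) + 1) = if i = l then A.det else 0 := by
    have := congrFun (congrFun A.mul_adjugate i) l
    simpa [Matrix.mul_apply, Matrix.one_apply, P, A, linearPowCoeff, mul_comm] using this
  obtain ⟨Q, hQ⟩ : X ^ (n + 1) ∣ P - (C (P.coeff 0) + C A.det * X ^ ((l : ℕ) + 1)) := by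
    refine X_pow_dvd_iff.2 fun d hd => ?_
    rcases d with _ | d
    · simp
    · have := hcoeff ⟨d, by omega⟩
      simp only [Fin.ext_iff] at this
      simp [this, coeff_X_pow]
  exact ⟨fun j => A.adjugate j l, P.coeff 0, Q, by linear_combination hQ⟩

variable {p : ℕ} [Fact p.Prime] {m n a : ℕ} {u : ℤ}

lemma exists_comb_add_mul_pow (hu : ¬ (p : ℤ) ∣ u) (hp : m + n < p) (ha : 1 ≤ a) (l : Fin n) :
    ∃ (c : Fin n → ℤ) (c₀ : ℤ) (d : ZMod p) (Ψ : ℤ[X]), d ≠ 0 ∧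
      Ψ.map (Int.castRingHom (ZMod p)) = C d * X ^ ((l : ℕ) + 1) ∧
      ∀ y : ℤ, ∑ j : Fin n, c j * (u + (p : ℤ) ^ a * y) ^ (m + 1 + (j : ℕ)) =
        c₀ + (p : ℤ) ^ ((l + 1) * a) * Ψ.eval y := by
  obtain ⟨c, c₀, Q, h⟩ := exists_comb_X_add_C_pow m u l
  have hexp : (n + 1) * a = (l + 1) * a + ((n - l) * a - 1) + 1 := by
    have : 1 ≤ (n - l) * a := Nat.mul_pos (by omega) ha
    have : (n + 1) * a = (l + 1) * a + (n - l) * a := by rw [← add_mul]; congr 1; omega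
    omega
  refine ⟨c, c₀, ((linearPowCoeff m n u).det : ℤ),
    C (linearPowCoeff m n u).det * X ^ ((l : ℕ) + 1) + C (p : ℤ) *
      (C ((p : ℤ) ^ ((n - l) * a - 1)) * X ^ (n + 1) * Q.comp (C ((p : ℤ) ^ a) * X)),
    ?_, by simp, fun y => ?_⟩
  · rw [← eq_intCast (Int.castRingHom (ZMod p)), RingHom.map_det, map_linearPowCoeff]
    refine det_linearPowCoeff_ne_zero (fun h0 => hu ?_)
      fun i hi hi' => natCast_zmod_ne_zero_of_lt hi (by omega)
    exact (ZMod.intCast_zmod_eq_zero_iff_dvd _ p).1 h0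
  · have h1 := congrArg (Polynomial.eval ((p : ℤ) ^ a * y)) h
    simp only [eval_finsetSum, eval_mul, eval_C, eval_pow, eval_add, eval_X] at h1
    simp only [eval_mul, eval_C, eval_pow, eval_add, eval_X, eval_comp, add_comm u, h1]
    have h2 := congrArg ((p : ℤ) ^ ·) hexp
    simp only [mul_comm _ a, pow_add, pow_mul, pow_one] at h2 ⊢
    linear_combination (y ^ (n + 1) * Polynomial.eval (((p : ℤ) ^ a) * y) Q) * h2

lemma modEq_pow_of_mul_pow {p : ℕ} (hp : 0 < p) {A B : ℤ} {e E : ℕ}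
    (h : (p : ℤ) ^ e * A ≡ (p : ℤ) ^ e * B [ZMOD (p : ℤ) ^ E]) :
    A ≡ B [ZMOD (p : ℤ) ^ (E - e)] := by
  rcases le_total e E with hle | hle
  · rw [← Nat.add_sub_cancel' hle, pow_add] at h
    exact Int.ModEq.mul_left_cancel' (by positivity) h
  · rw [Nat.sub_eq_zero_of_le hle, pow_zero]
    exact Int.modEq_one

/-- `n` consecutive power sums of the `u + p ^ a * y i` isolate the single power sum of degree
`l + 1` of the `y i`, up to terms divisible by `p`. -/
lemma exists_form_sum_modEq {ι : Type*} [Fintype ι] (hu : ¬ (p : ℤ) ∣ u) (hp : m + n < p)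
    (ha : 1 ≤ a) {l : ℕ} (hl : l < n) :
    ∃ (d : ZMod p) (Ψ : ℤ[X]), d ≠ 0 ∧
      Ψ.map (Int.castRingHom (ZMod p)) = C d * X ^ (l + 1) ∧
      ∀ (E : ℕ) (y z : ι → ℤ),
        (∀ j, m < j → j ≤ m + n → ∑ i, (u + (p : ℤ) ^ a * y i) ^ j ≡
          ∑ i, (u + (p : ℤ) ^ a * z i) ^ j [ZMOD (p : ℤ) ^ E]) →
        ∑ i, Ψ.eval (y i) ≡ ∑ i, Ψ.eval (z i) [ZMOD (p : ℤ) ^ (E - (l + 1) * a)] := by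
  obtain ⟨c, c₀, d, Ψ, hd, hΨ, hc⟩ := exists_comb_add_mul_pow hu hp ha ⟨l, hl⟩
  refine ⟨d, Ψ, hd, hΨ, fun E y z h => modEq_pow_of_mul_pow (NeZero.pos p) ?_⟩
  have hcomb (w : ι → ℤ) : (p : ℤ) ^ ((l + 1) * a) * ∑ i, Ψ.eval (w i) =
      ∑ j : Fin n, c j * ∑ i, (u + (p : ℤ) ^ a * w i) ^ (m + 1 + (j : ℕ)) -
        Fintype.card ι * c₀ := by
    simp_rw [Finset.mul_sum]
    rw [sum_comm]
    simp_rw [hc, sum_add_distrib]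
    simp
  rw [hcomb, hcomb]
  exact (Int.ModEq.sum fun (j : Fin n) _ =>
    (h (m + 1 + j) (by omega) (by omega)).mul_left (c j)).sub_right _

end Triangulation

/-! ### Counting conditioned solutions of the congruences -/

section Congruences

open Polynomial

/-- The paper's `μ` as a natural number: the exponent of `p ^ b` lost when the congruences of degree
`j ≤ t` are lifted to the modulus `p ^ (t * b)`. -/
def muN (k r t : ℕ) : ℕ := ∑ j ∈ Ioc (k - r) t, (t - j)

/-- The paper's `ν` as a natural number: the exponent of `p ^ a` lost when the triangulated
congruences of degree greater than `k - t` are lifted to a common modulus. -/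
def nuN (k r t : ℕ) : ℕ := ∑ l ∈ Ico (k - t) r, l

/-- The conditioned tuples of efficient congruencing: all entries lie in the class of `ξ` modulo
`p ^ a`, they are distinct modulo `p ^ (a + 1)`, and they avoid the class of `η` modulo `p`. -/
structure IsConditioned {ι : Type*} (p a : ℕ) (ξ η : ℤ) (x : ι → ℤ) : Prop where
  modEq : ∀ i, x i ≡ ξ [ZMOD (p : ℤ) ^ a]
  injective : ∀ i j, x i ≡ x j [ZMOD (p : ℤ) ^ (a + 1)] → i = j
  not_modEq : ∀ i, ¬ x i ≡ η [ZMOD p]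

variable {p k r t a b : ℕ} [Fact p.Prime]

lemma exists_subset_modEq_pow {α : Type*} (ht : t ≤ k) (S : Finset α) (F : ℕ → α → ℤ)
    (hF : ∀ x ∈ S, ∀ y ∈ S, ∀ j, 1 ≤ j → j ≤ k → F j x ≡ F j y [ZMOD (p : ℤ) ^ (j * b)]) :
    ∃ S' ⊆ S, S.card ≤ p ^ (muN k r t * b) * S'.card ∧ ∀ x ∈ S', ∀ y ∈ S', ∀ j,
      k - r < j → j ≤ k → F j x ≡ F j y [ZMOD (p : ℤ) ^ (t * b)] := by
  obtain ⟨S', hsub, hcard, hmod⟩ := exists_subset_forall_modEq_mul (Ioc (k - r) t)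
    (n := fun j => p ^ ((t - j) * b)) (fun j _ => Nat.pow_pos (NeZero.pos p))
    (fun j => (p : ℤ) ^ (j * b)) S F fun j hj x hx y hy => by
      have := mem_Ioc.1 hj
      exact hF x hx y hy j (by omega) (by omega)
  refine ⟨S', hsub, ?_, fun x hx y hy j hj hjk => ?_⟩
  · rwa [prod_pow_eq_pow_sum, ← Finset.sum_mul] at hcard
  · rcases le_or_gt j t with hjt | hjt
    · have := hmod j (mem_Ioc.2 ⟨hj, hjt⟩) x hx y hy
      rwa [Nat.cast_pow, ← pow_add, ← add_mul, Nat.add_sub_cancel' hjt] at this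
    · exact (hF x (hsub hx) y (hsub hy) j (by omega) hjk).of_dvd
        (pow_dvd_pow _ (Nat.mul_le_mul_right _ hjt.le))

lemma card_le_of_sum_pow_modEq {L : ℕ} (hkp : k < p) (hr : r ≤ k)
    (S : Finset (Fin r → ℤ))
    (hinj : ∀ x ∈ S, ∀ i j, x i ≡ x j [ZMOD p] → i = j) (h0 : ∀ x ∈ S, ∀ i, ¬ (p : ℤ) ∣ x i)
    (hlow : ∀ x ∈ S, ∀ y ∈ S, ∀ j, 1 ≤ j → j ≤ r → ∑ i, x i ^ j ≡ ∑ i, y i ^ j [ZMOD p])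
    (htop : ∀ x ∈ S, ∀ y ∈ S, ∀ j, k - r < j → j ≤ k →
      ∑ i, x i ^ j ≡ ∑ i, y i ^ j [ZMOD (p : ℤ) ^ L])
    (hsep : ∀ x ∈ S, ∀ y ∈ S, (∀ i, x i ≡ y i [ZMOD (p : ℤ) ^ L]) → x = y) :
    S.card ≤ r.factorial := by
  refine (card_le_factorial_of_det_ne_zero (p := p) (by rw [Fintype.card_fin]; omega) S
    (Ψ := fun l : Fin r => X ^ (k - r + l + 1)) (L := L) ?_ (by simpa using hlow) ?_ hsep).trans_eq
    (by rw [Fintype.card_fin])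
  · intro x hx
    have := det_additiveJacobian_monomial_ne_zero (m := k - r) (d := fun _ : Fin r => (1 : ZMod p))
      (y := fun i => (x i : ZMod p)) (fun _ => one_ne_zero)
      (fun l => natCast_zmod_ne_zero_of_lt (by omega) (by omega))
      (fun i j hij => hinj x hx i j ((ZMod.intCast_eq_intCast_iff _ _ p).1 hij))
      (fun i => pow_ne_zero _ fun h => h0 x hx i ((ZMod.intCast_zmod_eq_zero_iff_dvd _ p).1 h))
    simpa using this
  · intro x hx y hy l
    simpa using htop x hx y hy (k - r + l + 1) (by omega) (by omega)

lemma exists_triangular_forms {u : ℤ} (hu : ¬ (p : ℤ) ∣ u) (hkp : k < p)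
    (ht1 : k ≤ 2 * t + 1) (ht2 : t ≤ k) (hr : r ≤ k) (ha : 1 ≤ a) (hta : t * a ≤ b)
    (S : Finset (Fin r → ℤ))
    (hlow : ∀ y ∈ S, ∀ z ∈ S, ∀ j, k - r < j → j ≤ k → ∑ i, (u + (p : ℤ) ^ a * y i) ^ j ≡
      ∑ i, (u + (p : ℤ) ^ a * z i) ^ j [ZMOD (p : ℤ) ^ (t * b)])
    (htop : ∀ y ∈ S, ∀ z ∈ S, ∀ j, t < j → j ≤ k → ∑ i, (u + (p : ℤ) ^ a * y i) ^ j ≡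
      ∑ i, (u + (p : ℤ) ^ a * z i) ^ j [ZMOD (p : ℤ) ^ ((t + 1) * b)]) (l : Fin r) :
    ∃ (d : ZMod p) (Ψ : ℤ[X]), d ≠ 0 ∧
      Ψ.map (Int.castRingHom (ZMod p)) = C d * X ^ ((l : ℕ) + 1) ∧
      ∀ y ∈ S, ∀ z ∈ S, ∑ i, Ψ.eval (y i) ≡ ∑ i, Ψ.eval (z i)
        [ZMOD (p : ℤ) ^ (t * b - a - if (l : ℕ) < k - t then 0 else l * a)] := by
  have hla : ((l : ℕ) + 1) * a = l * a + a := by ring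
  split_ifs with hlt
  · obtain ⟨d, Ψ, hd, hΨ, h⟩ :=
      exists_form_sum_modEq (ι := Fin r) (m := t) hu (by omega) ha hlt
    refine ⟨d, Ψ, hd, hΨ, fun y hy z hz => (h _ y z fun j hj hjk =>
      htop y hy z hz j hj (by omega)).of_dvd (pow_dvd_pow _ ?_)⟩
    have : (l : ℕ) * a ≤ t * a := Nat.mul_le_mul_right _ (by omega)
    have : (t + 1) * b = t * b + b := by ring
    omega
  · obtain ⟨d, Ψ, hd, hΨ, h⟩ :=
      exists_form_sum_modEq (ι := Fin r) (m := k - r) hu (by omega) ha l.2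
    refine ⟨d, Ψ, hd, hΨ, fun y hy z hz => (h _ y z fun j hj hjk =>
      hlow y hy z hz j hj (by omega)).of_dvd (pow_dvd_pow _ ?_)⟩
    omega

lemma card_le_of_affine_congruences {u : ℤ} (hu : ¬ (p : ℤ) ∣ u) (hkp : k < p)
    (ht1 : k ≤ 2 * t + 1) (ht2 : t ≤ k) (hr : r ≤ k) (ha : 1 ≤ a) (hta : t * a ≤ b)
    (htb : a < t * b) (S : Finset (Fin r → ℤ))
    (hlow : ∀ y ∈ S, ∀ z ∈ S, ∀ j, k - r < j → j ≤ k → ∑ i, (u + (p : ℤ) ^ a * y i) ^ j ≡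
      ∑ i, (u + (p : ℤ) ^ a * z i) ^ j [ZMOD (p : ℤ) ^ (t * b)])
    (htop : ∀ y ∈ S, ∀ z ∈ S, ∀ j, t < j → j ≤ k → ∑ i, (u + (p : ℤ) ^ a * y i) ^ j ≡
      ∑ i, (u + (p : ℤ) ^ a * z i) ^ j [ZMOD (p : ℤ) ^ ((t + 1) * b)])
    (hinj : ∀ y ∈ S, ∀ i j, y i ≡ y j [ZMOD p] → i = j)
    (hsep : ∀ y ∈ S, ∀ z ∈ S, (∀ i, y i ≡ z i [ZMOD (p : ℤ) ^ (t * b - a)]) → y = z) :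
    S.card ≤ r.factorial * p ^ (nuN k r t * a) := by
  choose d Ψ hd hΨ hsum using exists_triangular_forms hu hkp ht1 ht2 hr ha hta S hlow htop
  obtain ⟨S', hsub, hcard, hmod⟩ := exists_subset_forall_modEq_mul univ
    (n := fun l : Fin r => p ^ (if (l : ℕ) < k - t then 0 else (l : ℕ) * a))
    (fun _ _ => Nat.pow_pos (NeZero.pos p)) _ S (fun l y => ∑ i, (Ψ l).eval (y i))
    (fun l _ => hsum l)
  have hlift : ∀ y ∈ S', ∀ z ∈ S', ∀ l,
      ∑ i, (Ψ l).eval (y i) ≡ ∑ i, (Ψ l).eval (z i) [ZMOD (p : ℤ) ^ (t * b - a)] :=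
    fun y hy z hz l => (hmod l (mem_univ l) y hy z hz).of_dvd <| by
      rw [Nat.cast_pow, ← pow_add]
      exact pow_dvd_pow _ (by omega)
  have hexp : ∑ l : Fin r, (if (l : ℕ) < k - t then 0 else (l : ℕ) * a) = nuN k r t * a := by
    rw [Fin.sum_univ_eq_sum_range (fun l => if l < k - t then 0 else l * a) r, nuN,
      Finset.sum_mul, Finset.sum_ite, Finset.sum_const_zero, zero_add]
    refine sum_congr ?_ fun _ _ => rfl
    ext l
    simp only [mem_filter, mem_range, not_lt, mem_Ico]
    tauto
  rw [prod_pow_eq_pow_sum, hexp, mul_comm] at hcard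
  refine hcard.trans (Nat.mul_le_mul_right _ ?_)
  refine (card_le_factorial_of_det_ne_zero (p := p) (by rw [Fintype.card_fin]; omega) S' ?_ ?_ hlift
    fun y hy z hz => hsep y (hsub hy) z (hsub hz)).trans_eq (by rw [Fintype.card_fin])
  · intro y hy
    simp only [hΨ]
    simpa using det_additiveJacobian_monomial_ne_zero (m := 0) hd
      (fun l => natCast_zmod_ne_zero_of_lt (by omega) (by omega))
      (fun i j hij => hinj y (hsub hy) i j ((ZMod.intCast_eq_intCast_iff _ _ p).1 hij)) (by simp)
  · intro y hy z hz l hl hlr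
    rw [Fintype.card_fin] at hlr
    have h := (hlift y hy z hz ⟨l - 1, by omega⟩).of_dvd (dvd_pow_self (p : ℤ) (by omega))
    rw [← ZMod.intCast_eq_intCast_iff] at h ⊢
    have heval (x : ℤ) : (((Ψ ⟨l - 1, by omega⟩).eval x : ℤ) : ZMod p) =
        d ⟨l - 1, by omega⟩ * (x : ZMod p) ^ l := by
      rw [← eq_intCast (Int.castRingHom (ZMod p)), ← eval_map_apply, hΨ]
      simp [Nat.sub_add_cancel hl]
    simp only [Int.cast_sum, heval, ← Finset.mul_sum] at h
    exact_mod_cast mul_left_cancel₀ (hd _) h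

lemma card_le_of_isConditioned_of_pos (hkp : k < p) (ht1 : k ≤ 2 * t + 1) (ht2 : t ≤ k)
    (hr : r ≤ k) (hr0 : 0 < r) (ha : 1 ≤ a) (hta : t * a ≤ b) (htb : a < t * b) {ξ η : ℤ}
    (S : Finset (Fin r → ℤ)) (hS : ∀ x ∈ S, IsConditioned p a ξ η x)
    (hlow : ∀ x ∈ S, ∀ y ∈ S, ∀ j, k - r < j → j ≤ k →
      ∑ i, (x i - η) ^ j ≡ ∑ i, (y i - η) ^ j [ZMOD (p : ℤ) ^ (t * b)])
    (htop : ∀ x ∈ S, ∀ y ∈ S, ∀ j, t < j → j ≤ k →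
      ∑ i, (x i - η) ^ j ≡ ∑ i, (y i - η) ^ j [ZMOD (p : ℤ) ^ ((t + 1) * b)])
    (hsep : ∀ x ∈ S, ∀ y ∈ S, (∀ i, x i ≡ y i [ZMOD (p : ℤ) ^ (t * b)]) → x = y) :
    S.card ≤ r.factorial * p ^ (nuN k r t * a) := by
  rcases S.eq_empty_or_nonempty with rfl | ⟨x₀, hx₀⟩
  · simp
  let Y : (Fin r → ℤ) → Fin r → ℤ := fun x i => (x i - ξ) / (p : ℤ) ^ a
  have hY : ∀ x ∈ S, ∀ i, x i = ξ + (p : ℤ) ^ a * Y x i := fun x hx i => by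
    linear_combination -Int.mul_ediv_cancel' ((hS x hx).modEq i).symm.dvd
  have hsum : ∀ x ∈ S, ∀ j, ∑ i, (ξ - η + (p : ℤ) ^ a * Y x i) ^ j = ∑ i, (x i - η) ^ j :=
    fun x hx j => sum_congr rfl fun i _ => by rw [hY x hx i]; ring
  have hlift (e : ℕ) {y z : ℤ} (h : y ≡ z [ZMOD (p : ℤ) ^ e]) :
      ξ + (p : ℤ) ^ a * y ≡ ξ + (p : ℤ) ^ a * z [ZMOD (p : ℤ) ^ (a + e)] := by
    rw [pow_add]
    exact h.mul_left'.add_left ξ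
  have hYinj : Set.InjOn Y S := fun x hx x' hx' h => funext fun i => by
    rw [hY x hx i, hY x' hx' i, h]
  have hu : ¬ (p : ℤ) ∣ ξ - η := fun h => (hS x₀ hx₀).not_modEq ⟨0, hr0⟩ <|
    (((hS x₀ hx₀).modEq _).of_dvd (dvd_pow_self (p : ℤ) (by omega))).trans
      (Int.modEq_iff_dvd.2 h).symm
  rw [← card_image_of_injOn hYinj]
  refine card_le_of_affine_congruences hu hkp ht1 ht2 hr ha hta htb _ ?_ ?_ ?_ ?_ <;>
    simp only [forall_mem_image]
  · intro x hx y hy j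
    simpa only [hsum x hx, hsum y hy] using hlow x hx y hy j
  · intro x hx y hy j
    simpa only [hsum x hx, hsum y hy] using htop x hx y hy j
  · intro x hx i j hij
    refine (hS x hx).injective i j ?_
    rw [hY x hx i, hY x hx j]
    exact hlift 1 (by simpa using hij)
  · intro x hx y hy hxy
    rw [hsep x hx y hy fun i => ?_]
    rw [hY x hx i, hY y hy i, ← Nat.add_sub_cancel' htb.le]
    exact hlift _ (hxy i)

theorem card_le_of_isConditioned (hkp : k < p) (ht1 : k ≤ 2 * t + 1) (ht2 : t ≤ k) (ht : 1 ≤ t)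
    (hr1 : 1 ≤ r) (hr2 : r ≤ k) (hab : a < b) (hta : t * a ≤ b) {ξ η : ℤ}
    (S : Finset (Fin r → ℤ)) (hS : ∀ x ∈ S, IsConditioned p a ξ η x)
    (hpow : ∀ x ∈ S, ∀ y ∈ S, ∀ j, 1 ≤ j → j ≤ k →
      ∑ i, (x i - η) ^ j ≡ ∑ i, (y i - η) ^ j [ZMOD (p : ℤ) ^ (j * b)])
    (hsep : ∀ x ∈ S, ∀ y ∈ S, (∀ i, x i ≡ y i [ZMOD (p : ℤ) ^ (t * b)]) → x = y) :
    S.card ≤ r.factorial * p ^ (muN k r t * b + nuN k r t * a) := by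
  obtain ⟨S', hsub, hcard, hlow⟩ := exists_subset_modEq_pow (p := p) (r := r) (b := b) ht2 S
    (fun j x => ∑ i, (x i - η) ^ j) hpow
  suffices H : S'.card ≤ r.factorial * p ^ (nuN k r t * a) by
    calc S.card ≤ p ^ (muN k r t * b) * S'.card := hcard
      _ ≤ p ^ (muN k r t * b) * (r.factorial * p ^ (nuN k r t * a)) := by gcongr
      _ = _ := by rw [pow_add]; ring
  have htb : b ≤ t * b := Nat.le_mul_of_pos_left _ ht
  rcases Nat.eq_zero_or_pos a with rfl | ha
  · have hinj : Set.InjOn (fun (x : Fin r → ℤ) i => x i - η) S' := fun x _ y _ hxy =>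
      funext fun i => by simpa using congrFun hxy i
    rw [mul_zero, pow_zero, mul_one, ← card_image_of_injOn hinj]
    refine card_le_of_sum_pow_modEq (L := t * b) hkp hr2 _ ?_ ?_ ?_ ?_ ?_ <;>
      simp only [forall_mem_image]
    · exact fun x hx i j hij => (hS x (hsub hx)).injective i j <| by simpa using hij.add_right η
    · exact fun x hx i h => (hS x (hsub hx)).not_modEq i (Int.modEq_iff_dvd.2 h).symm
    · exact fun x hx y hy j hj hjr => (hpow x (hsub hx) y (hsub hy) j hj (by omega)).of_dvd
        (dvd_pow_self _ (Nat.mul_ne_zero (by omega) (by omega)))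
    · exact hlow
    · exact fun x hx y hy hxy => by
        rw [hsep x (hsub hx) y (hsub hy) fun i => by simpa using (hxy i).add_right η]
  · exact card_le_of_isConditioned_of_pos hkp ht1 ht2 hr2 hr1 ha hta (by omega) S'
      (fun x hx => hS x (hsub hx)) hlow
      (fun x hx y hy j hj hjk => (hpow x (hsub hx) y (hsub hy) j (by omega) hjk).of_dvd
        (pow_dvd_pow _ (Nat.mul_le_mul_right _ hj)))
      (fun x hx y hy => hsep x (hsub hx) y (hsub hy))

end Congruences

/-! ### Trigonometric polynomials with nonnegative coefficients -/

section Characters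

lemma addChar_map_sum {ι A M : Type*} [AddCommMonoid A] [CommMonoid M] (ψ : AddChar A M)
    (s : Finset ι) (f : ι → A) : ψ (∑ i ∈ s, f i) = ∏ i ∈ s, ψ (f i) :=
  map_sum ψ.toAddMonoidHom f s

variable {k : ℕ}

lemma ec_eq_fourierChar (x : ℝ) : ec x = Real.fourierChar x := by
  rw [ec, Real.fourierChar_apply]
  push_cast
  ring_nf

lemma star_ec (x : ℝ) : star (ec x) = ec (-x) := by
  rw [ec_eq_fourierChar, ec_eq_fourierChar, Real.fourierChar.map_neg_eq_inv, Circle.coe_inv_eq_conj,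
    Complex.star_def]

lemma continuous_ec : Continuous ec := by
  unfold ec
  fun_prop

/-- The characters `α ↦ e(α · n)` of the torus `(ℝ/ℤ)^k`, as an additive character of the
frequency `n` with values in the functions of `α ∈ ℝ^k`. -/
def torusChar (k : ℕ) : AddChar (Fin k → ℤ) ((Fin k → ℝ) → ℂ) where
  toFun n α := ec (∑ j, α j * (n j : ℝ))
  map_zero_eq_one' := by
    funext α
    simp [ec]
  map_add_eq_mul' m n := by
    funext α
    simp only [Pi.add_apply, Pi.mul_apply, Int.cast_add, mul_add, sum_add_distrib,
      ec_eq_fourierChar, Real.fourierChar.map_add_eq_mul, Circle.coe_mul]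

lemma torusChar_apply (n : Fin k → ℤ) (α : Fin k → ℝ) :
    torusChar k n α = ec (∑ j, α j * (n j : ℝ)) := rfl

lemma star_torusChar (n : Fin k → ℤ) : star (torusChar k n) = torusChar k (-n) := by
  funext α
  simp only [Pi.star_apply, torusChar_apply, star_ec, Pi.neg_apply, Int.cast_neg, mul_neg,
    sum_neg_distrib]

lemma continuous_torusChar (n : Fin k → ℤ) : Continuous (torusChar k n) :=
  continuous_ec.comp (by fun_prop)

lemma integrableOn_box {E : Type*} [NormedAddCommGroup E] {f : (Fin k → ℝ) → E}
    (hf : Continuous f) : IntegrableOn f (box k) := by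
  have hIcc : IntegrableOn f (Set.Icc (0 : Fin k → ℝ) 1) := hf.continuousOn.integrableOn_Icc
  refine hIcc.mono_set fun α hα => ?_
  have hα' : ∀ i, α i ∈ Set.Ico (0 : ℝ) 1 := fun i => hα i (Set.mem_univ i)
  exact ⟨fun i => (hα' i).1, fun i => (hα' i).2.le⟩

lemma integral_ec_mul_intCast (n : ℤ) :
    ∫ x in Set.Ico (0 : ℝ) 1, ec (x * n) = if n = 0 then 1 else 0 := by
  rw [integral_Ico_eq_integral_Ioc, ← intervalIntegral.integral_of_le zero_le_one]
  split_ifs with hn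
  · simp [hn, ec]
  · have hc : (2 * Real.pi * Complex.I * n : ℂ) ≠ 0 := by
      simp [Real.pi_ne_zero, Complex.I_ne_zero, hn]
    have hec : ∀ x : ℝ, ec (x * n) = Complex.exp ((2 * Real.pi * Complex.I * n) * x) := by
      intro x
      rw [ec]
      push_cast
      ring_nf
    have hperiod : Complex.exp (2 * Real.pi * Complex.I * n * (1 : ℝ)) = 1 := by
      rw [← Complex.exp_int_mul_two_pi_mul_I n]
      push_cast
      ring_nf
    simp only [hec, integral_exp_mul_complex hc, hperiod]
    simp

lemma integral_torusChar (n : Fin k → ℤ) :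
    ∫ α in box k, torusChar k n α = if n = 0 then 1 else 0 := by
  have hprod : ∀ α : Fin k → ℝ, torusChar k n α = ∏ j, ec (α j * n j) := fun α => by
    simp only [torusChar_apply, ec_eq_fourierChar, addChar_map_sum]
    exact map_prod Circle.coeHom _ _
  simp only [hprod]
  rw [_root_.box, volume_pi, Measure.restrict_pi_pi,
    integral_fintype_prod_eq_prod (fun j (x : ℝ) => ec (x * n j))]
  simp only [integral_ec_mul_intCast]
  split_ifs with h
  · simp [h]
  · obtain ⟨j, hj⟩ := Function.ne_iff.mp h
    exact prod_eq_zero (mem_univ j) (by simpa using hj)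

/-- The characters with frequency in a subgroup `V`, as a multiplicative monoid. -/
def charMonoid (V : AddSubgroup (Fin k → ℤ)) : Submonoid ((Fin k → ℝ) → ℂ) :=
  (AddSubmonoid.toSubmonoid V.toAddSubmonoid).map (torusChar k).toMonoidHom

/-- Trigonometric polynomials with frequencies in the subgroup `V` and coefficients in `ℕ`.
Membership of `B - A` expresses that `A` is majorised by `B` coefficientwise. -/
def posTrig (V : AddSubgroup (Fin k → ℤ)) : Subsemiring ((Fin k → ℝ) → ℂ) :=
  (charMonoid V).subsemiringClosure

variable {V : AddSubgroup (Fin k → ℤ)} {F G A B C D : (Fin k → ℝ) → ℂ}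

lemma mem_posTrig_iff :
    G ∈ posTrig V ↔ G ∈ AddSubmonoid.closure (charMonoid V : Set ((Fin k → ℝ) → ℂ)) :=
  Submonoid.subsemiringClosure_mem _

lemma torusChar_mem_posTrig {n : Fin k → ℤ} (hn : n ∈ V) : torusChar k n ∈ posTrig V :=
  mem_posTrig_iff.2 (AddSubmonoid.subset_closure ⟨n, hn, rfl⟩)

@[elab_as_elim]
lemma posTrig_induction {P : (G : (Fin k → ℝ) → ℂ) → G ∈ posTrig V → Prop}
    (char : ∀ n (hn : n ∈ V), P (torusChar k n) (torusChar_mem_posTrig hn))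
    (zero : P 0 (zero_mem _))
    (add : ∀ F G (hF : F ∈ posTrig V) (hG : G ∈ posTrig V), P F hF → P G hG →
      P (F + G) (add_mem hF hG)) (hG : G ∈ posTrig V) : P G hG := by
  refine AddSubmonoid.closure_induction (motive := fun F hF => P F (mem_posTrig_iff.2 hF)) ?_ zero
    (fun F G hF hG => add F G (mem_posTrig_iff.2 hF) (mem_posTrig_iff.2 hG)) (mem_posTrig_iff.1 hG)
  rintro _ ⟨n, hn, rfl⟩
  exact char n hn

lemma star_mem_posTrig (hG : G ∈ posTrig V) : star G ∈ posTrig V := by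
  induction hG using posTrig_induction with
  | char n hn => exact star_torusChar n ▸ torusChar_mem_posTrig (V.neg_mem hn)
  | zero => simp [zero_mem]
  | add F G _ _ hF hG => exact star_add F G ▸ add_mem hF hG

lemma continuous_of_mem_posTrig (hG : G ∈ posTrig V) : Continuous G := by
  induction hG using posTrig_induction with
  | char n _ => exact continuous_torusChar n
  | zero => exact continuous_const
  | add F G _ _ hF hG => exact hF.add hG

lemma posTrig_le_top : posTrig V ≤ posTrig ⊤ := by
  intro G hG
  induction hG using posTrig_induction with
  | char n _ => exact torusChar_mem_posTrig (AddSubgroup.mem_top n)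
  | zero => exact zero_mem _
  | add F G _ _ hF hG => exact add_mem hF hG

lemma integral_re_nonneg_of_mem_posTrig (hG : G ∈ posTrig V) :
    0 ≤ (∫ α in box k, G α).re := by
  induction hG using posTrig_induction with
  | char n _ =>
    rw [integral_torusChar]
    split_ifs <;> simp
  | zero => simp
  | add F G hFV hGV hF hG =>
    simp only [Pi.add_apply]
    rw [integral_add (integrableOn_box (continuous_of_mem_posTrig hFV))
      (integrableOn_box (continuous_of_mem_posTrig hGV)), Complex.add_re]
    exact add_nonneg hF hG

lemma integral_torusChar_mul_eq_zero {n : Fin k → ℤ} (hn : n ∉ V) (hG : G ∈ posTrig V) :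
    ∫ α in box k, torusChar k n α * G α = 0 := by
  induction hG using posTrig_induction with
  | char m hm =>
    simp only [← Pi.mul_apply, ← AddChar.map_add_eq_mul]
    rw [integral_torusChar, if_neg]
    exact fun h0 => hn (eq_neg_of_add_eq_zero_left h0 ▸ V.neg_mem hm)
  | zero => simp
  | add F G hFV hGV hF hG =>
    simp only [Pi.add_apply, mul_add]
    rw [integral_add, hF, hG, add_zero]
    · exact integrableOn_box ((continuous_torusChar n).mul (continuous_of_mem_posTrig hFV))
    · exact integrableOn_box ((continuous_torusChar n).mul (continuous_of_mem_posTrig hGV))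

lemma integral_re_le_of_sub_mem (hF : Continuous F) (hG : Continuous G) (h : G - F ∈ posTrig V) :
    (∫ α in box k, F α).re ≤ (∫ α in box k, G α).re := by
  have hnonneg := integral_re_nonneg_of_mem_posTrig h
  simp only [Pi.sub_apply] at hnonneg
  rwa [integral_sub (integrableOn_box hG) (integrableOn_box hF), Complex.sub_re,
    sub_nonneg] at hnonneg

lemma mul_sub_mul_mem_posTrig (hB : B ∈ posTrig V) (hC : C ∈ posTrig V)
    (hAB : B - A ∈ posTrig V) (hCD : D - C ∈ posTrig V) : B * D - A * C ∈ posTrig V := by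
  have : B * D - A * C = B * (D - C) + (B - A) * C := by ring
  exact this ▸ add_mem (mul_mem hB hCD) (mul_mem hAB hC)

lemma pow_sub_pow_mem_posTrig (hA : A ∈ posTrig V) (hB : B ∈ posTrig V)
    (h : B - A ∈ posTrig V) (n : ℕ) : B ^ n - A ^ n ∈ posTrig V := by
  induction n with
  | zero => simp [zero_mem]
  | succ n ih =>
    rw [pow_succ, pow_succ]
    exact mul_sub_mul_mem_posTrig (pow_mem hB n) hA ih h

lemma mul_star_sub_mul_star_mem_posTrig (hA : A ∈ posTrig V) (hB : B ∈ posTrig V)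
    (h : B - A ∈ posTrig V) : B * star B - A * star A ∈ posTrig V :=
  mul_sub_mul_mem_posTrig hB (star_mem_posTrig hA) h (star_sub B A ▸ star_mem_posTrig h)

lemma mul_star_apply (G : (Fin k → ℝ) → ℂ) (α : Fin k → ℝ) :
    (G * star G) α = ((‖G α‖ ^ 2 : ℝ) : ℂ) := by
  simp only [Pi.mul_apply, Pi.star_apply, Complex.star_def, Complex.mul_conj', Complex.ofReal_pow]

end Characters

/-! ### Hölder's inequality -/

section Holder

variable {Ω : Type*} [MeasurableSpace Ω] {μ : Measure Ω}

lemma memLp_rpow_of_integrable {f : Ω → ℝ} (hf : Integrable f μ) (hf0 : ∀ ω, 0 ≤ f ω) {x : ℝ}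
    (hx : 0 < x) : MemLp (fun ω => f ω ^ x) (ENNReal.ofReal x⁻¹) μ := by
  rw [← integrable_norm_rpow_iff (hf.aemeasurable.pow_const x).aestronglyMeasurable
    (by simpa using hx) ENNReal.ofReal_ne_top]
  refine hf.congr (Eventually.of_forall fun ω => ?_)
  simp only [ENNReal.toReal_ofReal (inv_nonneg.2 hx.le)]
  rw [Real.norm_of_nonneg (Real.rpow_nonneg (hf0 ω) _), Real.rpow_rpow_inv (hf0 ω) hx.ne']

lemma integral_rpow_mul_rpow_le {f g : Ω → ℝ} (hf : Integrable f μ) (hg : Integrable g μ)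
    (hf0 : ∀ ω, 0 ≤ f ω) (hg0 : ∀ ω, 0 ≤ g ω) {x y : ℝ} (hx : 0 < x) (hy : 0 < y)
    (hxy : x + y = 1) :
    ∫ ω, f ω ^ x * g ω ^ y ∂μ ≤ (∫ ω, f ω ∂μ) ^ x * (∫ ω, g ω ∂μ) ^ y := by
  have hpq : x⁻¹.HolderConjugate y⁻¹ := by
    rw [Real.holderConjugate_iff]
    exact ⟨(one_lt_inv₀ hx).2 (by linarith), by simpa using hxy⟩
  have h := integral_mul_le_Lp_mul_Lq_of_nonneg hpq
    (Eventually.of_forall fun ω => Real.rpow_nonneg (hf0 ω) x)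
    (Eventually.of_forall fun ω => Real.rpow_nonneg (hg0 ω) y)
    (memLp_rpow_of_integrable hf hf0 hx) (memLp_rpow_of_integrable hg hg0 hy)
  simpa only [Real.rpow_rpow_inv (hf0 _) hx.ne', Real.rpow_rpow_inv (hg0 _) hy.ne', one_div,
    inv_inv] using h

lemma integral_mul_pow_mul_pow_sub_le {w u v : Ω → ℝ} {m n : ℕ} (hm : 0 < m) (hmn : m < n)
    (hu : Integrable (fun ω => w ω * u ω ^ n) μ) (hv : Integrable (fun ω => w ω * v ω ^ n) μ)
    (hw0 : ∀ ω, 0 ≤ w ω) (hu0 : ∀ ω, 0 ≤ u ω) (hv0 : ∀ ω, 0 ≤ v ω) :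
    ∫ ω, w ω * u ω ^ m * v ω ^ (n - m) ∂μ ≤
      (∫ ω, w ω * u ω ^ n ∂μ) ^ ((m : ℝ) / n) *
        (∫ ω, w ω * v ω ^ n ∂μ) ^ (1 - (m : ℝ) / n) := by
  have hn0 : (n : ℝ) ≠ 0 := Nat.cast_ne_zero.2 (by omega)
  have hexp : (0 : ℝ) < m / n := by have := hm.trans hmn; positivity
  have hexp' : (0 : ℝ) < 1 - m / n :=
    sub_pos.2 ((div_lt_one (by positivity)).2 (Nat.cast_lt.2 hmn))
  refine le_of_eq_of_le (integral_congr_ae (Eventually.of_forall fun ω => ?_))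
    (integral_rpow_mul_rpow_le hu hv (fun ω => mul_nonneg (hw0 ω) (pow_nonneg (hu0 ω) _))
      (fun ω => mul_nonneg (hw0 ω) (pow_nonneg (hv0 ω) _)) hexp hexp' (add_sub_cancel _ _))
  have hu' : (u ω ^ n) ^ ((m : ℝ) / n) = u ω ^ m := by
    rw [← Real.rpow_natCast, ← Real.rpow_mul (hu0 ω), mul_div_cancel₀ _ hn0, Real.rpow_natCast]
  have hv' : (v ω ^ n) ^ (1 - (m : ℝ) / n) = v ω ^ (n - m) := by
    rw [← Real.rpow_natCast, ← Real.rpow_mul (hv0 ω), mul_sub, mul_one, mul_div_cancel₀ _ hn0,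
      ← Nat.cast_sub hmn.le, Real.rpow_natCast]
  have hw : w ω ^ ((m : ℝ) / n) * w ω ^ (1 - (m : ℝ) / n) = w ω := by
    rw [← Real.rpow_add_of_nonneg (hw0 ω) hexp.le hexp'.le, add_sub_cancel, Real.rpow_one]
  simp only [Real.mul_rpow (hw0 ω) (pow_nonneg (hu0 ω) _),
    Real.mul_rpow (hw0 ω) (pow_nonneg (hv0 ω) _), hu', hv']
  linear_combination -(u ω ^ m * v ω ^ (n - m)) * hw

end Holder

/-! ### Conditioning -/

section Conditioning

variable {ι κ κ' R : Type*}

lemma exists_injective_comp_of_le_card_image {r s : ℕ} (v : Fin s → ι)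
    (hr : r ≤ (univ.image v).card) : ∃ σ : Fin r ↪ Fin s, Function.Injective (v ∘ σ) := by
  obtain ⟨T, hT, hTc⟩ := exists_subset_card_eq hr
  have hsurj : ∀ x : T, ∃ i, v i = x := fun x => by simpa using hT x.2
  choose w hw using hsurj
  let e : Fin r ≃ T := (finCongr (by simpa using hTc.symm)).trans (Fintype.equivFin T).symm
  have hvw : Function.Injective (v ∘ w ∘ e) := by
    have : v ∘ w ∘ e = Subtype.val ∘ e := funext fun i => hw (e i)
    exact this ▸ Subtype.val_injective.comp e.injective
  exact ⟨⟨w ∘ e, hvw.of_comp⟩, hvw⟩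

lemma exists_const_comp_of_card_image_mul_lt {m s : ℕ} (v : Fin s → ι)
    (hm : (univ.image v).card * m < s) :
    ∃ σ : Fin (m + 1) ↪ Fin s, ∃ c, v ∘ σ = Function.const _ c := by
  obtain ⟨c, -, hc⟩ := exists_lt_card_fiber_of_mul_lt_card_of_maps_to (n := m)
    (f := v) (s := univ) (t := univ.image v) (fun i _ => mem_image_of_mem v (mem_univ i))
    (by rwa [card_univ, Fintype.card_fin])
  obtain ⟨T, hT, hTc⟩ := exists_subset_card_eq (Nat.succ_le_of_lt hc)
  let e : Fin (m + 1) ≃ T := (finCongr (by simpa using hTc.symm)).trans (Fintype.equivFin T).symm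
  exact ⟨e.toEmbedding.trans (Function.Embedding.subtype _), c,
    funext fun i => (mem_filter.1 (hT (e i).2)).2⟩

variable [Fintype ι] [Fintype κ] [Fintype κ']

lemma sum_comp_mem_prod_eq [CommSemiring R] {s : ℕ} (σ : κ ↪ Fin s) (S : Finset (κ → ι))
    (g : ι → R) :
    ∑ v : Fin s → ι with v ∘ σ ∈ S, ∏ i, g (v i) =
      (∑ u ∈ S, ∏ i, g (u i)) * (∑ c, g c) ^ (s - Fintype.card κ) := by
  let e : κ ⊕ {i // i ∉ Set.range σ} ≃ Fin s :=
    ((Equiv.ofInjective σ σ.injective).sumCongr (Equiv.refl _)).trans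
      (Equiv.sumCompl (· ∈ Set.range σ))
  have he : ∀ x, e (Sum.inl x) = σ x := fun x => by simp [e]
  have hcard : Fintype.card {i // i ∉ Set.range σ} = s - Fintype.card κ := by
    have := Fintype.card_congr e
    rw [Fintype.card_sum, Fintype.card_fin] at this
    omega
  let split : (Fin s → ι) ≃ (κ → ι) × ({i // i ∉ Set.range σ} → ι) :=
    (e.symm.arrowCongr (Equiv.refl ι)).trans (Equiv.sumArrowEquivProdArrow _ _ _)
  have hfst : ∀ v, (split v).1 = v ∘ σ := fun v => by
    funext x
    simp [split, Equiv.sumArrowEquivProdArrow, he]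
  have hsnd : ∀ v x, (split v).2 x = v (e (Sum.inr x)) := fun v x => by
    simp [split, Equiv.sumArrowEquivProdArrow]
  have hprod : ∀ v : Fin s → ι,
      ∏ i, g (v i) = (∏ i, g ((split v).1 i)) * ∏ i, g ((split v).2 i) := fun v => by
    rw [← e.prod_comp, Fintype.prod_sum_type]
    simp only [hfst, hsnd, he, Function.comp_apply]
  have hpow : (∑ c, g c) ^ (s - Fintype.card κ) =
      ∑ u : {i // i ∉ Set.range σ} → ι, ∏ i, g (u i) := by
    rw [← hcard, ← Finset.card_univ, ← prod_const, prod_univ_sum, Fintype.piFinset_univ]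
  rw [hpow, sum_mul_sum, ← sum_product']
  exact sum_equiv split (by simp [hfst]) fun v _ => hprod v

lemma card_nsmul_sum_mul_pow [CommSemiring R] (s : ℕ) (S : Finset (κ → ι)) (g : ι → R) :
    Fintype.card (κ ↪ Fin s) •
        ((∑ u ∈ S, ∏ i, g (u i)) * (∑ c, g c) ^ (s - Fintype.card κ)) =
      ∑ v : Fin s → ι, #{σ : κ ↪ Fin s | v ∘ σ ∈ S} • ∏ i, g (v i) := by
  calc
    _ = ∑ σ : κ ↪ Fin s, ∑ v : Fin s → ι with v ∘ σ ∈ S, ∏ i, g (v i) := by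
      simp only [sum_comp_mem_prod_eq, sum_const, card_univ]
    _ = ∑ v : Fin s → ι, ∑ σ : κ ↪ Fin s, if v ∘ σ ∈ S then ∏ i, g (v i) else 0 := by
      simp only [sum_filter]
      exact sum_comm
    _ = _ := by simp only [← sum_filter, sum_const]

lemma nsmul_add_nsmul_sub_pow_mem [CommRing R] {P : Subsemiring R} {g : ι → R}
    (hg : ∀ c, g c ∈ P) {s : ℕ} (S : Finset (κ → ι)) (T : Finset (κ' → ι))
    (hcover : ∀ v : Fin s → ι, (∃ σ : κ ↪ Fin s, v ∘ σ ∈ S) ∨ ∃ σ : κ' ↪ Fin s, v ∘ σ ∈ T) :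
    Fintype.card (κ ↪ Fin s) •
          ((∑ u ∈ S, ∏ i, g (u i)) * (∑ c, g c) ^ (s - Fintype.card κ)) +
        Fintype.card (κ' ↪ Fin s) •
          ((∑ u ∈ T, ∏ i, g (u i)) * (∑ c, g c) ^ (s - Fintype.card κ')) -
      (∑ c, g c) ^ s ∈ P := by
  have hpow : (∑ c, g c) ^ s = ∑ v : Fin s → ι, ∏ i, g (v i) := by
    conv_lhs => rw [← Fintype.card_fin s, ← card_univ, ← prod_const, prod_univ_sum,
      Fintype.piFinset_univ]
  rw [card_nsmul_sum_mul_pow, card_nsmul_sum_mul_pow, hpow, ← sum_add_distrib, ← sum_sub_distrib]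
  refine sum_mem fun v _ => ?_
  have hpos : 0 < #{σ : κ ↪ Fin s | v ∘ σ ∈ S} + #{σ : κ' ↪ Fin s | v ∘ σ ∈ T} := by
    rw [Nat.add_pos_iff_pos_or_pos, card_pos, card_pos]
    exact (hcover v).imp (fun ⟨σ, hσ⟩ => ⟨σ, by simpa using hσ⟩)
      fun ⟨σ, hσ⟩ => ⟨σ, by simpa using hσ⟩
  obtain ⟨n, hn⟩ := Nat.exists_eq_add_one_of_ne_zero hpos.ne'
  rw [← add_nsmul, hn, succ_nsmul, add_sub_cancel_right]
  exact nsmul_mem (prod_mem fun i _ => hg _) n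

/-- A power of a sum is dominated by the tuples having `r` distinct entries together with
those having three equal entries. -/
lemma conditioning_mem [CommRing R] {P : Subsemiring R} {g : ι → R} (hg : ∀ c, g c ∈ P)
    {r s : ℕ} (hs : 2 * r ≤ s) :
    Fintype.card (Fin r ↪ Fin s) •
          ((∑ u : Fin r → ι with Function.Injective u, ∏ i, g (u i)) * (∑ c, g c) ^ (s - r)) +
        Fintype.card (Fin 3 ↪ Fin s) • ((∑ c, g c ^ 3) * (∑ c, g c) ^ (s - 3)) -
      (∑ c, g c) ^ s ∈ P := by
  have hcube : ∑ u ∈ univ.image (Function.const (Fin 3) : ι → Fin 3 → ι), ∏ i, g (u i) =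
      ∑ c, g c ^ 3 := by
    rw [sum_image (Function.const_injective (β := ι) (α := Fin 3)).injOn]
    simp
  have h := nsmul_add_nsmul_sub_pow_mem hg (s := s)
    (univ.filter fun u : Fin r → ι => Function.Injective u)
    (univ.image (Function.const (Fin 3))) fun v => ?_
  · simpa only [hcube, Fintype.card_fin] using h
  · rcases le_or_gt r (univ.image v).card with hr | hr
    · exact .inl <| (exists_injective_comp_of_le_card_image v hr).imp fun σ hσ => by simpa using hσ
    · obtain ⟨σ, c, hc⟩ := exists_const_comp_of_card_image_mul_lt (m := 2) v (by omega)
      exact .inr ⟨σ, by simp [hc]⟩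

end Conditioning

/-! ### Exponential sums over arithmetic progressions -/

/-- The integers of `[1, n]` in the residue class of `ξ` modulo `q`. For `n = q * m` these represent
the classes modulo `q * m` that refine the class of `ξ`. -/
def progression (n q ξ : ℤ) : Finset ℤ := {x ∈ Icc 1 n | x ≡ ξ [ZMOD q]}

/-- The representative in `[1, n]` of the class of `x` modulo `n`. -/
def residue (n x : ℤ) : ℤ := (x - 1) % n + 1

/-- The vector of powers `(x, x², …, x^k)`, the frequency of `x` in a Vinogradov sum. -/
def powVec (k : ℕ) (x : ℤ) : Fin k → ℤ := fun j => x ^ ((j : ℕ) + 1)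

section Progression

variable {n q ξ x y : ℤ}

lemma mem_progression : x ∈ progression n q ξ ↔ (1 ≤ x ∧ x ≤ n) ∧ x ≡ ξ [ZMOD q] := by
  rw [progression, mem_filter, mem_Icc]

lemma residue_modEq (n x : ℤ) : residue n x ≡ x [ZMOD n] := by
  simpa [residue] using (Int.mod_modEq (x - 1) n).add_right 1

lemma residue_mem_Icc (hn : 0 < n) (x : ℤ) : 1 ≤ residue n x ∧ residue n x ≤ n := by
  have hnonneg := Int.emod_nonneg (x - 1) hn.ne'
  have hlt := Int.emod_lt_of_pos (x - 1) hn
  unfold residue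
  omega

lemma residue_mem_progression (hn : 0 < n) (hq : q ∣ n) (h : x ≡ ξ [ZMOD q]) :
    residue n x ∈ progression n q ξ :=
  mem_progression.2 ⟨residue_mem_Icc hn x, ((residue_modEq n x).of_dvd hq).trans h⟩

lemma eq_of_modEq_of_mem_Icc (hx : 1 ≤ x ∧ x ≤ n) (hy : 1 ≤ y ∧ y ≤ n) (h : x ≡ y [ZMOD n]) :
    x = y := by
  have hpred : x - 1 ≡ y - 1 [ZMOD n] := h.sub_right 1
  rw [Int.ModEq, Int.emod_eq_of_lt (by omega) (by omega),
    Int.emod_eq_of_lt (by omega) (by omega)] at hpred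
  omega

lemma card_progression_mul_le (hq : 0 < q) (m : ℕ) (ξ : ℤ) :
    (progression (q * m) q ξ).card ≤ m := by
  have hmap : Set.MapsTo (fun x => (x - 1) / q) (progression (q * m) q ξ) (Ico (0 : ℤ) m) := by
    intro x hx
    obtain ⟨⟨h1, h2⟩, -⟩ := mem_progression.1 hx
    rw [mul_comm] at h2
    exact mem_coe.2 <| mem_Ico.2
      ⟨Int.ediv_nonneg (by omega) hq.le, Int.ediv_lt_of_lt_mul hq (by omega)⟩
  have hinj : Set.InjOn (fun x => (x - 1) / q) (progression (q * m) q ξ) := by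
    intro x hx y hy (hxy : (x - 1) / q = (y - 1) / q)
    have hmod : (x - 1) % q = (y - 1) % q :=
      ((mem_progression.1 hx).2.trans (mem_progression.1 hy).2.symm).sub_right 1
    have hx := Int.mul_ediv_add_emod (x - 1) q
    have hy := Int.mul_ediv_add_emod (y - 1) q
    rw [hxy, hmod] at hx
    linarith
  simpa using card_le_card_of_injOn _ hmap hinj

/-- Sorting the elements of a progression modulo `q` by their classes modulo a multiple of `q`. -/
lemma sum_progression_eq_sum_refine {A : Type*} [AddCommMonoid A] {m l : ℤ} (hm : 0 < m)
    (hl : l ∣ m) (n ξ : ℤ) (f : ℤ → A) :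
    ∑ x ∈ progression n l ξ, f x = ∑ v ∈ progression m l ξ, ∑ x ∈ progression n m v, f x := by
  rw [← sum_biUnion]
  · congr 1
    ext x
    simp only [mem_biUnion, mem_progression]
    constructor
    · rintro ⟨hx, hxξ⟩
      exact ⟨residue m x, mem_progression.1 (residue_mem_progression hm hl hxξ), hx,
        (residue_modEq m x).symm⟩
    · rintro ⟨v, ⟨-, hv⟩, hx, hxv⟩
      exact ⟨hx, (hxv.of_dvd hl).trans hv⟩
  · intro v hv w hw hvw
    refine disjoint_left.2 fun x hxv hxw => hvw ?_
    exact eq_of_modEq_of_mem_Icc (mem_progression.1 hv).1 (mem_progression.1 hw).1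
      ((mem_progression.1 hxv).2.symm.trans (mem_progression.1 hxw).2)

end Progression

section fexp

variable {k p r c : ℕ} {X : ℝ} {ξ : ℤ}

lemma fexp_eq_sum :
    fexp k p X c ξ = ∑ x ∈ progression ⌊X⌋ ((p : ℤ) ^ c) ξ, torusChar k (powVec k x) := by
  funext α
  simp only [fexp, Finset.sum_apply, progression, torusChar_apply, powVec]
  push_cast
  rfl

lemma fexp_mem_posTrig : fexp k p X c ξ ∈ posTrig ⊤ := by
  rw [fexp_eq_sum]
  exact sum_mem fun x _ => torusChar_mem_posTrig (AddSubgroup.mem_top _)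

@[fun_prop]
lemma continuous_fexp : Continuous (fexp k p X c ξ) := continuous_of_mem_posTrig fexp_mem_posTrig

lemma fexp_eq_sum_fexp_succ (hp : 0 < p) :
    fexp k p X c ξ =
      ∑ v ∈ progression ((p : ℤ) ^ (c + 1)) ((p : ℤ) ^ c) ξ, fexp k p X (c + 1) v := by
  simp only [fexp_eq_sum]
  exact sum_progression_eq_sum_refine (by positivity) (pow_dvd_pow _ c.le_succ) _ _ _

lemma mem_XiSet_iff {v : Fin r → ℤ} : v ∈ XiSet p r c ξ ↔
    (∀ i, v i ∈ progression ((p : ℤ) ^ (c + 1)) ((p : ℤ) ^ c) ξ) ∧ Function.Injective v := by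
  have hcast (x y : ℤ) : (x : ZMod (p ^ (c + 1))) = y ↔ x ≡ y [ZMOD (p : ℤ) ^ (c + 1)] := by
    rw [ZMod.intCast_eq_intCast_iff]
    push_cast
    rfl
  simp only [XiSet, Set.mem_ofPred_eq, mem_progression, forall_and, and_assoc]
  refine and_congr_right fun h1 => and_congr_right fun h2 => and_congr_right fun _ => ?_
  refine ⟨fun h i j hij => h (by simp [hij]), fun h i j hij => h ?_⟩
  exact eq_of_modEq_of_mem_Icc ⟨h1 i, h2 i⟩ ⟨h1 j, h2 j⟩ ((hcast _ _).1 hij)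

lemma Fexp_eq_sum : Fexp k p r X c ξ =
    ∑ v ∈ (Fintype.piFinset fun _ : Fin r =>
        progression ((p : ℤ) ^ (c + 1)) ((p : ℤ) ^ c) ξ).filter Function.Injective,
      ∏ i, fexp k p X (c + 1) (v i) := by
  have hXi : XiSet p r c ξ = ((Fintype.piFinset fun _ : Fin r =>
      progression ((p : ℤ) ^ (c + 1)) ((p : ℤ) ^ c) ξ).filter Function.Injective : Finset _) := by
    ext v
    rw [mem_XiSet_iff, mem_coe, mem_filter, Fintype.mem_piFinset]
  funext α
  rw [Fexp, hXi, finsum_mem_coe_finset]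
  simp

lemma Fexp_mem_posTrig : Fexp k p r X c ξ ∈ posTrig ⊤ := by
  rw [Fexp_eq_sum]
  exact sum_mem fun v _ => prod_mem fun i _ => fexp_mem_posTrig

@[fun_prop]
lemma continuous_Fexp : Continuous (Fexp k p r X c ξ) := continuous_of_mem_posTrig Fexp_mem_posTrig

lemma fexp_pow_sub_Fexp_mem_posTrig (hp : 0 < p) :
    fexp k p X c ξ ^ r - Fexp k p r X c ξ ∈ posTrig ⊤ := by
  have hpow : fexp k p X c ξ ^ r = ∑ v ∈ Fintype.piFinset fun _ : Fin r =>
      progression ((p : ℤ) ^ (c + 1)) ((p : ℤ) ^ c) ξ, ∏ i, fexp k p X (c + 1) (v i) := by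
    rw [fexp_eq_sum_fexp_succ hp]
    conv_lhs => rw [← Fintype.card_fin r, ← card_univ, ← prod_const, prod_univ_sum]
  rw [hpow, Fexp_eq_sum, ← sum_filter_add_sum_filter_not _ Function.Injective,
    add_sub_cancel_left]
  exact sum_mem fun v _ => prod_mem fun i _ => fexp_mem_posTrig

lemma Fexp_eq_sum_subtype : Fexp k p r X c ξ =
    ∑ u : Fin r → progression ((p : ℤ) ^ (c + 1)) ((p : ℤ) ^ c) ξ with Function.Injective u,
      ∏ i, fexp k p X (c + 1) (u i) := by
  rw [Fexp_eq_sum]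
  refine sum_bij' (fun v hv i => ⟨v i, Fintype.mem_piFinset.1 (mem_filter.1 hv).1 i⟩)
    (fun u _ i => (u i : ℤ)) (fun v hv => ?_) (fun u hu => ?_)
    (fun _ _ => rfl) (fun _ _ => rfl) (fun _ _ => rfl)
  · exact mem_filter.2
      ⟨mem_univ _, fun i j hij => (mem_filter.1 hv).2 (congrArg Subtype.val hij)⟩
  · exact mem_filter.2 ⟨Fintype.mem_piFinset.2 fun i => (u i).2,
      Subtype.val_injective.comp (mem_filter.1 hu).2⟩

lemma conditioning_fexp_mem_posTrig (hp : 0 < p) {s : ℕ} (hs : 2 * r ≤ s) :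
    Fintype.card (Fin r ↪ Fin s) • (Fexp k p r X c ξ * fexp k p X c ξ ^ (s - r)) +
        Fintype.card (Fin 3 ↪ Fin s) •
          ((∑ v ∈ progression ((p : ℤ) ^ (c + 1)) ((p : ℤ) ^ c) ξ, fexp k p X (c + 1) v ^ 3) *
            fexp k p X c ξ ^ (s - 3)) -
      fexp k p X c ξ ^ s ∈ posTrig ⊤ := by
  have h := conditioning_mem (P := posTrig ⊤)
    (g := fun v : progression ((p : ℤ) ^ (c + 1)) ((p : ℤ) ^ c) ξ => fexp k p X (c + 1) v)
    (fun _ => fexp_mem_posTrig) hs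
  rw [sum_coe_sort _ (fexp k p X (c + 1)), ← fexp_eq_sum_fexp_succ hp,
    sum_coe_sort _ (fexp k p X (c + 1) · ^ 3)] at h
  rw [Fexp_eq_sum_subtype]
  convert h

end fexp

/-! ### The mean values -/

/-- The pairs `(ξ, η)` over which the maxima `I_{a,b}(X)` and `K_{a,b}(X)` are taken. -/
structure IsAdmissible (p a b : ℕ) (ξ η : ℤ) : Prop where
  left : 1 ≤ ξ ∧ ξ ≤ (p : ℤ) ^ a
  right : 1 ≤ η ∧ η ≤ (p : ℤ) ^ b
  not_modEq : ¬ η ≡ ξ [ZMOD p]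

section MeanValue

variable {k p r s t a b : ℕ} {X : ℝ} {ξ η : ℤ}

lemma Iab_nonneg : 0 ≤ Iab k p r s X a b ξ η := integral_nonneg fun _ => by positivity

lemma Kab_nonneg : 0 ≤ Kab k p r t X a b ξ η := integral_nonneg fun _ => by positivity

lemma Ktilde_nonneg : 0 ≤ Ktilde k p r t X b η := integral_nonneg fun _ => by positivity

lemma Imax_nonneg : 0 ≤ Imax k p r s X a b := by
  refine Real.sSup_nonneg ?_
  rintro _ ⟨ξ, η, -, -, -, -, -, rfl⟩
  exact Iab_nonneg

lemma Kmax_nonneg : 0 ≤ Kmax k p r t X a b := by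
  rw [Kmax]
  split_ifs
  · refine Real.sSup_nonneg ?_
    rintro _ ⟨η, -, -, rfl⟩
    exact Ktilde_nonneg
  · refine Real.sSup_nonneg ?_
    rintro _ ⟨ξ, η, -, -, -, -, -, rfl⟩
    exact Kab_nonneg

lemma bddAbove_admissible (p a b : ℕ) (Φ : ℤ → ℤ → ℝ) :
    BddAbove {v : ℝ | ∃ ξ η : ℤ, 1 ≤ ξ ∧ ξ ≤ (p : ℤ) ^ a ∧ 1 ≤ η ∧ η ≤ (p : ℤ) ^ b ∧
      ¬ Int.ModEq (p : ℤ) η ξ ∧ v = Φ ξ η} := by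
  refine (((Set.finite_Icc (1 : ℤ) (p ^ a)).prod (Set.finite_Icc (1 : ℤ) (p ^ b))).image
    fun z => Φ z.1 z.2).subset ?_ |>.bddAbove
  rintro _ ⟨ξ, η, h1, h2, h3, h4, -, rfl⟩
  exact ⟨(ξ, η), ⟨⟨h1, h2⟩, ⟨h3, h4⟩⟩, rfl⟩

lemma Iab_le_Imax (h : IsAdmissible p a b ξ η) : Iab k p r s X a b ξ η ≤ Imax k p r s X a b :=
  le_csSup (bddAbove_admissible p a b (Iab k p r s X a b))
    ⟨ξ, η, h.left.1, h.left.2, h.right.1, h.right.2, h.not_modEq, rfl⟩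

lemma Kab_le_Kmax (ha : a ≠ 0) (h : IsAdmissible p a b ξ η) :
    Kab k p r t X a b ξ η ≤ Kmax k p r t X a b := by
  rw [Kmax, if_neg ha]
  exact le_csSup (bddAbove_admissible p a b (Kab k p r t X a b))
    ⟨ξ, η, h.left.1, h.left.2, h.right.1, h.right.2, h.not_modEq, rfl⟩

lemma Imax_le {C : ℝ} (hC : 0 ≤ C)
    (h : ∀ ξ η, IsAdmissible p a b ξ η → Iab k p r s X a b ξ η ≤ C) : Imax k p r s X a b ≤ C := by
  refine Real.sSup_le ?_ hC
  rintro _ ⟨ξ, η, h1, h2, h3, h4, h5, rfl⟩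
  exact h ξ η ⟨⟨h1, h2⟩, ⟨h3, h4⟩, h5⟩

lemma Kmax_le {C : ℝ} (hC : 0 ≤ C)
    (h0 : a = 0 → ∀ η, 1 ≤ η ∧ η ≤ (p : ℤ) ^ b → Ktilde k p r t X b η ≤ C)
    (h : a ≠ 0 → ∀ ξ η, IsAdmissible p a b ξ η → Kab k p r t X a b ξ η ≤ C) :
    Kmax k p r t X a b ≤ C := by
  rw [Kmax]
  split_ifs with ha
  · refine Real.sSup_le ?_ hC
    rintro _ ⟨η, h1, h2, rfl⟩
    exact h0 ha η ⟨h1, h2⟩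
  · refine Real.sSup_le ?_ hC
    rintro _ ⟨ξ, η, h1, h2, h3, h4, h5, rfl⟩
    exact h ha ξ η ⟨⟨h1, h2⟩, ⟨h3, h4⟩, h5⟩

end MeanValue

/-! ### The conditioning step -/

section Moments

variable {k s : ℕ}

lemma integral_mul_star_re {G W : (Fin k → ℝ) → ℂ} {w : (Fin k → ℝ) → ℝ}
    (hw : ∀ α, W α = (w α : ℂ)) :
    (∫ α in box k, (W * (G * star G)) α).re = ∫ α in box k, w α * ‖G α‖ ^ 2 := by
  have hval (α) : (W * (G * star G)) α = ((w α * ‖G α‖ ^ 2 : ℝ) : ℂ) := by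
    rw [Pi.mul_apply, mul_star_apply, hw, ← Complex.ofReal_mul]
  simp only [hval]
  rw [integral_complex_ofReal, Complex.ofReal_re]

/-- Domination among trigonometric polynomials passes to even moments. -/
lemma integral_norm_pow_le_of_sub_mem {A B : (Fin k → ℝ) → ℂ} (hA : A ∈ posTrig ⊤)
    (hB : B ∈ posTrig ⊤) (h : B - A ∈ posTrig ⊤) (n : ℕ) :
    ∫ α in box k, ‖A α‖ ^ (2 * n) ≤ ∫ α in box k, ‖B α‖ ^ (2 * n) := by
  have hmoment (D : (Fin k → ℝ) → ℂ) : ∫ α in box k, ‖D α‖ ^ (2 * n) =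
      (∫ α in box k, (D ^ n * star (D ^ n)) α).re := by
    have := integral_mul_star_re (G := D ^ n) (W := 1) (w := 1) fun _ => by simp
    simpa [← pow_mul, mul_comm n 2] using this.symm
  have hpow := mul_star_sub_mul_star_mem_posTrig (pow_mem hA n) (pow_mem hB n)
    (pow_sub_pow_mem_posTrig hA hB h n)
  have hcont {D : (Fin k → ℝ) → ℂ} (hD : D ∈ posTrig ⊤) : Continuous (D ^ n * star (D ^ n)) :=
    continuous_of_mem_posTrig (mul_mem (pow_mem hD n) (star_mem_posTrig (pow_mem hD n)))
  rw [hmoment, hmoment]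
  exact integral_re_le_of_sub_mem (hcont hA) (hcont hB) hpow

/-- Since `A * star A * star f ^ s` is a trigonometric polynomial with nonnegative coefficients,
one factor `f ^ s` of `‖f‖ ^ (2 * s)` may be replaced by anything dominating it. -/
lemma integral_norm_sq_mul_pow_le_of_sub_mem {A f D : (Fin k → ℝ) → ℂ} (hA : A ∈ posTrig ⊤)
    (hf : f ∈ posTrig ⊤) (hD : D ∈ posTrig ⊤) (h : D - f ^ s ∈ posTrig ⊤) :
    ∫ α in box k, ‖A α‖ ^ 2 * ‖f α‖ ^ (2 * s) ≤
      ∫ α in box k, ‖A α‖ ^ 2 * (‖D α‖ * ‖f α‖ ^ s) := by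
  set W := A * star A * star (f ^ s) with hW
  have hWmem : W ∈ posTrig ⊤ :=
    mul_mem (mul_mem hA (star_mem_posTrig hA)) (star_mem_posTrig (pow_mem hf s))
  calc
    _ = (∫ α in box k, (f ^ s * W) α).re := by
      have hreal := integral_mul_star_re (G := f ^ s) (W := A * star A) (mul_star_apply A)
      simp only [Pi.pow_apply, norm_pow, ← pow_mul, mul_comm s 2] at hreal
      have hfactor : f ^ s * W = A * star A * (f ^ s * star (f ^ s)) := by rw [hW]; ring
      rw [← hreal, hfactor]
    _ ≤ (∫ α in box k, (D * W) α).re := by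
      refine integral_re_le_of_sub_mem (V := ⊤)
        (continuous_of_mem_posTrig (mul_mem (pow_mem hf s) hWmem))
        (continuous_of_mem_posTrig (mul_mem hD hWmem)) ?_
      rw [← sub_mul]
      exact mul_mem h hWmem
    _ ≤ ∫ α in box k, ‖(D * W) α‖ :=
      (Complex.re_le_norm _).trans (norm_integral_le_integral_norm _)
    _ = _ := by
      congr 1 with α
      simp only [hW, Pi.mul_apply, Pi.pow_apply, Pi.star_apply, norm_mul, norm_pow, norm_star]
      ring

end Moments

section Conditioning

variable {k p r s t : ℕ} {X : ℝ} {a c : ℕ} {ξ η : ℤ}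

/-- When `s < m` the exponent `s - m` is truncated, but then there are no embeddings. -/
lemma card_embedding_mul_pow_sub_mul_pow (m s : ℕ) (x : ℝ) :
    Fintype.card (Fin m ↪ Fin s) * (x ^ (s - m) * x ^ s) =
      Fintype.card (Fin m ↪ Fin s) * x ^ (2 * s - m) := by
  rcases lt_or_ge s m with hsm | hms
  · have : IsEmpty (Fin m ↪ Fin s) :=
      ⟨fun σ => hsm.not_ge (by simpa using Fintype.card_le_of_embedding σ)⟩
    simp
  · rw [← pow_add, show s - m + s = 2 * s - m by omega]

lemma norm_conditioning_mul_le {ι : Type*} (S : Finset ι) (z : ℂ) (F : ℂ) (g : ι → ℂ) (r s : ℕ) :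
    ‖Fintype.card (Fin r ↪ Fin s) • (F * z ^ (s - r)) +
        Fintype.card (Fin 3 ↪ Fin s) • ((∑ v ∈ S, g v ^ 3) * z ^ (s - 3))‖ * ‖z‖ ^ s ≤
      Fintype.card (Fin r ↪ Fin s) * (‖F‖ * ‖z‖ ^ (2 * s - r)) +
        Fintype.card (Fin 3 ↪ Fin s) * ∑ v ∈ S, ‖g v‖ ^ 3 * ‖z‖ ^ (2 * s - 3) := by
  have hcube : ‖∑ v ∈ S, g v ^ 3‖ ≤ ∑ v ∈ S, ‖g v‖ ^ 3 :=
    (norm_sum_le _ _).trans_eq (by simp only [norm_pow])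
  calc
    _ ≤ (‖Fintype.card (Fin r ↪ Fin s) • (F * z ^ (s - r))‖ +
          ‖Fintype.card (Fin 3 ↪ Fin s) • ((∑ v ∈ S, g v ^ 3) * z ^ (s - 3))‖) * ‖z‖ ^ s := by
      gcongr
      exact norm_add_le _ _
    _ ≤ (Fintype.card (Fin r ↪ Fin s) * (‖F‖ * ‖z‖ ^ (s - r)) +
          Fintype.card (Fin 3 ↪ Fin s) *
            ((∑ v ∈ S, ‖g v‖ ^ 3) * ‖z‖ ^ (s - 3))) * ‖z‖ ^ s := by
      simp only [nsmul_eq_mul, norm_mul, norm_pow, Complex.norm_natCast]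
      gcongr
    _ = ‖F‖ * (Fintype.card (Fin r ↪ Fin s) * (‖z‖ ^ (s - r) * ‖z‖ ^ s)) +
          (∑ v ∈ S, ‖g v‖ ^ 3) *
            (Fintype.card (Fin 3 ↪ Fin s) * (‖z‖ ^ (s - 3) * ‖z‖ ^ s)) := by ring
    _ = _ := by
      simp only [card_embedding_mul_pow_sub_mul_pow, ← sum_mul]
      ring

/-- The first moment collects the conditioned tuples, the second those with three entries in one
residue class. -/
lemma Iab_le_moments (hp : 0 < p) (hs : 2 * r ≤ s) :
    Iab k p r s X a c ξ η ≤
      Fintype.card (Fin r ↪ Fin s) *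
        (∫ α in box k, ‖Fexp k p r X a ξ α‖ ^ 2 *
          (‖Fexp k p r X c η α‖ * ‖fexp k p X c η α‖ ^ (2 * s - r))) +
      Fintype.card (Fin 3 ↪ Fin s) * ∑ v ∈ progression ((p : ℤ) ^ (c + 1)) ((p : ℤ) ^ c) η,
        (∫ α in box k, ‖Fexp k p r X a ξ α‖ ^ 2 *
          (‖fexp k p X (c + 1) v α‖ ^ 3 * ‖fexp k p X c η α‖ ^ (2 * s - 3))) := by
  have hD := conditioning_fexp_mem_posTrig (k := k) (X := X) (c := c) (ξ := η) hp hs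
  set D := Fintype.card (Fin r ↪ Fin s) • (Fexp k p r X c η * fexp k p X c η ^ (s - r)) +
    Fintype.card (Fin 3 ↪ Fin s) • ((∑ v ∈ progression ((p : ℤ) ^ (c + 1)) ((p : ℤ) ^ c) η,
      fexp k p X (c + 1) v ^ 3) * fexp k p X c η ^ (s - 3)) with hDdef
  have hDmem : D ∈ posTrig ⊤ := by
    rw [← sub_add_cancel D (fexp k p X c η ^ s)]
    exact add_mem hD (pow_mem fexp_mem_posTrig s)
  have hDcont := continuous_of_mem_posTrig hDmem
  refine (integral_norm_sq_mul_pow_le_of_sub_mem Fexp_mem_posTrig fexp_mem_posTrig hDmem hD).trans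
    ?_
  simp only [← integral_const_mul]
  rw [← integral_finsetSum _ fun v _ => integrableOn_box (by fun_prop), ← integral_const_mul,
    ← integral_add (integrableOn_box (by fun_prop)) (integrableOn_box (by fun_prop))]
  refine integral_mono (integrableOn_box (by fun_prop)) (integrableOn_box (by fun_prop))
    fun α => ?_
  have h := mul_le_mul_of_nonneg_left (norm_conditioning_mul_le
    (progression ((p : ℤ) ^ (c + 1)) ((p : ℤ) ^ c) η) (fexp k p X c η α) (Fexp k p r X c η α)
    (fun v => fexp k p X (c + 1) v α) r s) (sq_nonneg ‖Fexp k p r X a ξ α‖)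
  simp only [hDdef, Pi.add_apply, Pi.smul_apply, Pi.mul_apply, Pi.pow_apply, Finset.sum_apply]
  refine h.trans_eq ?_
  rw [mul_add, mul_left_comm, mul_left_comm (_ ^ 2) (Fintype.card (Fin 3 ↪ Fin s) : ℝ), mul_sum]

lemma integral_Fexp_mul_fexp_pow_le (ht : 1 ≤ t) :
    ∫ α in box k, ‖Fexp k p r X a ξ α‖ ^ 2 *
        (‖Fexp k p r X c η α‖ * ‖fexp k p X c η α‖ ^ (2 * (r * t) - r)) ≤
      Kab k p r t X a c ξ η ^ (1 / (2 * t) : ℝ) *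
        Iab k p r (r * t) X a c ξ η ^ (1 - 1 / (2 * t) : ℝ) := by
  have h := integral_mul_pow_mul_pow_sub_le (μ := volume.restrict (box k)) (m := 1) (n := 2 * t)
    (w := fun α => ‖Fexp k p r X a ξ α‖ ^ 2) (u := fun α => ‖Fexp k p r X c η α‖)
    (v := fun α => ‖fexp k p X c η α‖ ^ r) one_pos (by omega) (integrableOn_box (by fun_prop))
    (integrableOn_box (by fun_prop)) (fun _ => by positivity) (fun _ => by positivity)
    fun _ => by positivity
  simpa only [pow_one, ← pow_mul, Nat.mul_sub_one, mul_assoc, mul_left_comm r 2, Nat.cast_one,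
    Nat.cast_mul, Nat.cast_ofNat, Kab, Iab] using h

lemma integral_fexp_succ_pow_mul_fexp_pow_le (hs : 2 ≤ s) (v : ℤ) :
    ∫ α in box k, ‖Fexp k p r X a ξ α‖ ^ 2 *
        (‖fexp k p X (c + 1) v α‖ ^ 3 * ‖fexp k p X c η α‖ ^ (2 * s - 3)) ≤
      Iab k p r s X a (c + 1) ξ v ^ (3 / (2 * s) : ℝ) *
        Iab k p r s X a c ξ η ^ (1 - 3 / (2 * s) : ℝ) := by
  have h := integral_mul_pow_mul_pow_sub_le (μ := volume.restrict (box k)) (m := 3) (n := 2 * s)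
    (w := fun α => ‖Fexp k p r X a ξ α‖ ^ 2) (u := fun α => ‖fexp k p X (c + 1) v α‖)
    (v := fun α => ‖fexp k p X c η α‖) three_pos (by omega) (integrableOn_box (by fun_prop))
    (integrableOn_box (by fun_prop)) (fun _ => by positivity) (fun _ => by positivity)
    fun _ => by positivity
  simpa only [mul_assoc, Nat.cast_mul, Nat.cast_ofNat, Iab] using h

lemma le_of_le_mul_rpow_mul_rpow {x y A e : ℝ} (hx : 0 ≤ x) (hy : 0 ≤ y) (hA : 0 ≤ A)
    (he : 0 < e) (h : x ≤ A * (y ^ e * x ^ (1 - e))) : x ≤ A ^ e⁻¹ * y := by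
  rcases hx.eq_or_lt with rfl | hx0
  · positivity
  have hpow : x ^ e ≤ A * y ^ e := by
    refine le_of_mul_le_mul_right ?_ (Real.rpow_pos_of_pos hx0 (1 - e))
    rwa [← Real.rpow_add hx0, add_sub_cancel, Real.rpow_one, mul_assoc]
  have hroot := Real.rpow_le_rpow (by positivity) hpow (inv_nonneg.2 he.le)
  rwa [Real.mul_rpow hA (by positivity), Real.rpow_rpow_inv hx he.ne',
    Real.rpow_rpow_inv hy he.ne'] at hroot

lemma le_max_of_le_add_rpow_mul_rpow {x y z A B e f : ℝ} (hx : 0 ≤ x) (hy : 0 ≤ y) (hz : 0 ≤ z)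
    (hA : 0 ≤ A) (hB : 0 ≤ B) (he : 0 < e) (hf : 0 < f)
    (h : x ≤ A * (y ^ e * x ^ (1 - e)) + B * (z ^ f * x ^ (1 - f))) :
    x ≤ max ((2 * A) ^ e⁻¹ * y) ((2 * B) ^ f⁻¹ * z) := by
  rcases le_total (A * (y ^ e * x ^ (1 - e))) (B * (z ^ f * x ^ (1 - f))) with hle | hle
  · exact le_max_of_le_right
      (le_of_le_mul_rpow_mul_rpow hx hz (by positivity) hf (by linarith))
  · exact le_max_of_le_left
      (le_of_le_mul_rpow_mul_rpow hx hy (by positivity) he (by linarith))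

/-- The constant of the conditioning step: each of the two moments may exceed half of
`I_{a,c}(X; ξ, η)`. -/
def condConst (r t : ℕ) : ℝ :=
  max 1 (max ((2 * (Fintype.card (Fin r ↪ Fin (r * t)) : ℝ)) ^ (2 * (t : ℝ)))
    ((2 * (Fintype.card (Fin 3 ↪ Fin (r * t)) : ℝ)) ^ (2 * ((r * t : ℕ) : ℝ) / 3)))

lemma one_le_condConst (r t : ℕ) : 1 ≤ condConst r t := le_max_left _ _

lemma Iab_le_of_conditioning (hp : 0 < p) (ht : 2 ≤ t) (hr : 1 ≤ r) (ha : a ≠ 0) (hc : c ≠ 0)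
    (hadm : IsAdmissible p a c ξ η) :
    Iab k p r (r * t) X a c ξ η ≤ condConst r t * max (Kmax k p r t X a c)
      ((p : ℝ) ^ (2 * ((r * t : ℕ) : ℝ) / 3) * Imax k p r (r * t) X a (c + 1)) := by
  have hs : 2 ≤ r * t := by nlinarith
  set I := Iab k p r (r * t) X a c ξ η
  have hI : 0 ≤ I := Iab_nonneg
  have hK : 0 ≤ Kmax k p r t X a c := Kmax_nonneg
  have hI' : 0 ≤ Imax k p r (r * t) X a (c + 1) := Imax_nonneg
  have hcube : ∀ v ∈ progression ((p : ℤ) ^ (c + 1)) ((p : ℤ) ^ c) η,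
      ∫ α in box k, ‖Fexp k p r X a ξ α‖ ^ 2 *
        (‖fexp k p X (c + 1) v α‖ ^ 3 * ‖fexp k p X c η α‖ ^ (2 * (r * t) - 3)) ≤
      Imax k p r (r * t) X a (c + 1) ^ (3 / (2 * (r * t : ℕ)) : ℝ) *
        I ^ (1 - 3 / (2 * (r * t : ℕ)) : ℝ) := by
    intro v hv
    obtain ⟨hv, hvη⟩ := mem_progression.1 hv
    refine (integral_fexp_succ_pow_mul_fexp_pow_le hs v).trans ?_
    gcongr
    exacts [Iab_nonneg, Iab_le_Imax ⟨hadm.left, hv, fun hvξ => hadm.not_modEq <|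
      (hvη.of_dvd (dvd_pow_self _ hc)).symm.trans hvξ⟩]
  have hcard : ((progression ((p : ℤ) ^ (c + 1)) ((p : ℤ) ^ c) η).card : ℝ) ≤ p := by
    rw [pow_succ]
    exact_mod_cast card_progression_mul_le (q := (p : ℤ) ^ c) (by positivity) p η
  have hmain : I ≤ Fintype.card (Fin r ↪ Fin (r * t)) *
      (Kmax k p r t X a c ^ (1 / (2 * t) : ℝ) * I ^ (1 - 1 / (2 * t) : ℝ)) +
      Fintype.card (Fin 3 ↪ Fin (r * t)) * p *
      (Imax k p r (r * t) X a (c + 1) ^ (3 / (2 * (r * t : ℕ)) : ℝ) *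
        I ^ (1 - 3 / (2 * (r * t : ℕ)) : ℝ)) := by
    refine (Iab_le_moments hp (by nlinarith)).trans ?_
    rw [mul_assoc (Fintype.card (Fin 3 ↪ Fin (r * t)) : ℝ)]
    gcongr
    · refine (integral_Fexp_mul_fexp_pow_le (by omega)).trans ?_
      gcongr
      exacts [Kab_nonneg, Kab_le_Kmax ha hadm]
    · refine (sum_le_card_nsmul _ _ _ hcube).trans ?_
      rw [nsmul_eq_mul]
      gcongr
  refine (le_max_of_le_add_rpow_mul_rpow hI hK hI' (by positivity) (by positivity)
    (by positivity) (by positivity) hmain).trans ?_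
  rw [mul_max_of_nonneg _ _ (zero_le_one.trans (one_le_condConst r t)), ← mul_assoc 2,
    Real.mul_rpow (by positivity) p.cast_nonneg, mul_assoc, one_div, inv_inv, inv_div]
  gcongr
  exacts [(le_max_left _ _).trans (le_max_right _ _), (le_max_right _ _).trans (le_max_right _ _)]

lemma Imax_le_of_conditioning (hp : 0 < p) (ht : 2 ≤ t) (hr : 1 ≤ r) (ha : a ≠ 0) (hc : c ≠ 0) :
    Imax k p r (r * t) X a c ≤ condConst r t * max (Kmax k p r t X a c)
      ((p : ℝ) ^ (2 * ((r * t : ℕ) : ℝ) / 3) * Imax k p r (r * t) X a (c + 1)) :=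
  Imax_le (mul_nonneg (zero_le_one.trans (one_le_condConst r t)) (le_max_of_le_left Kmax_nonneg))
    fun _ _ => Iab_le_of_conditioning hp ht hr ha hc

/-- Conditioning is iterated until it produces conditioned tuples, or `H` times. -/
lemma exists_Imax_le_Kmax_or (hp : 0 < p) (ht : 2 ≤ t) (hr : 1 ≤ r) (ha : a ≠ 0) (hc : c ≠ 0)
    (H : ℕ) :
    (∃ h < H, Imax k p r (r * t) X a c ≤ condConst r t ^ (h + 1) *
      ((p : ℝ) ^ (2 * ((r * t : ℕ) : ℝ) / 3)) ^ h * Kmax k p r t X a (c + h)) ∨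
    Imax k p r (r * t) X a c ≤ condConst r t ^ H *
      ((p : ℝ) ^ (2 * ((r * t : ℕ) : ℝ) / 3)) ^ H * Imax k p r (r * t) X a (c + H) := by
  have hC := zero_le_one.trans (one_le_condConst r t)
  induction H with
  | zero => simp
  | succ H ih =>
    rcases ih with ⟨h, hh, hle⟩ | hle
    · exact .inl ⟨h, by omega, hle⟩
    have hstep := Imax_le_of_conditioning (k := k) (X := X) hp ht hr ha (c := c + H) (by omega)
    have hle' := hle.trans (mul_le_mul_of_nonneg_left hstep (by positivity))
    rcases max_choice (Kmax k p r t X a (c + H))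
      ((p : ℝ) ^ (2 * ((r * t : ℕ) : ℝ) / 3) * Imax k p r (r * t) X a (c + H + 1)) with hmax | hmax
    · refine .inl ⟨H, by omega, hle'.trans_eq ?_⟩
      rw [hmax]
      ring
    · refine .inr (hle'.trans_eq ?_)
      rw [hmax, ← add_assoc]
      ring

end Conditioning

/-! ### Orthogonality for sums of characters -/

/-- The exponential sum with frequencies `φ x`, for `x ∈ S`. -/
def charSum {ι : Type*} {k : ℕ} (φ : ι → Fin k → ℤ) (S : Finset ι) : (Fin k → ℝ) → ℂ :=
  ∑ x ∈ S, torusChar k (φ x)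

section CharSum

variable {ι β γ : Type*} [DecidableEq β] [DecidableEq γ] {k : ℕ} {φ : ι → Fin k → ℤ}
  {V : AddSubgroup (Fin k → ℤ)} {W : (Fin k → ℝ) → ℂ} {w : (Fin k → ℝ) → ℝ} {S T : Finset ι}
  {m : ι → β} {B : Finset β}

lemma charSum_mem_posTrig : charSum φ S ∈ posTrig ⊤ :=
  sum_mem fun _ _ => torusChar_mem_posTrig (AddSubgroup.mem_top _)

@[fun_prop]
lemma continuous_charSum : Continuous (charSum φ S) := continuous_of_mem_posTrig charSum_mem_posTrig

lemma charSum_sub_charSum_mem_posTrig (h : S ⊆ T) : charSum φ T - charSum φ S ∈ posTrig ⊤ := by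
  rw [charSum, charSum, ← sum_sdiff h, add_sub_cancel_right]
  exact charSum_mem_posTrig

lemma charSum_eq_sum_fiber (hB : ∀ x ∈ S, m x ∈ B) :
    charSum φ S = ∑ y ∈ B, charSum φ (S.filter fun x => m x = y) :=
  (sum_fiberwise_of_maps_to hB _).symm

lemma charSum_mul_star :
    charSum φ S * star (charSum φ S) = ∑ x ∈ S, ∑ y ∈ S, torusChar k (φ x - φ y) := by
  rw [charSum, star_sum, sum_mul_sum]
  simp only [star_torusChar, sub_eq_add_neg, AddChar.map_add_eq_mul]

lemma integral_mul_norm_charSum_sq (hW : Continuous W) (hw : ∀ α, W α = (w α : ℂ)) :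
    ∫ α in box k, w α * ‖charSum φ S α‖ ^ 2 =
      ∑ x ∈ S, ∑ y ∈ S, (∫ α in box k, torusChar k (φ x - φ y) α * W α).re := by
  have hcont (n : Fin k → ℤ) : Continuous fun α => torusChar k n α * W α :=
    (continuous_torusChar n).mul hW
  rw [← integral_mul_star_re hw, mul_comm W, charSum_mul_star]
  simp only [sum_mul, Finset.sum_apply, Pi.mul_apply]
  rw [integral_finsetSum _ fun x _ => integrableOn_box
    (continuous_finsetSum _ fun y _ => hcont _), Complex.re_sum]
  refine sum_congr rfl fun x _ => ?_
  rw [integral_finsetSum _ fun y _ => integrableOn_box (hcont _), Complex.re_sum]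

lemma integral_norm_charSum_sq :
    ∫ α in box k, ‖charSum φ S α‖ ^ 2 = ((S ×ˢ S).filter fun z => φ z.1 = φ z.2).card := by
  have h := integral_mul_norm_charSum_sq (φ := φ) (S := S) (W := 1) (w := 1)
    continuous_const fun _ => by simp
  simp only [Pi.one_apply, one_mul, mul_one, integral_torusChar, sub_eq_zero] at h
  rw [h, ← sum_product', card_filter]
  push_cast
  exact sum_congr rfl fun z _ => by split_ifs <;> simp

/-- Terms in different fibers of `m` are orthogonal with respect to a weight with frequencies in
`V`. -/
lemma integral_mul_norm_charSum_sq_eq_sum_fiber (hW : W ∈ posTrig V)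
    (hw : ∀ α, W α = (w α : ℂ)) (hB : ∀ x ∈ S, m x ∈ B)
    (hm : ∀ x ∈ S, ∀ y ∈ S, φ x - φ y ∈ V → m x = m y) :
    ∫ α in box k, w α * ‖charSum φ S α‖ ^ 2 =
      ∑ y ∈ B, ∫ α in box k, w α * ‖charSum φ (S.filter fun x => m x = y) α‖ ^ 2 := by
  simp only [integral_mul_norm_charSum_sq (continuous_of_mem_posTrig hW) hw]
  rw [← sum_fiberwise_of_maps_to hB]
  refine sum_congr rfl fun y _ => sum_congr rfl fun x hx => ?_
  rw [mem_filter] at hx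
  refine (sum_subset (filter_subset _ _) fun z hz hzy => ?_).symm
  have hV : φ x - φ z ∉ V := fun hV =>
    hzy (mem_filter.2 ⟨hz, (hm x hx.1 z hz hV).symm.trans hx.2⟩)
  rw [integral_torusChar_mul_eq_zero hV hW, Complex.zero_re]

lemma mul_star_sub_sum_fiber_mem_posTrig (hST : S ⊆ T) (hB : ∀ x ∈ S, m x ∈ B) :
    charSum φ T * star (charSum φ T) - ∑ y ∈ B, charSum φ (S.filter fun x => m x = y) *
      star (charSum φ (S.filter fun x => m x = y)) ∈ posTrig ⊤ := by
  rw [← sub_add_sub_cancel _ (charSum φ S * star (charSum φ S))]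
  refine add_mem (mul_star_sub_mul_star_mem_posTrig charSum_mem_posTrig charSum_mem_posTrig
    (charSum_sub_charSum_mem_posTrig hST)) ?_
  rw [charSum_eq_sum_fiber hB, star_sum, sum_mul_sum, ← sum_sub_distrib]
  refine sum_mem fun y hy => ?_
  rw [← add_sum_erase _ _ hy, add_sub_cancel_left]
  exact sum_mem fun z _ => mul_mem charSum_mem_posTrig (star_mem_posTrig charSum_mem_posTrig)

lemma sum_integral_mul_norm_charSum_fiber_sq_le (hW : W ∈ posTrig ⊤)
    (hw : ∀ α, W α = (w α : ℂ)) (hST : S ⊆ T) (hB : ∀ x ∈ S, m x ∈ B) :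
    ∑ y ∈ B, ∫ α in box k, w α * ‖charSum φ (S.filter fun x => m x = y) α‖ ^ 2 ≤
      ∫ α in box k, w α * ‖charSum φ T α‖ ^ 2 := by
  have hsq (U : Finset ι) : W * (charSum φ U * star (charSum φ U)) ∈ posTrig ⊤ :=
    mul_mem hW (mul_mem charSum_mem_posTrig (star_mem_posTrig charSum_mem_posTrig))
  have hmem : W * (charSum φ T * star (charSum φ T)) - ∑ y ∈ B,
      W * (charSum φ (S.filter fun x => m x = y) *
        star (charSum φ (S.filter fun x => m x = y))) ∈ posTrig ⊤ := by
    rw [← mul_sum, ← mul_sub]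
    exact mul_mem hW (mul_star_sub_sum_fiber_mem_posTrig hST hB)
  have hle := integral_re_le_of_sub_mem
    (continuous_of_mem_posTrig (V := ⊤) (sum_mem fun _ _ => hsq _))
    (continuous_of_mem_posTrig (hsq T)) hmem
  simp only [Finset.sum_apply] at hle
  rw [integral_finsetSum _ fun _ _ => integrableOn_box (continuous_of_mem_posTrig (hsq _)),
    Complex.re_sum] at hle
  simpa only [integral_mul_star_re hw] using hle

lemma integral_mul_norm_charSum_sq_le_card_mul (hw0 : ∀ α, 0 ≤ w α) (hwc : Continuous w)
    (hB : ∀ x ∈ S, m x ∈ B) :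
    ∫ α in box k, w α * ‖charSum φ S α‖ ^ 2 ≤
      B.card * ∑ y ∈ B, ∫ α in box k, w α * ‖charSum φ (S.filter fun x => m x = y) α‖ ^ 2 := by
  rw [← integral_finsetSum _ fun y _ => integrableOn_box (by fun_prop), ← integral_const_mul]
  refine integral_mono (integrableOn_box (by fun_prop)) (integrableOn_box (by fun_prop))
    fun α => ?_
  dsimp only
  rw [charSum_eq_sum_fiber hB, Finset.sum_apply, ← mul_sum, mul_left_comm]
  refine mul_le_mul_of_nonneg_left ?_ (hw0 α)
  exact (pow_le_pow_left₀ (norm_nonneg _) (norm_sum_le _ _) 2).trans sq_sum_le_card_mul_sum_sq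

lemma integral_mul_norm_charSum_sq_le_mul_sum_of_card_le (hW : W ∈ posTrig V)
    (hw : ∀ α, W α = (w α : ℂ)) (hw0 : ∀ α, 0 ≤ w α) {R : ι → γ} {T : γ → Finset ι} {L : ℕ}
    (hm : ∀ x ∈ S, ∀ y ∈ S, φ x - φ y ∈ V → m x = m y)
    (hL : ∀ y, ((S.filter fun x => m x = y).image R).card ≤ L) (hT : ∀ x ∈ S, x ∈ T (R x)) :
    ∫ α in box k, w α * ‖charSum φ S α‖ ^ 2 ≤
      L * ∑ ω ∈ S.image R, ∫ α in box k, w α * ‖charSum φ (T ω) α‖ ^ 2 := by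
  have hwc : Continuous w := by
    simpa only [Function.comp_def, hw, Complex.ofReal_re] using
      Complex.continuous_re.comp (continuous_of_mem_posTrig hW)
  have hnonneg (U : Finset ι) : 0 ≤ ∫ α in box k, w α * ‖charSum φ U α‖ ^ 2 :=
    integral_nonneg fun α => mul_nonneg (hw0 α) (by positivity)
  have hfiber (y : β) :
      ∫ α in box k, w α * ‖charSum φ (S.filter fun x => m x = y) α‖ ^ 2 ≤
        L * ∑ ω ∈ S.image R, ∫ α in box k,
          w α * ‖charSum φ ((S.filter fun x => R x = ω).filter fun x => m x = y) α‖ ^ 2 := by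
    refine (integral_mul_norm_charSum_sq_le_card_mul hw0 hwc
      fun x hx => mem_image_of_mem R hx).trans ?_
    simp only [filter_comm (fun x => m x = y)]
    refine mul_le_mul (Nat.cast_le.2 (hL y)) ?_ (sum_nonneg fun _ _ => hnonneg _) L.cast_nonneg
    exact sum_le_sum_of_subset_of_nonneg (image_subset_image (filter_subset _ _))
      fun _ _ _ => hnonneg _
  calc ∫ α in box k, w α * ‖charSum φ S α‖ ^ 2
      = ∑ y ∈ S.image m, ∫ α in box k, w α * ‖charSum φ (S.filter fun x => m x = y) α‖ ^ 2 :=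
        integral_mul_norm_charSum_sq_eq_sum_fiber hW hw (fun x hx => mem_image_of_mem m hx) hm
    _ ≤ L * ∑ ω ∈ S.image R, ∑ y ∈ S.image m, ∫ α in box k,
          w α * ‖charSum φ ((S.filter fun x => R x = ω).filter fun x => m x = y) α‖ ^ 2 := by
        rw [sum_comm, mul_sum]
        exact sum_le_sum fun y _ => hfiber y
    _ ≤ L * ∑ ω ∈ S.image R, ∫ α in box k, w α * ‖charSum φ (T ω) α‖ ^ 2 := by
        refine mul_le_mul_of_nonneg_left (sum_le_sum fun ω _ => ?_) L.cast_nonneg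
        refine sum_integral_mul_norm_charSum_fiber_sq_le (posTrig_le_top hW) hw ?_
          fun x hx => mem_image_of_mem m (filter_subset _ _ hx)
        intro x hx
        obtain ⟨hxS, rfl⟩ := mem_filter.1 hx
        exact hT x hxS

/-- If the elements of `S` whose frequencies agree modulo `V` fall into at most `L` classes under
`R`, then Cauchy's inequality inside the cosets of `V` costs only a factor `L`. -/
lemma integral_mul_norm_charSum_sq_le_mul_sum (hW : W ∈ posTrig V)
    (hw : ∀ α, W α = (w α : ℂ)) (hw0 : ∀ α, 0 ≤ w α) {R : ι → γ} {T : γ → Finset ι} {L : ℕ}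
    (hL : ∀ U ⊆ S, (∀ x ∈ U, ∀ y ∈ U, φ x - φ y ∈ V) → (U.image R).card ≤ L)
    (hT : ∀ x ∈ S, x ∈ T (R x)) :
    ∫ α in box k, w α * ‖charSum φ S α‖ ^ 2 ≤
      L * ∑ ω ∈ S.image R, ∫ α in box k, w α * ‖charSum φ (T ω) α‖ ^ 2 := by
  have hcoset {x y : ι} : (φ x : (Fin k → ℤ) ⧸ V) = φ y ↔ φ x - φ y ∈ V :=
    QuotientAddGroup.eq_iff_sub_mem
  refine integral_mul_norm_charSum_sq_le_mul_sum_of_card_le (m := fun x => (φ x : _ ⧸ V))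
    hW hw hw0 (fun x _ y _ => hcoset.2) (fun c => hL _ (filter_subset _ _) ?_) hT
  exact fun x hx y hy => hcoset.1 ((mem_filter.1 hx).2.trans (mem_filter.1 hy).2.symm)

end CharSum

/-! ### Solutions of the Vinogradov system -/

/-- The vector of power sums `∑ xᵢ, …, ∑ xᵢ^k`, the frequency of a tuple in a product of Vinogradov
sums. -/
def powSum (k : ℕ) {ι : Type*} [Fintype ι] (x : ι → ℤ) : Fin k → ℤ := ∑ i, powVec k (x i)

section Vinogradov

variable {ι : Type*} [Fintype ι] {k : ℕ}

lemma powSum_apply (x : ι → ℤ) (j : Fin k) : powSum k x j = ∑ i, x i ^ ((j : ℕ) + 1) := by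
  simp [powSum, powVec, Finset.sum_apply]

lemma powSum_eq_iff {x y : ι → ℤ} :
    powSum k x = powSum k y ↔ ∀ j ≤ k, ∑ i, x i ^ j = ∑ i, y i ^ j := by
  constructor
  · rintro h (_ | j) hj
    · simp
    · simpa only [powSum_apply] using congrFun h ⟨j, hj⟩
  · refine fun h => funext fun j => ?_
    rw [powSum_apply, powSum_apply, h _ j.2]

lemma powSum_add_const {x y : ι → ℤ} (h : powSum k x = powSum k y) (d : ℤ) :
    powSum k (fun i => x i + d) = powSum k (fun i => y i + d) := by
  rw [powSum_eq_iff] at h ⊢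
  intro j hj
  simp only [add_pow]
  rw [sum_comm, sum_comm (s := univ (α := ι))]
  refine sum_congr rfl fun m hm => ?_
  rw [← sum_mul, ← sum_mul, ← sum_mul, ← sum_mul, h m (by have := mem_range.1 hm; omega)]

lemma powSum_of_powSum_mul {x y : ι → ℤ} {q : ℤ} (hq : q ≠ 0)
    (h : powSum k (fun i => q * x i) = powSum k (fun i => q * y i)) : powSum k x = powSum k y := by
  rw [powSum_eq_iff] at h ⊢
  intro j hj
  have hj := h j hj
  simp only [mul_pow, ← mul_sum] at hj
  exact mul_left_cancel₀ (pow_ne_zero j hq) hj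

/-- The solutions of the Vinogradov system of degree `k` in `2 s` variables taken from `A`. -/
def vinogradovSolutions (s k : ℕ) (A : Finset ℤ) : Finset ((Fin s → ℤ) × (Fin s → ℤ)) :=
  {z ∈ (Fintype.piFinset fun _ => A) ×ˢ (Fintype.piFinset fun _ => A) |
    powSum k z.1 = powSum k z.2}

lemma mem_vinogradovSolutions {s : ℕ} {A : Finset ℤ} {z : (Fin s → ℤ) × (Fin s → ℤ)} :
    z ∈ vinogradovSolutions s k A ↔
      ((∀ i, z.1 i ∈ A) ∧ ∀ i, z.2 i ∈ A) ∧ powSum k z.1 = powSum k z.2 := by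
  rw [vinogradovSolutions, mem_filter, mem_product, Fintype.mem_piFinset, Fintype.mem_piFinset]

lemma Jcount_eq_card (s k : ℕ) (X : ℝ) :
    Jcount s k X = (vinogradovSolutions s k (Icc 1 ⌊X⌋)).card := by
  rw [Jcount, ← Set.ncard_coe_finset]
  congr 1
  ext z
  simp only [Set.mem_ofPred_eq, mem_coe, mem_vinogradovSolutions, powSum_eq_iff, mem_Icc,
    Int.le_floor, and_assoc, sum_sub_distrib, sub_eq_zero]
  refine and_congr_right fun _ => and_congr_right fun _ => ⟨fun h => ?_, fun h j hj => h j hj.2⟩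
  rintro (_ | j) hj
  · simp
  · exact h _ ⟨by omega, hj⟩

lemma Jcount_mono (s k : ℕ) {X Y : ℝ} (h : X ≤ Y) : Jcount s k X ≤ Jcount s k Y := by
  rw [Jcount_eq_card, Jcount_eq_card]
  refine card_le_card fun z hz => ?_
  have hsub : Icc 1 ⌊X⌋ ⊆ Icc 1 ⌊Y⌋ := Icc_subset_Icc_right (Int.floor_mono h)
  rw [mem_vinogradovSolutions] at hz ⊢
  exact ⟨⟨fun i => hsub (hz.1.1 i), fun i => hsub (hz.1.2 i)⟩, hz.2⟩

lemma floor_pow_le_Jcount (s k : ℕ) (X : ℝ) : ⌊X⌋₊ ^ s ≤ Jcount s k X := by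
  have hcard : (Fintype.piFinset fun _ : Fin s => Icc (1 : ℤ) ⌊X⌋).card = ⌊X⌋₊ ^ s := by
    simp [← Int.floor_toNat]
  rw [Jcount_eq_card, ← hcard]
  refine card_le_card_of_injOn (fun x => (x, x)) (fun x hx => ?_)
    fun x _ y _ h => congrArg Prod.fst h
  have hx := Fintype.mem_piFinset.1 (mem_coe.1 hx)
  exact mem_coe.2 (mem_vinogradovSolutions.2 ⟨⟨hx, hx⟩, rfl⟩)

/-- The Vinogradov system is invariant under translation and dilation, so restricting the variables
to a progression modulo `q` only shortens their range. -/
lemma card_vinogradovSolutions_progression_le {q : ℤ} (hq : 0 < q) (s k : ℕ) (n ξ : ℤ) :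
    (vinogradovSolutions s k (progression n q ξ)).card ≤
      (vinogradovSolutions s k (Icc 1 (n / q + 1))).card := by
  have hmul : ∀ x ∈ progression n q ξ, q * (x / q + 1) = x + (q - ξ % q) := by
    intro x hx
    have := Int.mul_ediv_add_emod x q
    rw [(mem_progression.1 hx).2] at this
    linarith
  have hrange : ∀ x ∈ progression n q ξ, x / q + 1 ∈ Icc 1 (n / q + 1) := by
    intro x hx
    obtain ⟨⟨hx1, hxn⟩, -⟩ := mem_progression.1 hx
    have hnonneg := Int.ediv_nonneg (by omega : 0 ≤ x) hq.le
    have hle := Int.ediv_le_ediv hq hxn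
    exact mem_Icc.2 ⟨by omega, by omega⟩
  have hinj : ∀ x ∈ progression n q ξ, ∀ y ∈ progression n q ξ,
      x / q + 1 = y / q + 1 → x = y := by
    intro x hx y hy hxy
    have hx := hmul x hx
    rw [hxy, hmul y hy] at hx
    linarith
  refine card_le_card_of_injOn (fun z => (fun i => z.1 i / q + 1, fun i => z.2 i / q + 1))
    (fun z hz => ?_) fun z hz w hw hzw => ?_
  · obtain ⟨⟨h1, h2⟩, heq⟩ := mem_vinogradovSolutions.1 hz
    refine mem_vinogradovSolutions.2
      ⟨⟨fun i => hrange _ (h1 i), fun i => hrange _ (h2 i)⟩, powSum_of_powSum_mul hq.ne' ?_⟩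
    simp only [hmul _ (h1 _), hmul _ (h2 _)]
    exact powSum_add_const heq _
  · obtain ⟨⟨hz1, hz2⟩, -⟩ := mem_vinogradovSolutions.1 hz
    obtain ⟨⟨hw1, hw2⟩, -⟩ := mem_vinogradovSolutions.1 hw
    obtain ⟨hzw1, hzw2⟩ := Prod.ext_iff.1 hzw
    exact Prod.ext (funext fun i => hinj _ (hz1 i) _ (hw1 i) (congrFun hzw1 i))
      (funext fun i => hinj _ (hz2 i) _ (hw2 i) (congrFun hzw2 i))

variable {p r c : ℕ} {X : ℝ}

lemma prod_fexp_eq_charSum [DecidableEq ι] (v : ι → ℤ) : ∏ i, fexp k p X c (v i) =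
    charSum (powSum k) (Fintype.piFinset fun i => progression ⌊X⌋ ((p : ℤ) ^ c) (v i)) := by
  simp only [fexp_eq_sum, charSum, powSum, addChar_map_sum]
  rw [← prod_univ_sum (fun i => progression ⌊X⌋ ((p : ℤ) ^ c) (v i))
    (fun _ x => torusChar k (powVec k x))]

lemma integral_norm_fexp_pow_le_Jcount (hp : 0 < p) (X : ℝ) (c : ℕ) (ξ : ℤ) (s : ℕ) :
    ∫ α in box k, ‖fexp k p X c ξ α‖ ^ (2 * s) ≤ Jcount s k (X / (p : ℝ) ^ c + 1) := by
  have hpow : fexp k p X c ξ ^ s = charSum (powSum k)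
      (Fintype.piFinset fun _ : Fin s => progression ⌊X⌋ ((p : ℤ) ^ c) ξ) := by
    simpa using prod_fexp_eq_charSum (ι := Fin s) fun _ => ξ
  have hfloor : ⌊X / (p : ℝ) ^ c + 1⌋ = ⌊X⌋ / (p : ℤ) ^ c + 1 := by
    rw [Int.floor_add_one]
    exact_mod_cast congrArg (· + 1) (Int.floor_div_natCast X (p ^ c))
  calc ∫ α in box k, ‖fexp k p X c ξ α‖ ^ (2 * s)
      = ∫ α in box k, ‖(fexp k p X c ξ ^ s) α‖ ^ 2 := by
        simp only [Pi.pow_apply, norm_pow, ← pow_mul, mul_comm s]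
    _ = (vinogradovSolutions s k (progression ⌊X⌋ ((p : ℤ) ^ c) ξ)).card := by
        rw [hpow, integral_norm_charSum_sq, vinogradovSolutions]
    _ ≤ Jcount s k (X / (p : ℝ) ^ c + 1) := by
        rw [Jcount_eq_card, hfloor]
        exact_mod_cast card_vinogradovSolutions_progression_le (by positivity) s k ⌊X⌋ ξ

end Vinogradov

/-! ### Efficient congruencing -/

/-- The linear form `n ↦ ∑ l, (j+1).choose (l+1) * (-η)^(j-l) * n l`. It maps the vector of powers
of `x` to `(x - η)^(j+1) - (-η)^(j+1)`; terms with truncated exponent `j - l` have coefficient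
zero. -/
def shiftForm (k : ℕ) (η : ℤ) (j : ℕ) : (Fin k → ℤ) →ₗ[ℤ] ℤ :=
  ∑ l : Fin k, (((j + 1).choose ((l : ℕ) + 1) : ℤ) * (-η) ^ (j - (l : ℕ))) • LinearMap.proj l

/-- The frequencies whose shifted coordinate of degree `j` is divisible by `p ^ (j * b)`, for
`1 ≤ j ≤ k`. -/
def shiftLattice (k p b : ℕ) (η : ℤ) : AddSubgroup (Fin k → ℤ) :=
  ⨅ j : Fin k, (AddSubgroup.zmultiples ((p : ℤ) ^ (((j : ℕ) + 1) * b))).comap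
    (shiftForm k η j).toAddMonoidHom

section ShiftLattice

variable {ι : Type*} [Fintype ι] {k p b : ℕ} {η : ℤ}

lemma shiftForm_powVec (η : ℤ) {j : ℕ} (hj : j < k) (x : ℤ) :
    shiftForm k η j (powVec k x) = (x - η) ^ (j + 1) - (-η) ^ (j + 1) := by
  let term (l : ℕ) : ℤ := (j + 1).choose (l + 1) * (-η) ^ (j - l) * x ^ (l + 1)
  calc shiftForm k η j (powVec k x) = ∑ l : Fin k, term l := by
        simp [shiftForm, powVec, term, LinearMap.sum_apply]
    _ = ∑ l ∈ range k, term l := Fin.sum_univ_eq_sum_range term k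
    _ = ∑ l ∈ range (j + 1), term l := by
        refine (sum_subset (range_mono (by omega)) fun l _ hl => ?_).symm
        rw [mem_range, not_lt] at hl
        simp [term, Nat.choose_eq_zero_of_lt (by omega : j + 1 < l + 1)]
    _ = (x - η) ^ (j + 1) - (-η) ^ (j + 1) := by
        rw [sub_eq_add_neg x η, add_pow, sum_range_succ' _ (j + 1)]
        simp only [pow_zero, one_mul, Nat.choose_zero_right, Nat.cast_one, mul_one, Nat.sub_zero,
          add_sub_cancel_right, Nat.add_sub_add_right, term]
        exact sum_congr rfl fun l _ => by ring

lemma shiftForm_powSum_sub (η : ℤ) {j : ℕ} (hj : j < k) (x y : ι → ℤ) :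
    shiftForm k η j (powSum k x - powSum k y) =
      ∑ i, (x i - η) ^ (j + 1) - ∑ i, (y i - η) ^ (j + 1) := by
  simp only [map_sub, powSum, map_sum, shiftForm_powVec η hj, sum_sub_distrib]
  ring

lemma powSum_sub_mem_shiftLattice_iff {x y : ι → ℤ} :
    powSum k x - powSum k y ∈ shiftLattice k p b η ↔ ∀ j, 1 ≤ j → j ≤ k →
      ∑ i, (x i - η) ^ j ≡ ∑ i, (y i - η) ^ j [ZMOD (p : ℤ) ^ (j * b)] := by
  have hform (j : Fin k) := shiftForm_powSum_sub η j.2 x y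
  simp only [shiftLattice, AddSubgroup.mem_iInf, AddSubgroup.mem_comap,
    LinearMap.toAddMonoidHom_coe, hform, Int.mem_zmultiples_iff]
  constructor
  · rintro h (_ | j) hj1 hjk
    · omega
    · exact (Int.modEq_iff_dvd.2 (h ⟨j, hjk⟩)).symm
  · exact fun h j => (h _ (by omega) j.2).symm.dvd

end ShiftLattice

section Congruencing

variable {k p r t a b c : ℕ} {X : ℝ} {ξ η : ℤ}

lemma exists_charSum_eq_sum_prod_fexp {S : Finset (Fin r → ℤ)}
    (hS : ∀ v ∈ S, ∀ i, v i ∈ progression ((p : ℤ) ^ c) ((p : ℤ) ^ a) ξ) :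
    ∃ T : Finset (Fin r → ℤ), ∑ v ∈ S, ∏ i, fexp k p X c (v i) = charSum (powSum k) T ∧
      ∀ x ∈ T, ∃ v ∈ S, ∀ i, x i ∈ progression ⌊X⌋ ((p : ℤ) ^ c) (v i) := by
  refine ⟨S.biUnion fun v => Fintype.piFinset fun i => progression ⌊X⌋ ((p : ℤ) ^ c) (v i), ?_,
    by simp only [mem_biUnion, Fintype.mem_piFinset, imp_self, implies_true]⟩
  rw [charSum, sum_biUnion]
  · exact sum_congr rfl fun v _ => prod_fexp_eq_charSum v
  · refine fun v hv w hw hvw => disjoint_left.2 fun x hxv hxw => hvw (funext fun i => ?_)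
    have hxv := (mem_progression.1 (Fintype.mem_piFinset.1 hxv i)).2
    have hxw := (mem_progression.1 (Fintype.mem_piFinset.1 hxw i)).2
    exact eq_of_modEq_of_mem_Icc (mem_progression.1 (hS v hv i)).1
      (mem_progression.1 (hS w hw i)).1 (hxv.symm.trans hxw)

lemma eq_of_modEq_of_refines {v x : Fin r → ℤ}
    (hv : ∀ i, v i ∈ progression ((p : ℤ) ^ (a + 1)) ((p : ℤ) ^ a) ξ)
    (hinj : Function.Injective v)
    (hx : ∀ i, x i ∈ progression ⌊X⌋ ((p : ℤ) ^ (a + 1)) (v i)) (i j : Fin r)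
    (hij : x i ≡ x j [ZMOD (p : ℤ) ^ (a + 1)]) : i = j :=
  hinj <| eq_of_modEq_of_mem_Icc (mem_progression.1 (hv i)).1 (mem_progression.1 (hv j)).1
    ((mem_progression.1 (hx i)).2.symm.trans (hij.trans (mem_progression.1 (hx j)).2))

lemma exists_charSum_eq_Fexp (k p r : ℕ) (X : ℝ) (a : ℕ) (ξ : ℤ) :
    ∃ T : Finset (Fin r → ℤ), Fexp k p r X a ξ = charSum (powSum k) T ∧ ∀ x ∈ T,
      (∀ i, x i ∈ progression ⌊X⌋ ((p : ℤ) ^ a) ξ) ∧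
      ∀ i j, x i ≡ x j [ZMOD (p : ℤ) ^ (a + 1)] → i = j := by
  have hmem {v : Fin r → ℤ} (hv : v ∈ (Fintype.piFinset fun _ : Fin r =>
      progression ((p : ℤ) ^ (a + 1)) ((p : ℤ) ^ a) ξ).filter Function.Injective) (i) :=
    Fintype.mem_piFinset.1 (mem_filter.1 hv).1 i
  obtain ⟨T, hT, hx⟩ := exists_charSum_eq_sum_prod_fexp (k := k) (X := X) fun v hv => hmem hv
  refine ⟨T, Fexp_eq_sum.trans hT, fun x hxT => ?_⟩
  obtain ⟨v, hv, hxv⟩ := hx x hxT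
  refine ⟨fun i => ?_, eq_of_modEq_of_refines (hmem hv) (mem_filter.1 hv).2 hxv⟩
  obtain ⟨hrange, hmod⟩ := mem_progression.1 (hxv i)
  exact mem_progression.2 ⟨hrange, (hmod.of_dvd (pow_dvd_pow _ a.le_succ)).trans
    (mem_progression.1 (hmem hv i)).2⟩

lemma exists_charSum_eq_Ftilde (k p r : ℕ) (X : ℝ) (η : ℤ) :
    ∃ T : Finset (Fin r → ℤ), Ftilde k p r X η = charSum (powSum k) T ∧
      ∀ x ∈ T, IsConditioned p 0 0 η x ∧ ∀ i, 1 ≤ x i ∧ x i ≤ ⌊X⌋ := by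
  set S : Finset (Fin r → ℤ) :=
    {v ∈ Fintype.piFinset fun _ => progression ((p : ℤ) ^ (0 + 1)) ((p : ℤ) ^ 0) 0 |
      Function.Injective v ∧ ∀ i, ¬ v i ≡ η [ZMOD p]} with hS
  have hXi : XiTilde p r η = (S : Set (Fin r → ℤ)) := by
    ext v
    simp only [XiTilde, Set.mem_ofPred_eq, mem_XiSet_iff, hS, coe_filter, Fintype.mem_piFinset,
      and_assoc]
  have hmem {v : Fin r → ℤ} (hv : v ∈ S) (i) := Fintype.mem_piFinset.1 (mem_filter.1 hv).1 i
  obtain ⟨T, hT, hx⟩ := exists_charSum_eq_sum_prod_fexp (k := k) (X := X) fun v hv => hmem hv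
  refine ⟨T, hT ▸ funext fun α => ?_, fun x hxT => ?_⟩
  · rw [Ftilde, hXi, finsum_mem_coe_finset]
    simp
  · obtain ⟨v, hv, hxv⟩ := hx x hxT
    obtain ⟨-, hinj, hη⟩ := mem_filter.1 hv
    refine ⟨⟨fun i => by simp [Int.modEq_one], eq_of_modEq_of_refines (hmem hv) hinj hxv,
      fun i hi => hη i ?_⟩, fun i => (mem_progression.1 (hxv i)).1⟩
    exact ((mem_progression.1 (hxv i)).2.of_dvd (by simp)).symm.trans hi

lemma Fexp_mul_star_mem_posTrig (k p r : ℕ) (X : ℝ) (b : ℕ) (η : ℤ) :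
    Fexp k p r X b η * star (Fexp k p r X b η) ∈ posTrig (shiftLattice k p b η) := by
  obtain ⟨T, hT, hx⟩ := exists_charSum_eq_Fexp k p r X b η
  have hpow {x : Fin r → ℤ} (hxT : x ∈ T) (j : ℕ) :
      ∑ i, (x i - η) ^ j ≡ ∑ _ : Fin r, 0 ^ j [ZMOD (p : ℤ) ^ (j * b)] := by
    refine Int.ModEq.sum fun i _ => ?_
    have hdvd : (p : ℤ) ^ b ∣ x i - η := (mem_progression.1 ((hx x hxT).1 i)).2.symm.dvd
    rcases j.eq_zero_or_pos with rfl | hj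
    · simp
    · rw [zero_pow hj.ne', mul_comm, pow_mul]
      exact Int.modEq_zero_iff_dvd.2 (pow_dvd_pow_of_dvd hdvd j)
  rw [hT, charSum_mul_star]
  exact sum_mem fun x hx => sum_mem fun y hy => torusChar_mem_posTrig <|
    powSum_sub_mem_shiftLattice_iff.2 fun j _ _ => (hpow hx j).trans (hpow hy j).symm

lemma card_image_residue_le [Fact p.Prime] (hkp : k < p) (ht1 : k ≤ 2 * t + 1) (ht2 : t ≤ k)
    (ht : 1 ≤ t) (hr1 : 1 ≤ r) (hr2 : r ≤ k) (hab : a < b) (hta : t * a ≤ b)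
    (S : Finset (Fin r → ℤ)) (hS : ∀ x ∈ S, IsConditioned p a ξ η x)
    (hpow : ∀ x ∈ S, ∀ y ∈ S, powSum k x - powSum k y ∈ shiftLattice k p b η) :
    (S.image fun x i => residue ((p : ℤ) ^ (t * b)) (x i)).card ≤
      r.factorial * p ^ (muN k r t * b + nuN k r t * a) := by
  set R : (Fin r → ℤ) → Fin r → ℤ := fun x i => residue ((p : ℤ) ^ (t * b)) (x i)
  obtain ⟨U, hUS, hinj, himg⟩ := Finset.exists_subset_injOn_image_eq_of_surjOn
    (S : Set (Fin r → ℤ)) (S.image R) (by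
      rw [coe_image]
      exact Set.surjOn_image R S)
  rw [← himg, card_image_of_injOn hinj]
  refine card_le_of_isConditioned hkp ht1 ht2 ht hr1 hr2 hab hta U (fun x hx => hS x (hUS hx))
    (fun x hx y hy => powSum_sub_mem_shiftLattice_iff.1 (hpow x (hUS hx) y (hUS hy)))
    fun x hx y hy hxy => hinj hx hy (funext fun i => ?_)
  simp only [R, residue, ((hxy i).sub_right 1).eq]

lemma integral_mul_norm_charSum_powSum_sq_le [Fact p.Prime] (hkp : k < p) (ht1 : k ≤ 2 * t + 1)
    (ht2 : t ≤ k) (ht : 1 ≤ t) (hr1 : 1 ≤ r) (hr2 : r ≤ k) (hab : a < b) (hta : t * a ≤ b)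
    {S : Finset (Fin r → ℤ)} (hS : ∀ x ∈ S, IsConditioned p a ξ η x)
    (hX : ∀ x ∈ S, ∀ i, 1 ≤ x i ∧ x i ≤ ⌊X⌋) {W : (Fin k → ℝ) → ℂ}
    (hW : W ∈ posTrig (shiftLattice k p b η)) {w : (Fin k → ℝ) → ℝ}
    (hw : ∀ α, W α = (w α : ℂ)) (hw0 : ∀ α, 0 ≤ w α) :
    ∫ α in box k, w α * ‖charSum (powSum k) S α‖ ^ 2 ≤
      (r.factorial * p ^ (muN k r t * b + nuN k r t * a) : ℕ) *
      ∑ ω ∈ S.image fun x i => residue ((p : ℤ) ^ (t * b)) (x i),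
        ∫ α in box k, w α * ‖∏ i, fexp k p X (t * b) (ω i) α‖ ^ 2 := by
  simp only [← Finset.prod_apply, prod_fexp_eq_charSum]
  refine integral_mul_norm_charSum_sq_le_mul_sum hW hw hw0 (fun U hUS hU => ?_) fun x hx => ?_
  · exact card_image_residue_le hkp ht1 ht2 ht hr1 hr2 hab hta U (fun x hx => hS x (hUS hx)) hU
  · exact Fintype.mem_piFinset.2 fun i =>
      mem_progression.2 ⟨hX x hx i, (residue_modEq _ _).symm⟩

lemma card_image_residue_le_pow (hp : 0 < p) {n : ℕ} (han : a ≤ n) {S : Finset (Fin r → ℤ)}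
    (hS : ∀ x ∈ S, ∀ i, x i ≡ ξ [ZMOD (p : ℤ) ^ a]) :
    (S.image fun x i => residue ((p : ℤ) ^ n) (x i)).card ≤ (p ^ (n - a)) ^ r := by
  have hpz : (0 : ℤ) < p := Nat.cast_pos.2 hp
  have hsub : (S.image fun x i => residue ((p : ℤ) ^ n) (x i)) ⊆
      Fintype.piFinset fun _ : Fin r => progression ((p : ℤ) ^ n) ((p : ℤ) ^ a) ξ := by
    refine image_subset_iff.2 fun x hx => Fintype.mem_piFinset.2 fun i => ?_
    exact residue_mem_progression (by positivity) (pow_dvd_pow _ han) (hS x hx i)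
  have hcard := card_progression_mul_le (pow_pos hpz a) (p ^ (n - a)) ξ
  rw [Nat.cast_pow, ← pow_add, Nat.add_sub_cancel' han] at hcard
  calc _ ≤ _ := card_le_card hsub
    _ = (progression ((p : ℤ) ^ n) ((p : ℤ) ^ a) ξ).card ^ r := by
      rw [Fintype.card_piFinset, prod_const, card_univ, Fintype.card_fin]
    _ ≤ _ := Nat.pow_le_pow_left hcard r

lemma norm_prod_sq_le_sum {ι : Type*} [Fintype ι] [Nonempty ι] (z : ι → ℂ) :
    ‖∏ i, z i‖ ^ 2 ≤ ∑ i, ‖z i‖ ^ (2 * Fintype.card ι) := by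
  obtain ⟨j, hj⟩ := Finite.exists_max fun i => ‖z i‖
  have hprod : ‖∏ i, z i‖ ≤ ‖z j‖ ^ Fintype.card ι := by
    rw [norm_prod, ← card_univ, ← prod_const]
    exact prod_le_prod (fun i _ => norm_nonneg _) fun i _ => hj i
  calc ‖∏ i, z i‖ ^ 2 ≤ (‖z j‖ ^ Fintype.card ι) ^ 2 := by gcongr
    _ = ‖z j‖ ^ (2 * Fintype.card ι) := by rw [← pow_mul, mul_comm]
    _ ≤ _ := single_le_sum (f := fun i => ‖z i‖ ^ (2 * Fintype.card ι))
      (fun i _ => by positivity) (mem_univ j)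

lemma integral_norm_Fexp_pow_le_Jcount (hp : 0 < p) (X : ℝ) (b : ℕ) (η : ℤ) (n : ℕ) :
    ∫ α in box k, ‖Fexp k p r X b η α‖ ^ (2 * n) ≤ Jcount (r * n) k (X / (p : ℝ) ^ b + 1) := by
  have h := integral_norm_pow_le_of_sub_mem Fexp_mem_posTrig (pow_mem fexp_mem_posTrig r)
    (fexp_pow_sub_Fexp_mem_posTrig (k := k) (X := X) (c := b) (ξ := η) hp) n
  simp only [Pi.pow_apply, norm_pow, ← pow_mul, mul_left_comm r] at h
  exact h.trans (integral_norm_fexp_pow_le_Jcount hp X b η (r * n))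

lemma integral_norm_Fexp_mul_norm_fexp_le (hp : 0 < p) (ht : 2 ≤ t) (X : ℝ) (b c : ℕ)
    (η ζ : ℤ) :
    ∫ α in box k, ‖Fexp k p r X b η α‖ ^ (2 * t) * ‖fexp k p X c ζ α‖ ^ (2 * r) ≤
      Iab k p r (r * t) X b c η ζ ^ (1 / (t : ℝ)) *
        (Jcount (r * (t + 1)) k (X / (p : ℝ) ^ b + 1) : ℝ) ^ (1 - 1 / (t : ℝ)) := by
  have hexp : (0 : ℝ) ≤ 1 - 1 / t := sub_nonneg.2 (by
    rw [div_le_one (by positivity)]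
    exact_mod_cast (by omega : 1 ≤ t))
  have h := integral_mul_pow_mul_pow_sub_le (μ := volume.restrict (box k))
    (w := fun α => ‖Fexp k p r X b η α‖ ^ 2) (u := fun α => ‖fexp k p X c ζ α‖ ^ (2 * r))
    (v := fun α => ‖Fexp k p r X b η α‖ ^ 2) one_pos (by omega : 1 < t)
    (integrableOn_box (by fun_prop)) (integrableOn_box (by fun_prop))
    (fun _ => by positivity) (fun _ => by positivity) fun _ => by positivity
  have hleft (α) : ‖Fexp k p r X b η α‖ ^ 2 * (‖fexp k p X c ζ α‖ ^ (2 * r)) ^ 1 *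
      (‖Fexp k p r X b η α‖ ^ 2) ^ (t - 1) =
      ‖Fexp k p r X b η α‖ ^ (2 * t) * ‖fexp k p X c ζ α‖ ^ (2 * r) := by
    rw [pow_one, mul_right_comm, ← pow_succ', Nat.sub_add_cancel (by omega), ← pow_mul]
  simp only [hleft, Nat.cast_one] at h
  simp only [← pow_mul, ← pow_add, mul_assoc, ← mul_one_add, add_comm 1 t] at h
  exact h.trans (mul_le_mul_of_nonneg_left (Real.rpow_le_rpow
    (integral_nonneg fun _ => by positivity) (integral_norm_Fexp_pow_le_Jcount hp X b η (t + 1))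
    hexp) (Real.rpow_nonneg Iab_nonneg _))

lemma integral_norm_Fexp_mul_norm_prod_fexp_le (hp : 0 < p) (ht : 2 ≤ t) (hr : 1 ≤ r)
    {ω : Fin r → ℤ} (hω : ∀ i, IsAdmissible p b c η (ω i)) :
    ∫ α in box k, ‖Fexp k p r X b η α‖ ^ (2 * t) * ‖∏ i, fexp k p X c (ω i) α‖ ^ 2 ≤
      r * (Imax k p r (r * t) X b c ^ (1 / (t : ℝ)) *
        (Jcount (r * (t + 1)) k (X / (p : ℝ) ^ b + 1) : ℝ) ^ (1 - 1 / (t : ℝ))) := by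
  have : Nonempty (Fin r) := ⟨⟨0, hr⟩⟩
  set F := Fexp k p r X b η
  calc ∫ α in box k, ‖F α‖ ^ (2 * t) * ‖∏ i, fexp k p X c (ω i) α‖ ^ 2
      ≤ ∫ α in box k, ∑ i, ‖F α‖ ^ (2 * t) * ‖fexp k p X c (ω i) α‖ ^ (2 * r) := by
        refine setIntegral_mono (integrableOn_box (by fun_prop)) (integrableOn_box (by fun_prop))
          fun α => ?_
        rw [← mul_sum]
        gcongr
        simpa using norm_prod_sq_le_sum fun i => fexp k p X c (ω i) α
    _ = ∑ i, ∫ α in box k, ‖F α‖ ^ (2 * t) * ‖fexp k p X c (ω i) α‖ ^ (2 * r) :=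
        integral_finsetSum _ fun i _ => integrableOn_box (by fun_prop)
    _ ≤ ∑ _i : Fin r, Imax k p r (r * t) X b c ^ (1 / (t : ℝ)) *
          (Jcount (r * (t + 1)) k (X / (p : ℝ) ^ b + 1) : ℝ) ^ (1 - 1 / (t : ℝ)) := by
        gcongr with i
        refine (integral_norm_Fexp_mul_norm_fexp_le hp ht X b c η (ω i)).trans ?_
        gcongr
        · exact Iab_nonneg
        · exact Iab_le_Imax (hω i)
    _ = _ := by simp

lemma integral_norm_charSum_powSum_mul_norm_Fexp_le [Fact p.Prime] (hkp : k < p)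
    (ht1 : k ≤ 2 * t + 1) (ht2 : t ≤ k) (ht : 2 ≤ t) (hr1 : 1 ≤ r) (hr2 : r ≤ k) (hab : a < b)
    (hta : t * a ≤ b) (hη1 : 1 ≤ η) (hη2 : η ≤ (p : ℤ) ^ b) {S : Finset (Fin r → ℤ)}
    (hS : ∀ x ∈ S, IsConditioned p a ξ η x ∧ ∀ i, 1 ≤ x i ∧ x i ≤ ⌊X⌋) :
    ∫ α in box k, ‖charSum (powSum k) S α‖ ^ 2 * ‖Fexp k p r X b η α‖ ^ (2 * t) ≤
      (r.factorial * p ^ (muN k r t * b + nuN k r t * a) : ℕ) * (((p ^ (t * b - a)) ^ r : ℕ) *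
      (r * (Imax k p r (r * t) X b (t * b) ^ (1 / (t : ℝ)) *
        (Jcount (r * (t + 1)) k (X / (p : ℝ) ^ b + 1) : ℝ) ^ (1 - 1 / (t : ℝ))))) := by
  have hp : 0 < p := (Fact.out : p.Prime).pos
  have hatb : a ≤ t * b := hab.le.trans (Nat.le_mul_of_pos_left b (by omega))
  have hmain := integral_mul_norm_charSum_powSum_sq_le hkp ht1 ht2 (by omega) hr1 hr2 hab hta
    (fun x hx => (hS x hx).1) (fun x hx => (hS x hx).2)
    (pow_mem (Fexp_mul_star_mem_posTrig k p r X b η) t)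
    (w := fun α => ‖Fexp k p r X b η α‖ ^ (2 * t))
    (fun α => by rw [Pi.pow_apply, mul_star_apply, pow_mul, ← Complex.ofReal_pow])
    fun α => by positivity
  simp only [mul_comm (‖charSum (powSum k) S _‖ ^ 2)]
  refine hmain.trans (mul_le_mul_of_nonneg_left ?_ (by positivity))
  refine (sum_le_card_nsmul _ _ (r * (Imax k p r (r * t) X b (t * b) ^ (1 / (t : ℝ)) *
    (Jcount (r * (t + 1)) k (X / (p : ℝ) ^ b + 1) : ℝ) ^ (1 - 1 / (t : ℝ)))) ?_).trans ?_
  · refine fun ω hω => integral_norm_Fexp_mul_norm_prod_fexp_le hp ht hr1 fun i => ?_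
    obtain ⟨x, hx, rfl⟩ := mem_image.1 hω
    refine ⟨⟨hη1, hη2⟩, residue_mem_Icc (by positivity) _, fun hmod => ?_⟩
    refine (hS x hx).1.not_modEq i (((residue_modEq _ _).of_dvd ?_).symm.trans hmod)
    exact dvd_pow_self _ (mul_ne_zero (by omega) (by omega))
  · rw [nsmul_eq_mul]
    have := Imax_nonneg (k := k) (p := p) (r := r) (s := r * t) (X := X) (a := b) (b := t * b)
    gcongr
    exact card_image_residue_le_pow hp hatb fun x hx => (hS x hx).1.modEq

theorem Kmax_le_Imax [Fact p.Prime] (hkp : k < p) (ht1 : k ≤ 2 * t + 1) (ht2 : t ≤ k)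
    (ht : 2 ≤ t) (hr1 : 1 ≤ r) (hr2 : r ≤ k) (hab : a < b) (hta : t * a ≤ b) :
    Kmax k p r t X a b ≤
      (r.factorial * p ^ (muN k r t * b + nuN k r t * a) : ℕ) * (((p ^ (t * b - a)) ^ r : ℕ) *
      (r * (Imax k p r (r * t) X b (t * b) ^ (1 / (t : ℝ)) *
        (Jcount (r * (t + 1)) k (X / (p : ℝ) ^ b + 1) : ℝ) ^ (1 - 1 / (t : ℝ))))) := by
  have := Imax_nonneg (k := k) (p := p) (r := r) (s := r * t) (X := X) (a := b) (b := t * b)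
  refine Kmax_le (by positivity) ?_ fun ha ξ η h => ?_
  · rintro rfl η ⟨hη1, hη2⟩
    obtain ⟨T, hT, hx⟩ := exists_charSum_eq_Ftilde k p r X η
    rw [Ktilde, hT]
    exact integral_norm_charSum_powSum_mul_norm_Fexp_le hkp ht1 ht2 ht hr1 hr2 hab hta hη1 hη2 hx
  · obtain ⟨T, hT, hx⟩ := exists_charSum_eq_Fexp k p r X a ξ
    rw [Kab, hT]
    refine integral_norm_charSum_powSum_mul_norm_Fexp_le (ξ := ξ) hkp ht1 ht2 ht hr1 hr2 hab hta
      h.right.1 h.right.2 fun x hxT => ?_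
    have hmem (i) := mem_progression.1 ((hx x hxT).1 i)
    refine ⟨⟨fun i => (hmem i).2, (hx x hxT).2, fun i hi => h.not_modEq ?_⟩, fun i => (hmem i).1⟩
    exact hi.symm.trans ((hmem i).2.of_dvd (dvd_pow_self _ ha))

lemma Imax_le_Jcount (hp : 0 < p) (ht : 1 ≤ t) (c : ℕ) :
    Imax k p r (r * t) X b c ≤
      (Jcount (r * (t + 1)) k (X / (p : ℝ) ^ b + 1) : ℝ) ^ (1 / ((t : ℝ) + 1)) *
      (Jcount (r * (t + 1)) k (X / (p : ℝ) ^ c + 1) : ℝ) ^ (1 - 1 / ((t : ℝ) + 1)) := by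
  refine Imax_le (by positivity) fun ξ η _ => ?_
  have h := integral_mul_pow_mul_pow_sub_le (μ := volume.restrict (box k)) (w := fun _ => 1)
    (u := fun α => ‖Fexp k p r X b ξ α‖ ^ 2) (v := fun α => ‖fexp k p X c η α‖ ^ (2 * r))
    one_pos (by omega : 1 < t + 1)
    (integrableOn_box (by fun_prop)) (integrableOn_box (by fun_prop))
    (fun _ => zero_le_one) (fun _ => by positivity) fun _ => by positivity
  simp only [one_mul, pow_one, ← pow_mul, mul_assoc, Nat.add_sub_cancel, Nat.cast_add,
    Nat.cast_one] at h
  have hexp : (0 : ℝ) ≤ 1 - 1 / (t + 1) := sub_nonneg.2 (by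
    rw [div_le_one (by positivity)]
    linarith [t.cast_nonneg (α := ℝ)])
  refine h.trans (mul_le_mul ?_ ?_ (Real.rpow_nonneg (integral_nonneg fun _ => by positivity) _)
    (by positivity))
  · exact Real.rpow_le_rpow (integral_nonneg fun _ => by positivity)
      (integral_norm_Fexp_pow_le_Jcount hp X b ξ _) (by positivity)
  · exact Real.rpow_le_rpow (integral_nonneg fun _ => by positivity)
      (integral_norm_fexp_pow_le_Jcount hp X c η _) hexp

end Congruencing

/-! ### Power bounds in terms of `M` -/

lemma muN_cast {k r t : ℕ} (hr2 : r ≤ k) (hrt : k ≤ r + t) : (muN k r t : ℝ) = muC k r t := by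
  have hsum (n d : ℕ) : ∑ j ∈ Ioc d (d + n), ((d + n - j : ℕ) : ℝ) = n * (n - 1) / 2 := by
    induction n with
    | zero => simp
    | succ n ih =>
      have hstep : ∑ j ∈ Ioc d (d + n), ((d + (n + 1) - j : ℕ) : ℝ) =
          ∑ j ∈ Ioc d (d + n), (((d + n - j : ℕ) : ℝ) + 1) :=
        sum_congr rfl fun j hj => by
          rw [mem_Ioc] at hj
          rw [← add_assoc, Nat.sub_add_comm hj.2, Nat.cast_succ]
      rw [← add_assoc, sum_Ioc_succ_top (by omega), add_assoc, hstep, sum_add_distrib, ih]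
      simp only [sum_const, Nat.card_Ioc, Nat.sub_self, add_tsub_cancel_left, nsmul_eq_mul]
      push_cast
      ring
  obtain ⟨n, rfl⟩ : ∃ n, t = k - r + n := ⟨t - (k - r), by omega⟩
  rw [muN, muC]
  push_cast [Nat.cast_sub hr2]
  rw [hsum]
  ring

lemma nuN_cast {k r t : ℕ} (ht2 : t ≤ k) (hrt : k ≤ r + t) : (nuN k r t : ℝ) = nuC k r t := by
  have hsum (n d : ℕ) : ∑ l ∈ Ico d (d + n), (l : ℝ) = n * (2 * d + n - 1) / 2 := by
    induction n with
    | zero => simp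
    | succ n ih =>
      rw [← add_assoc, sum_Ico_succ_top (by omega), ih]
      push_cast
      ring
  obtain ⟨n, rfl⟩ : ∃ n, r = k - t + n := ⟨r - (k - t), by omega⟩
  rw [nuN, nuC]
  push_cast [Nat.cast_sub ht2]
  rw [hsum]
  push_cast [Nat.cast_sub ht2]
  ring

lemma congruencing_exponent_le {k r t : ℕ} {a b : ℝ} (ht : 2 ≤ t) (hr1 : 1 ≤ r) (hrt : k ≤ r + t)
    (hta : t * a ≤ b) :
    muC k r t * b + nuC k r t * a + r * (t * b - a) + (b - a) * (kappa k r t - 2 * r) ≤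
      r * ((2 * t - 1) * b - t * a) := by
  have ht' : (2 : ℝ) ≤ t := by exact_mod_cast ht
  have hr' : (1 : ℝ) ≤ r := by exact_mod_cast hr1
  have hrt' : (k : ℝ) ≤ r + t := by exact_mod_cast hrt
  have ht1 : (t : ℝ) - 1 ≠ 0 := by linarith
  -- `σ` is the difference `r (t + 1) - μ - κ`, and `μ + ν = σ (t - 1)`.
  set σ : ℝ := (t + r - k) * (r - 1) / (t - 1) with hσ
  have hσ0 : 0 ≤ σ := div_nonneg (mul_nonneg (by linarith) (by linarith)) (by linarith)
  have hκ : kappa k r t = r * (t + 1) - muC k r t - σ := by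
    rw [kappa, muC, hσ]
    ring
  have hν : nuC k r t = σ * (t - 1) - muC k r t := by
    rw [nuC, muC, hσ, div_mul_cancel₀ _ ht1]
    ring
  have hdefect : 0 ≤ σ * (b - t * a) := mul_nonneg hσ0 (sub_nonneg.2 hta)
  rw [hκ, hν]
  linear_combination hdefect

/-- A power bound for `Jcount` has an exponent at least the one of the diagonal solutions. -/
lemma le_exponent_of_Jcount_lt {n k : ℕ} {Y₀ L : ℝ}
    (h : ∀ Y : ℝ, Y₀ ≤ Y → (Jcount n k Y : ℝ) < Y ^ L) : (n : ℝ) ≤ L := by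
  by_contra! hlt
  obtain ⟨Y, hY1, hY2, hY3⟩ :=
    (((tendsto_rpow_atTop (sub_pos.2 hlt)).eventually_ge_atTop ((2 : ℝ) ^ n)).and
      ((eventually_ge_atTop Y₀).and (eventually_ge_atTop (2 : ℝ)))).exists
  have hfloor : Y / 2 ≤ ⌊Y⌋₊ := by
    have := Nat.lt_floor_add_one Y
    linarith
  have hlow : (Y / 2) ^ n < Y ^ L := calc
    (Y / 2) ^ n ≤ (⌊Y⌋₊ : ℝ) ^ n := by gcongr
    _ ≤ Jcount n k Y := by exact_mod_cast floor_pow_le_Jcount n k Y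
    _ < Y ^ L := h Y hY2
  rw [Real.rpow_sub (by linarith), le_div_iff₀ (by positivity), Real.rpow_natCast] at hY1
  rw [div_pow, div_lt_iff₀ (by positivity)] at hlow
  linarith

lemma Jcount_le_rpow {n k c p : ℕ} {X M L : ℝ} (hX : 1 ≤ X)
    (hJ : ∀ Y : ℝ, X ^ ((1 : ℝ) / 2) ≤ Y → (Jcount n k Y : ℝ) < Y ^ L) (hM : 0 < M)
    (hMp : M ≤ p) (hc : M ^ c ≤ X ^ ((1 : ℝ) / 2)) :
    (Jcount n k (X / (p : ℝ) ^ c + 1) : ℝ) ≤ (2 * (X / M ^ c)) ^ L := by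
  have hsqrt : X ^ ((1 : ℝ) / 2) ≤ X / M ^ c := by
    rw [le_div_iff₀ (by positivity)]
    calc X ^ ((1 : ℝ) / 2) * M ^ c ≤ X ^ ((1 : ℝ) / 2) * X ^ ((1 : ℝ) / 2) := by gcongr
      _ = X := by rw [← Real.rpow_add (by linarith)]; norm_num
  have hone : 1 ≤ X ^ ((1 : ℝ) / 2) := Real.one_le_rpow hX (by norm_num)
  have hpM : X / (p : ℝ) ^ c ≤ X / M ^ c := by gcongr
  calc (Jcount n k (X / (p : ℝ) ^ c + 1) : ℝ) ≤ Jcount n k (2 * (X / M ^ c)) :=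
        Nat.cast_le.2 (Jcount_mono n k (by linarith))
    _ ≤ (2 * (X / M ^ c)) ^ L := (hJ _ (by linarith)).le

lemma two_mul_rpow_le {Y u v : ℝ} (hY : 0 ≤ Y) (huv : u ≤ v) : (2 * Y) ^ u ≤ 2 ^ v * Y ^ u := by
  rw [Real.mul_rpow (by norm_num) hY]
  gcongr
  norm_num

lemma div_pow_rpow_eq {X M : ℝ} (hX : 0 < X) (hM : 0 < M) (b c : ℕ) (u : ℝ) :
    (X / M ^ c) ^ u = (X / M ^ b) ^ u * M ^ (((b : ℝ) - c) * u) := by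
  have hquot : X / M ^ c = X / M ^ b * M ^ ((b : ℝ) - c) := by
    rw [Real.rpow_sub hM, Real.rpow_natCast, Real.rpow_natCast]
    field_simp
  rw [hquot, Real.mul_rpow (by positivity) (by positivity), Real.rpow_mul hM.le]

/-- The implicit constant of the congruencing step for moduli `p ^ b` with `b ≤ n`, when the mean
values `Jcount` are bounded with exponent `L`. -/
def congConst (k r t n : ℕ) (L : ℝ) : ℝ :=
  r * r.factorial * 2 ^ ((muN k r t + nuN k r t + t * r) * n) * 2 ^ L

lemma congConst_pos {k r t n : ℕ} {L : ℝ} (hr1 : 1 ≤ r) : 0 < congConst k r t n L := by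
  unfold congConst
  positivity

lemma congruencing_modulus_le {k p r t a b n : ℕ} {M : ℝ} (ht2 : t ≤ k) (hr2 : r ≤ k)
    (hrt : k ≤ r + t) (hab : a ≤ b) (hatb : a ≤ t * b) (hbn : b ≤ n) (hM : 0 ≤ M)
    (hpM : (p : ℝ) ≤ 2 * M) :
    (p : ℝ) ^ (muN k r t * b + nuN k r t * a + (t * b - a) * r) ≤
      2 ^ ((muN k r t + nuN k r t + t * r) * n) *
        M ^ (muC k r t * b + nuC k r t * a + r * (t * b - a)) := by
  have hcast : ((muN k r t * b + nuN k r t * a + (t * b - a) * r : ℕ) : ℝ) =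
      muC k r t * b + nuC k r t * a + r * (t * b - a) := by
    push_cast [Nat.cast_sub hatb]
    rw [muN_cast hr2 hrt, nuN_cast ht2 hrt]
    ring
  have hle : muN k r t * b + nuN k r t * a + (t * b - a) * r ≤
      (muN k r t + nuN k r t + t * r) * n := calc
    _ ≤ muN k r t * n + nuN k r t * n + t * n * r := by
      have := hab.trans hbn
      have : t * b - a ≤ t * n := (Nat.sub_le _ _).trans (Nat.mul_le_mul_left t hbn)
      gcongr
    _ = _ := by ring
  rw [← hcast, Real.rpow_natCast]
  refine (pow_le_pow_left₀ p.cast_nonneg hpM _).trans ?_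
  rw [mul_pow]
  gcongr
  norm_num

lemma Kmax_le_rpow {k p r t a b n : ℕ} {X M L : ℝ} (hp : p.Prime) (hkp : k < p)
    (hkt : k ≤ 2 * t + 1) (ht2 : t ≤ k) (ht : 2 ≤ t) (hr1 : 1 ≤ r) (hr2 : r ≤ k)
    (hrt : k ≤ r + t) (hab : a < b) (hta : t * a ≤ b) (hbn : b ≤ n) (hX : 0 < X) (hM : 0 < M)
    (hpM : (p : ℝ) ≤ 2 * M) (hL : 0 ≤ L)
    (hJ : (Jcount (r * (t + 1)) k (X / (p : ℝ) ^ b + 1) : ℝ) ≤ (2 * (X / M ^ b)) ^ L) :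
    Kmax k p r t X a b ≤ congConst k r t n L *
      M ^ (muC k r t * b + nuC k r t * a + r * (t * b - a)) *
      Imax k p r (r * t) X b (t * b) ^ (1 / (t : ℝ)) * (X / M ^ b) ^ (L * (1 - 1 / t)) := by
  have : Fact p.Prime := ⟨hp⟩
  have hu : 0 ≤ 1 - 1 / (t : ℝ) := by
    rw [sub_nonneg, div_le_one (by positivity)]
    exact_mod_cast (by omega : 1 ≤ t)
  have hpe := congruencing_modulus_le ht2 hr2 hrt hab.le (by nlinarith : a ≤ t * b) hbn hM.le hpM
  have hJu : (Jcount (r * (t + 1)) k (X / (p : ℝ) ^ b + 1) : ℝ) ^ (1 - 1 / (t : ℝ)) ≤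
      2 ^ L * (X / M ^ b) ^ (L * (1 - 1 / (t : ℝ))) := calc
    _ ≤ ((2 * (X / M ^ b)) ^ L) ^ (1 - 1 / (t : ℝ)) := by gcongr
    _ = (2 * (X / M ^ b)) ^ (L * (1 - 1 / (t : ℝ))) := by rw [← Real.rpow_mul (by positivity)]
    _ ≤ _ := two_mul_rpow_le (by positivity)
      (mul_le_of_le_one_right hL (sub_le_self _ (by positivity)))
  have hI : 0 ≤ Imax k p r (r * t) X b (t * b) ^ (1 / (t : ℝ)) :=
    Real.rpow_nonneg (Imax_nonneg ..) _
  refine (Kmax_le_Imax hkp hkt ht2 ht hr1 hr2 hab hta).trans ?_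
  calc _ = (r * r.factorial : ℝ) * Imax k p r (r * t) X b (t * b) ^ (1 / (t : ℝ)) *
        ((p : ℝ) ^ (muN k r t * b + nuN k r t * a + (t * b - a) * r) *
          (Jcount (r * (t + 1)) k (X / (p : ℝ) ^ b + 1) : ℝ) ^ (1 - 1 / (t : ℝ))) := by
        rw [pow_add _ (_ + _), pow_mul (p : ℝ) (t * b - a)]
        push_cast
        ring
    _ ≤ (r * r.factorial : ℝ) * Imax k p r (r * t) X b (t * b) ^ (1 / (t : ℝ)) *
        ((2 ^ ((muN k r t + nuN k r t + t * r) * n) *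
          M ^ (muC k r t * b + nuC k r t * a + r * (t * b - a))) *
          (2 ^ L * (X / M ^ b) ^ (L * (1 - 1 / (t : ℝ))))) := by gcongr
    _ = _ := by rw [congConst]; ring

lemma Imax_le_rpow {k p r t b c : ℕ} {X M L : ℝ} (hp : 0 < p) (ht : 1 ≤ t) (hX : 0 < X)
    (hM : 1 ≤ M) (hbc : b ≤ c) (hL : (r * (t + 1) : ℕ) ≤ L)
    (hJb : (Jcount (r * (t + 1)) k (X / (p : ℝ) ^ b + 1) : ℝ) ≤ (2 * (X / M ^ b)) ^ L)
    (hJc : (Jcount (r * (t + 1)) k (X / (p : ℝ) ^ c + 1) : ℝ) ≤ (2 * (X / M ^ c)) ^ L) :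
    Imax k p r (r * t) X b c ≤ (2 * (X / M ^ b)) ^ L * M ^ (-((c : ℝ) - b) * (r * t)) := by
  have hM0 : 0 < M := by linarith
  have hu : 0 ≤ 1 - 1 / ((t : ℝ) + 1) := by
    rw [sub_nonneg, div_le_one (by positivity)]
    linarith [(Nat.cast_nonneg t : (0 : ℝ) ≤ t)]
  have hbc' : (b : ℝ) ≤ c := by exact_mod_cast hbc
  have hratio : (2 * (X / M ^ c)) ^ L = (2 * (X / M ^ b)) ^ L * M ^ (((b : ℝ) - c) * L) := by
    rw [Real.mul_rpow (by norm_num) (by positivity), div_pow_rpow_eq hX hM0 b c,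
      Real.mul_rpow (by norm_num) (by positivity), mul_assoc]
  have hexp : (r * t : ℝ) ≤ L * (1 - 1 / ((t : ℝ) + 1)) := calc
    (r * t : ℝ) = (r * (t + 1) : ℕ) * (1 - 1 / ((t : ℝ) + 1)) := by
      push_cast
      field_simp
      ring
    _ ≤ _ := by gcongr
  set W := (2 * (X / M ^ b)) ^ L
  have hW : 0 < W := by positivity
  calc Imax k p r (r * t) X b c
      ≤ W ^ (1 / ((t : ℝ) + 1)) * (W * M ^ (((b : ℝ) - c) * L)) ^ (1 - 1 / ((t : ℝ) + 1)) := by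
        rw [hratio] at hJc
        refine (Imax_le_Jcount hp ht c).trans ?_
        gcongr
    _ = W * M ^ (-((c : ℝ) - b) * (L * (1 - 1 / ((t : ℝ) + 1)))) := by
        rw [Real.mul_rpow hW.le (by positivity), ← mul_assoc, ← Real.rpow_add hW,
          add_sub_cancel, Real.rpow_one, ← Real.rpow_mul hM0.le, mul_assoc, neg_sub]
    _ ≤ _ := by
        refine mul_le_mul_of_nonneg_left (Real.rpow_le_rpow_of_exponent_le hM ?_) hW.le
        nlinarith

/-- The implicit constant of at most `n` conditioning steps, when the mean values `Jcount` are
bounded with exponent `L`. -/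
def iterConst (r t n : ℕ) (L : ℝ) : ℝ :=
  condConst r t ^ n * 2 ^ (r * t * n) * 2 ^ L

lemma iterConst_pos (r t n : ℕ) (L : ℝ) : 0 < iterConst r t n L := by
  have := zero_lt_one.trans_le (one_le_condConst r t)
  unfold iterConst
  positivity

lemma conditioning_factor_le {p r t e h n : ℕ} {M : ℝ} (hM : 0 < M) (hpM : (p : ℝ) ≤ 2 * M)
    (he : e ≤ n) (hh : h ≤ n) :
    condConst r t ^ e * ((p : ℝ) ^ (2 * ((r * t : ℕ) : ℝ) / 3)) ^ h ≤
      condConst r t ^ n * 2 ^ (r * t * n) * M ^ (2 * (r * t : ℝ) / 3 * h) := by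
  have hC := one_le_condConst r t
  have hexp : 2 * (r * t : ℝ) / 3 * h ≤ (r * t * n : ℕ) := by
    push_cast
    have : (0 : ℝ) ≤ r * t * h := by positivity
    calc 2 * (r * t : ℝ) / 3 * h ≤ r * t * h := by linarith
      _ ≤ r * t * n := by gcongr
  have hp : ((p : ℝ) ^ (2 * ((r * t : ℕ) : ℝ) / 3)) ^ h ≤
      2 ^ (r * t * n) * M ^ (2 * (r * t : ℝ) / 3 * h) := calc
    _ = (p : ℝ) ^ (2 * (r * t : ℝ) / 3 * h) := by
      rw [← Real.rpow_natCast, ← Real.rpow_mul p.cast_nonneg, Nat.cast_mul]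
    _ ≤ (2 * M) ^ (2 * (r * t : ℝ) / 3 * h) := by gcongr
    _ ≤ 2 ^ ((r * t * n : ℕ) : ℝ) * M ^ (2 * (r * t : ℝ) / 3 * h) := two_mul_rpow_le hM.le hexp
    _ = _ := by rw [Real.rpow_natCast]
  rw [mul_assoc]
  gcongr

lemma exists_Imax_le_rpow {k p r t b c n H : ℕ} {X M L : ℝ} (hp : 0 < p) (ht : 2 ≤ t)
    (hr1 : 1 ≤ r) (hb : b ≠ 0) (hbc : b ≤ c) (hX : 0 < X) (hM : 1 ≤ M) (hpM : (p : ℝ) ≤ 2 * M)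
    (hHn : H ≤ n) (hL : (r * (t + 1) : ℕ) ≤ L)
    (hJb : (Jcount (r * (t + 1)) k (X / (p : ℝ) ^ b + 1) : ℝ) ≤ (2 * (X / M ^ b)) ^ L)
    (hJc : (Jcount (r * (t + 1)) k (X / (p : ℝ) ^ (c + H) + 1) : ℝ) ≤
      (2 * (X / M ^ (c + H))) ^ L) :
    (∃ h < H, Imax k p r (r * t) X b c ≤
      iterConst r t n L * M ^ (2 * (r * t : ℝ) / 3 * h) * Kmax k p r t X b (c + h)) ∨
    Imax k p r (r * t) X b c ≤
      iterConst r t n L * (X / M ^ b) ^ L * M ^ (-(r * t : ℝ) * (c - b + H / 3)) := by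
  have hM0 : 0 < M := by linarith
  have hC := zero_lt_one.trans_le (one_le_condConst r t)
  rcases exists_Imax_le_Kmax_or (k := k) (X := X) hp ht hr1 hb (by omega : c ≠ 0) H with
    ⟨h, hh, hle⟩ | hle
  · have h2L : 1 ≤ (2 : ℝ) ^ L :=
      Real.one_le_rpow one_le_two ((Nat.cast_nonneg _).trans hL)
    refine .inl ⟨h, hh, hle.trans (mul_le_mul_of_nonneg_right ?_ (Kmax_nonneg ..))⟩
    refine (conditioning_factor_le (n := n) hM0 hpM (by omega) (by omega)).trans
      (mul_le_mul_of_nonneg_right ?_ (by positivity))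
    exact le_mul_of_one_le_right (by positivity) h2L
  · have hI := Imax_le_rpow hp (by omega) hX hM (by omega : b ≤ c + H) hL hJb hJc
    refine .inr (hle.trans ((mul_le_mul (conditioning_factor_le hM0 hpM hHn hHn) hI
      (Imax_nonneg ..) (by positivity)).trans_eq ?_))
    have hexp : -(r * t : ℝ) * (c - b + H / 3) =
        2 * (r * t) / 3 * H + -(((c + H : ℕ) : ℝ) - b) * (r * t) := by
      push_cast
      ring
    rw [iterConst, hexp, Real.rpow_add hM0, Real.mul_rpow (by norm_num) (by positivity)]
    ring

/-! ### Normalised mean values -/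

lemma thetaC_pos {t : ℕ} (ht : 1 ≤ t) (N : ℕ) : 0 < thetaC t N := by
  unfold thetaC
  positivity

lemma Mval_pos (t N : ℕ) {X : ℝ} (hX : 0 < X) : 0 < Mval t N X := Real.rpow_pos_of_pos hX _

lemma one_le_Mval {t : ℕ} (ht : 1 ≤ t) (N : ℕ) {X : ℝ} (hX : 1 ≤ X) : 1 ≤ Mval t N X :=
  Real.one_le_rpow hX (thetaC_pos ht N).le

lemma Mval_pow_le_sqrt {t N b c : ℕ} {X : ℝ} (ht : 1 ≤ t) (hX : 1 ≤ X)
    (hb : (b : ℝ) ≤ (32 * (t : ℝ) * thetaC t N)⁻¹) (hc : c ≤ 16 * t * b) :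
    Mval t N X ^ c ≤ X ^ ((1 : ℝ) / 2) := by
  have hθ := thetaC_pos ht N
  rw [Mval, ← Real.rpow_natCast, ← Real.rpow_mul (by linarith)]
  refine Real.rpow_le_rpow_of_exponent_le hX ?_
  rw [inv_eq_one_div, le_div_iff₀ (by positivity)] at hb
  calc thetaC t N * c ≤ thetaC t N * (16 * t * b : ℕ) := by gcongr
    _ = b * (32 * t * thetaC t N) / 2 := by push_cast; ring
    _ ≤ 1 / 2 := by linarith

lemma rpow_deltaC_le_Mval_sqrt {t N : ℕ} {X : ℝ} (hN : 1 ≤ N) (ht : 1 ≤ t) (hX : 1 ≤ X) :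
    X ^ deltaC t N ≤ Mval t N X ^ ((1 : ℝ) / 2) := by
  have hθ := thetaC_pos ht N
  have hN' : (1 : ℝ) ≤ N := by exact_mod_cast hN
  have htN : (1 : ℝ) ≤ (t : ℝ) ^ N := one_le_pow₀ (by exact_mod_cast ht)
  rw [Mval, ← Real.rpow_mul (by linarith)]
  refine Real.rpow_le_rpow_of_exponent_le hX ?_
  rw [deltaC, mul_one_div]
  gcongr
  nlinarith

lemma normK_eq_base_second {k p r t N : ℕ} {X : ℝ} (hX : 0 < X) (a b : ℕ) :
    normK k p r t N X a b = Kmax k p r t X a b *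
      Mval t N X ^ (((b : ℝ) - a) * (kappa k r t - 2 * r)) *
      (X / Mval t N X ^ b) ^ (kappa k r t - 2 * (r * (t + 1))) := by
  have hM := Mval_pos t N hX
  have hY : 0 < X / Mval t N X ^ b := by positivity
  rw [normK, div_pow_rpow_eq hX hM b a, show kappa k r t - 2 * (r * (t + 1)) =
    -(2 * ((r * t : ℕ) : ℝ)) + (kappa k r t - 2 * r) by push_cast; ring, Real.rpow_add hY]
  ring

lemma normK_eq_base_first {k p r t N : ℕ} {X : ℝ} (hX : 0 < X) (b c : ℕ) :
    normK k p r t N X b c = Kmax k p r t X b c *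
      Mval t N X ^ (((c : ℝ) - b) * (2 * (r * t))) *
      (X / Mval t N X ^ b) ^ (kappa k r t - 2 * (r * (t + 1))) := by
  have hM := Mval_pos t N hX
  have hY : 0 < X / Mval t N X ^ b := by positivity
  rw [normK, div_pow_rpow_eq hX hM b c, show kappa k r t - 2 * (r * (t + 1)) =
    -(2 * ((r * t : ℕ) : ℝ)) + (kappa k r t - 2 * r) by push_cast; ring, Real.rpow_add hY,
    show ((c : ℝ) - b) * (2 * (r * t)) = (b - c) * -(2 * ((r * t : ℕ) : ℝ)) by push_cast; ring]
  ring

lemma normK_nonneg {k p r t N : ℕ} {X : ℝ} (hX : 0 < X) (a b : ℕ) :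
    0 ≤ normK k p r t N X a b := by
  have hM := Mval_pos t N hX
  exact mul_nonneg (mul_nonneg (Kmax_nonneg ..) (by positivity)) (by positivity)

lemma normK_le_rpow {k p r t N a b : ℕ} {X Q I L : ℝ} (ht : 2 ≤ t) (hr1 : 1 ≤ r)
    (hrt : k ≤ r + t) (hta : t * a ≤ b) (hX : 1 ≤ X) (hQ : 0 ≤ Q) (hI : 0 ≤ I)
    (hK : Kmax k p r t X a b ≤
      Q * Mval t N X ^ (muC k r t * b + nuC k r t * a + r * (t * b - a)) *
      I ^ (1 / (t : ℝ)) * (X / Mval t N X ^ b) ^ (L * (1 - 1 / t))) :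
    normK k p r t N X a b ≤ Q * I ^ (1 / (t : ℝ)) *
      Mval t N X ^ (r * ((2 * t - 1) * b - t * a : ℝ)) *
      (X / Mval t N X ^ b) ^ (L * (1 - 1 / t) + (kappa k r t - 2 * (r * (t + 1)))) := by
  have hX0 : 0 < X := by linarith
  have hM := Mval_pos t N hX0
  have hexp := congruencing_exponent_le (k := k) (a := a) (b := b) ht hr1 hrt
    (by exact_mod_cast hta)
  have hMexp := Real.rpow_le_rpow_of_exponent_le (one_le_Mval (by omega : 1 ≤ t) N hX) hexp
  have hY : 0 < X / Mval t N X ^ b := by positivity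
  rw [Real.rpow_add hM] at hMexp
  rw [normK_eq_base_second hX0, Real.rpow_add hY]
  calc _ ≤ (Q * Mval t N X ^ (muC k r t * b + nuC k r t * a + r * (t * b - a)) *
        I ^ (1 / (t : ℝ)) * (X / Mval t N X ^ b) ^ (L * (1 - 1 / t))) *
        Mval t N X ^ (((b : ℝ) - a) * (kappa k r t - 2 * r)) *
        (X / Mval t N X ^ b) ^ (kappa k r t - 2 * (r * (t + 1))) := by gcongr
    _ = Q * I ^ (1 / (t : ℝ)) *
        (Mval t N X ^ (muC k r t * b + nuC k r t * a + r * (t * b - a)) *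
          Mval t N X ^ (((b : ℝ) - a) * (kappa k r t - 2 * r))) *
        ((X / Mval t N X ^ b) ^ (L * (1 - 1 / t)) *
          (X / Mval t N X ^ b) ^ (kappa k r t - 2 * (r * (t + 1)))) := by ring
    _ ≤ _ := by gcongr

lemma LamC_eq (k r t : ℕ) :
    LamC k r t = lamExp k (r * (t + 1)) + (kappa k r t - 2 * (r * (t + 1))) := by
  rw [LamC]
  push_cast
  ring

lemma rpow_root_normK_eq {k p r t N : ℕ} {X : ℝ} (ht : t ≠ 0) (hX : 0 < X) (b h : ℕ) (γ : ℝ) :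
    ((Mval t N X ^ γ) ^ (r * t) * normK k p r t N X b (t * b + h)) ^ (1 / (t : ℝ)) =
      Kmax k p r t X b (t * b + h) ^ (1 / (t : ℝ)) *
        Mval t N X ^ (r * (γ + 2 * ((t - 1) * b + h))) *
        (X / Mval t N X ^ b) ^ ((kappa k r t - 2 * (r * (t + 1))) / t) := by
  have hM := Mval_pos t N hX
  have hK : 0 ≤ Kmax k p r t X b (t * b + h) := Kmax_nonneg ..
  have ht' : (t : ℝ) ≠ 0 := by exact_mod_cast ht
  have hcombine : (Mval t N X ^ γ) ^ (r * t) * normK k p r t N X b (t * b + h) =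
      Kmax k p r t X b (t * b + h) *
        Mval t N X ^ (γ * (r * t : ℕ) + ((t * b + h : ℕ) - b : ℝ) * (2 * (r * t))) *
        (X / Mval t N X ^ b) ^ (kappa k r t - 2 * (r * (t + 1))) := by
    rw [normK_eq_base_first hX, Real.rpow_add hM, Real.rpow_mul hM.le γ, Real.rpow_natCast]
    ring
  rw [hcombine, Real.mul_rpow (by positivity) (by positivity), Real.mul_rpow hK (by positivity),
    ← Real.rpow_mul hM.le, ← Real.rpow_mul (by positivity),
    mul_one_div (_ - _) (t : ℝ)]
  congr 3
  push_cast
  field_simp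
  ring

lemma div_Mval_pow_rpow_le {t : ℕ} (ht : 1 ≤ t) (N b : ℕ) {X v : ℝ} (hX : 1 ≤ X) (hv0 : 0 ≤ v)
    (hv1 : v ≤ 1) : (X / Mval t N X ^ b) ^ (deltaC t N * v) ≤ X ^ deltaC t N := by
  have hM := Mval_pos t N (by linarith : 0 < X)
  have hδ : 0 ≤ deltaC t N := by unfold deltaC thetaC; positivity
  have hYX : X / Mval t N X ^ b ≤ X :=
    div_le_self (by linarith) (one_le_pow₀ (one_le_Mval ht N hX))
  calc (X / Mval t N X ^ b) ^ (deltaC t N * v) ≤ X ^ (deltaC t N * v) := by gcongr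
    _ ≤ X ^ deltaC t N := Real.rpow_le_rpow_of_exponent_le hX (mul_le_of_le_one_right hδ hv1)

lemma rpow_one_div_le {I R M Z e t : ℝ} (ht : 0 < t) (hI : 0 ≤ I) (hR : 0 ≤ R) (hM : 0 < M)
    (hZ : 0 ≤ Z) (h : I ≤ R * M ^ (e * t) * Z) :
    I ^ (1 / t) ≤ R ^ (1 / t) * M ^ e * Z ^ (1 / t) := calc
  I ^ (1 / t) ≤ (R * M ^ (e * t) * Z) ^ (1 / t) := by gcongr
  _ = R ^ (1 / t) * M ^ e * Z ^ (1 / t) := by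
    rw [Real.mul_rpow (by positivity) hZ, Real.mul_rpow hR (by positivity), ← Real.rpow_mul hM.le,
      mul_assoc e, mul_one_div_cancel ht.ne', mul_one]

lemma normK_le_of_conditioned {k p r t N a b h : ℕ} {X Q R I : ℝ} (ht : 1 ≤ t)
    (hta : t * a ≤ b) (hX : 1 ≤ X) (hQ : 0 ≤ Q) (hR : 0 ≤ R) (hI : 0 ≤ I)
    (hK : normK k p r t N X a b ≤ Q * I ^ (1 / (t : ℝ)) *
      Mval t N X ^ (r * ((2 * t - 1) * b - t * a : ℝ)) *
      (X / Mval t N X ^ b) ^ ((lamExp k (r * (t + 1)) + deltaC t N) * (1 - 1 / t) +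
        (kappa k r t - 2 * (r * (t + 1)))))
    (hIK : I ≤ R * Mval t N X ^ (2 * (r * t : ℝ) / 3 * h) * Kmax k p r t X b (t * b + h)) :
    normK k p r t N X a b ≤ Q * R ^ (1 / (t : ℝ)) * (X ^ deltaC t N *
      ((Mval t N X ^ (((b - t * a : ℕ) : ℝ) - 4 * (h : ℝ) / 3)) ^ (r * t) *
        normK k p r t N X b (t * b + h)) ^ (1 / (t : ℝ)) *
      (X / Mval t N X ^ b) ^ (LamC k r t * (1 - 1 / (t : ℝ)))) := by
  have hX0 : 0 < X := by linarith
  have hM := Mval_pos t N hX0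
  have ht0 : (0 : ℝ) < t := by exact_mod_cast ht
  have hu : 0 ≤ 1 - 1 / (t : ℝ) := by
    rw [sub_nonneg, div_le_one ht0]
    exact_mod_cast ht
  have hYδ := div_Mval_pow_rpow_le ht N b hX hu (sub_le_self 1 (by positivity))
  rw [rpow_root_normK_eq (by omega) hX0, LamC_eq]
  set M := Mval t N X
  set Y := X / M ^ b
  set K := Kmax k p r t X b (t * b + h)
  set q := kappa k r t - 2 * (r * (t + 1))
  have hY : 0 < Y := by positivity
  have hK0 : 0 ≤ K := Kmax_nonneg ..
  rw [show 2 * (r * t : ℝ) / 3 * h = 2 * r * h / 3 * t by ring] at hIK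
  have hroot := rpow_one_div_le ht0 hI hR hM hK0 hIK
  have hMexp : M ^ (2 * r * h / 3 : ℝ) * M ^ (r * ((2 * t - 1) * b - t * a : ℝ)) =
      M ^ (r * (((b - t * a : ℕ) : ℝ) - 4 * (h : ℝ) / 3 + 2 * ((t - 1) * b + h))) := by
    rw [← Real.rpow_add hM]
    push_cast [Nat.cast_sub hta]
    ring_nf
  have hYexp : Y ^ ((lamExp k (r * (t + 1)) + deltaC t N) * (1 - 1 / t) + q) =
      Y ^ (deltaC t N * (1 - 1 / (t : ℝ))) *
        (Y ^ (q / t) * Y ^ ((lamExp k (r * (t + 1)) + q) * (1 - 1 / t))) := by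
    rw [← Real.rpow_add hY, ← Real.rpow_add hY]
    ring_nf
  calc _ ≤ Q * (R ^ (1 / (t : ℝ)) * M ^ (2 * r * h / 3 : ℝ) * K ^ (1 / (t : ℝ))) *
        M ^ (r * ((2 * t - 1) * b - t * a : ℝ)) *
        Y ^ ((lamExp k (r * (t + 1)) + deltaC t N) * (1 - 1 / t) + q) := hK.trans (by gcongr)
    _ = Q * R ^ (1 / (t : ℝ)) * (Y ^ (deltaC t N * (1 - 1 / (t : ℝ))) *
        (K ^ (1 / (t : ℝ)) * (M ^ (2 * r * h / 3 : ℝ) * M ^ (r * ((2 * t - 1) * b - t * a : ℝ))) *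
          Y ^ (q / t)) * Y ^ ((lamExp k (r * (t + 1)) + q) * (1 - 1 / t))) := by
      rw [hYexp]
      ring
    _ ≤ _ := by
      rw [hMexp]
      gcongr

lemma unconditioned_exponent_le {r t : ℕ} {a b : ℝ} (ht : 2 ≤ t) (hr1 : 1 ≤ r) (ha : 0 ≤ a)
    (hb : 1 ≤ b) :
    -(r : ℝ) * ((t - 1) * b + 15 * (t - 1) * b / 3) + r * ((2 * t - 1) * b - t * a) + 1 / 2 ≤
      15 * (t - 1) * b * (-r / 6) := by
  have ht' : (2 : ℝ) ≤ t := by exact_mod_cast ht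
  have hr' : (1 : ℝ) ≤ r := by exact_mod_cast hr1
  have hrta : 0 ≤ r * t * a := by positivity
  have hrb : 1 ≤ r * b := one_le_mul_of_one_le_of_one_le hr' hb
  nlinarith

lemma normK_le_of_unconditioned {k p r t N a b : ℕ} {X Q R I : ℝ} (hN : 1 ≤ N) (ht : 2 ≤ t)
    (hr1 : 1 ≤ r) (hb : 1 ≤ b) (hX : 1 ≤ X) (hQ : 0 ≤ Q) (hR : 0 ≤ R) (hI : 0 ≤ I)
    (hK : normK k p r t N X a b ≤ Q * I ^ (1 / (t : ℝ)) *
      Mval t N X ^ (r * ((2 * t - 1) * b - t * a : ℝ)) *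
      (X / Mval t N X ^ b) ^ ((lamExp k (r * (t + 1)) + deltaC t N) * (1 - 1 / t) +
        (kappa k r t - 2 * (r * (t + 1)))))
    (hIJ : I ≤ R * (X / Mval t N X ^ b) ^ (lamExp k (r * (t + 1)) + deltaC t N) *
      Mval t N X ^ (-(r * t : ℝ) * ((t * b : ℕ) - b + (15 * (t - 1) * b : ℕ) / 3))) :
    normK k p r t N X a b ≤ Q * R ^ (1 / (t : ℝ)) *
      ((Mval t N X ^ (15 * (t - 1) * b)) ^ (-(r : ℝ) / 6) *
        (X / Mval t N X ^ b) ^ LamC k r t) := by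
  have hM := Mval_pos t N (by linarith : 0 < X)
  have ht0 : (0 : ℝ) < t := by positivity
  have hYδ := (div_Mval_pow_rpow_le (by omega) N b hX zero_le_one le_rfl).trans
    (rpow_deltaC_le_Mval_sqrt hN (by omega : 1 ≤ t) hX)
  have hMexp := Real.rpow_le_rpow_of_exponent_le (one_le_Mval (by omega : 1 ≤ t) N hX)
    (unconditioned_exponent_le ht hr1 (Nat.cast_nonneg a) (by exact_mod_cast hb : (1 : ℝ) ≤ b))
  rw [LamC_eq, ← Real.rpow_natCast _ (15 * (t - 1) * b), ← Real.rpow_mul hM.le]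
  push_cast [Nat.cast_sub (by omega : 1 ≤ t)] at hIJ ⊢
  set M := Mval t N X
  set Y := X / M ^ b
  set q := kappa k r t - 2 * (r * (t + 1))
  have hY : 0 < Y := by positivity
  rw [mul_right_comm, show -(r * t : ℝ) * (t * b - b + 15 * (t - 1) * b / 3) =
    -(r : ℝ) * ((t - 1) * b + 15 * (t - 1) * b / 3) * t by ring] at hIJ
  have hroot := rpow_one_div_le ht0 hI hR hM (by positivity) hIJ
  have hYexp : (Y ^ (lamExp k (r * (t + 1)) + deltaC t N)) ^ (1 / (t : ℝ)) *
      Y ^ ((lamExp k (r * (t + 1)) + deltaC t N) * (1 - 1 / t) + q) =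
      Y ^ (deltaC t N * 1) * Y ^ (lamExp k (r * (t + 1)) + q) := by
    rw [← Real.rpow_mul hY.le, ← Real.rpow_add hY, ← Real.rpow_add hY]
    ring_nf
  rw [Real.rpow_add hM, Real.rpow_add hM] at hMexp
  calc _ ≤ Q * (R ^ (1 / (t : ℝ)) * M ^ (-(r : ℝ) * ((t - 1) * b + 15 * (t - 1) * b / 3)) *
        (Y ^ (lamExp k (r * (t + 1)) + deltaC t N)) ^ (1 / (t : ℝ))) *
        M ^ (r * ((2 * t - 1) * b - t * a : ℝ)) *
        Y ^ ((lamExp k (r * (t + 1)) + deltaC t N) * (1 - 1 / t) + q) := hK.trans (by gcongr)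
    _ = Q * R ^ (1 / (t : ℝ)) * (M ^ (-(r : ℝ) * ((t - 1) * b + 15 * (t - 1) * b / 3)) *
        M ^ (r * ((2 * t - 1) * b - t * a : ℝ)) * Y ^ (deltaC t N * 1) *
          Y ^ (lamExp k (r * (t + 1)) + q)) := by
      rw [mul_assoc _ (Y ^ (deltaC t N * 1)), ← hYexp]
      ring
    _ ≤ Q * R ^ (1 / (t : ℝ)) * (M ^ (-(r : ℝ) * ((t - 1) * b + 15 * (t - 1) * b / 3)) *
        M ^ (r * ((2 * t - 1) * b - t * a : ℝ)) * M ^ ((1 : ℝ) / 2) *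
          Y ^ (lamExp k (r * (t + 1)) + q)) := by gcongr
    _ ≤ _ := by gcongr

/-- The constant of the iterative inequality; `⌊(32 t θ)⁻¹⌋₊` bounds the admissible `b`, and
hence `15 t ⌊(32 t θ)⁻¹⌋₊` the number `H` of conditioning steps. -/
def iterativeConst (k r t N : ℕ) : ℝ :=
  congConst k r t ⌊(32 * (t : ℝ) * thetaC t N)⁻¹⌋₊ (lamExp k (r * (t + 1)) + deltaC t N) *
    iterConst r t (15 * t * ⌊(32 * (t : ℝ) * thetaC t N)⁻¹⌋₊)
      (lamExp k (r * (t + 1)) + deltaC t N) ^ (1 / (t : ℝ))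

lemma iterativeConst_pos {k r t N : ℕ} (hr1 : 1 ≤ r) : 0 < iterativeConst k r t N :=
  mul_pos (congConst_pos hr1) (Real.rpow_pos_of_pos (iterConst_pos ..) _)

lemma exists_normK_le {k p r t N a b : ℕ} {X : ℝ} (hkt : k ≤ 2 * t + 1) (ht2 : t ≤ k)
    (ht : 2 ≤ t) (hr1 : 1 ≤ r) (hr2 : r ≤ k) (hrt : k ≤ r + t) (hN : 1 ≤ N) (hX : 1 ≤ X)
    (hJ : ∀ Y : ℝ, X ^ ((1 : ℝ) / 2) ≤ Y →
      (Jcount (r * (t + 1)) k Y : ℝ) < Y ^ (lamExp k (r * (t + 1)) + deltaC t N))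
    (hp : p.Prime) (hkp : k < p) (hMp : Mval t N X ≤ p) (hpM : (p : ℝ) ≤ 2 * Mval t N X)
    (hab : a < b) (hb : (b : ℝ) ≤ (32 * (t : ℝ) * thetaC t N)⁻¹) (hta : t * a ≤ b) :
    ∃ h < 15 * (t - 1) * b, normK k p r t N X a b ≤ iterativeConst k r t N * (X ^ deltaC t N *
      ((Mval t N X ^ (((b - t * a : ℕ) : ℝ) - 4 * (h : ℝ) / 3)) ^ (r * t) *
        normK k p r t N X b (t * b + h)) ^ (1 / (t : ℝ)) *
      (X / Mval t N X ^ b) ^ (LamC k r t * (1 - 1 / (t : ℝ))) +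
      (Mval t N X ^ (15 * (t - 1) * b)) ^ (-(r : ℝ) / 6) *
        (X / Mval t N X ^ b) ^ LamC k r t) := by
  have hX0 : 0 < X := by linarith
  have hM1 := one_le_Mval (by omega : 1 ≤ t) N hX
  have hM := Mval_pos t N hX0
  have hL := le_exponent_of_Jcount_lt hJ
  have hJpow {c : ℕ} (hc : c ≤ 16 * t * b) := Jcount_le_rpow hX hJ hM hMp
    (Mval_pow_le_sqrt (by omega) hX hb hc)
  have hbn := Nat.le_floor hb
  have hHb : 15 * (t - 1) * b ≤ 15 * t * b := by gcongr; omega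
  have hbtb : b ≤ t * b := Nat.le_mul_of_pos_left b (by omega)
  have hJb := hJpow (by linarith : b ≤ 16 * t * b)
  have hI : 0 ≤ Imax k p r (r * t) X b (t * b) := Imax_nonneg ..
  set n := ⌊(32 * (t : ℝ) * thetaC t N)⁻¹⌋₊
  set L := lamExp k (r * (t + 1)) + deltaC t N
  have hQ : 0 ≤ congConst k r t n L := (congConst_pos hr1).le
  have hR : 0 ≤ iterConst r t (15 * t * n) L := (iterConst_pos ..).le
  have hK := normK_le_rpow ht hr1 hrt hta hX hQ hI (Kmax_le_rpow hp hkp hkt ht2 ht hr1 hr2 hrt hab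
    hta hbn hX0 hM hpM ((Nat.cast_nonneg _).trans hL) hJb)
  have hC := (iterativeConst_pos (k := k) (t := t) (N := N) hr1).le
  rcases exists_Imax_le_rpow hp.pos ht hr1 (by omega) hbtb hX0 hM1 hpM
    (hHb.trans (Nat.mul_le_mul_left _ hbn)) hL hJb (hJpow (by linarith)) with ⟨h, hh, hle⟩ | hle
  · exact ⟨h, hh, (normK_le_of_conditioned (by omega) hta hX hQ hR hI hK hle).trans
      (mul_le_mul_of_nonneg_left (le_add_of_nonneg_right (by positivity)) hC)⟩
  · have hnorm := normK_nonneg (k := k) (p := p) (r := r) (t := t) (N := N) hX0 b (t * b + 0)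
    refine ⟨0, Nat.mul_pos (by omega) (by omega), ?_⟩
    exact (normK_le_of_unconditioned hN ht hr1 (by omega) hX hQ hR hI hK hle).trans
      (mul_le_mul_of_nonneg_left (le_add_of_nonneg_left (by positivity)) hC)

/-- Lemma 5.2: for 0 ≤ a < b ≤ (32tθ)⁻¹ with b ≥ ta, H = 15(t-1)b and g = b - ta,
there is an integer 0 ≤ h < H with
⟦K_{a,b}(X)⟧ ≤ C (X^δ ((M^{g-4h/3})^s ⟦K_{b,tb+h}(X)⟧)^{1/t} (X/M^b)^{Λ(1-1/t)}
  + (M^H)^{-r/6} (X/M^b)^Λ). -/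
theorem lemma5_2 (k r t : ℕ) (hk : 2 ≤ k)
    (ht1 : max 2 (((k : ℝ) - 1) / 2) ≤ (t : ℝ)) (ht2 : t ≤ k)
    (hr1 : 1 ≤ r) (hr2 : r ≤ k) (hrt : k ≤ r + t) :
    ∃ P₀ : ℝ, ∃ N₀ : ℕ, ∀ N : ℕ, N₀ ≤ N →
    ∃ C : ℝ, 0 < C ∧ ∃ X₀ : ℝ, ∀ X : ℝ, X₀ ≤ X →
    (∀ Y : ℝ, X ^ ((1:ℝ)/2) ≤ Y →
        (Jcount (r*(t+1)) k Y : ℝ) < Y ^ (lamExp k (r*(t+1)) + deltaC t N)) →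
    ∀ p : ℕ, p.Prime → P₀ < (p:ℝ) → Mval t N X < (p:ℝ) → (p:ℝ) ≤ 2 * Mval t N X →
    ∀ a b : ℕ, a < b → (b:ℝ) ≤ (32*(t:ℝ)*thetaC t N)⁻¹ → t*a ≤ b →
    ∃ h : ℕ, h < 15*(t-1)*b ∧
      normK k p r t N X a b ≤
        C * (X ^ deltaC t N *
            ((Mval t N X ^ (((b - t*a : ℕ):ℝ) - 4*(h:ℝ)/3)) ^ (r*t)
              * normK k p r t N X b (t*b+h)) ^ (1/(t:ℝ))
            * (X / Mval t N X ^ b) ^ (LamC k r t * (1 - 1/(t:ℝ)))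
          + (Mval t N X ^ (15*(t-1)*b)) ^ (-(r:ℝ)/6)
            * (X / Mval t N X ^ b) ^ LamC k r t) := by
  have ht : 2 ≤ t := by exact_mod_cast (le_max_left _ _).trans ht1
  have hkt : k ≤ 2 * t + 1 := by
    have hkt' : ((k : ℝ) - 1) / 2 ≤ t := (le_max_right _ _).trans ht1
    exact_mod_cast (by linarith : (k : ℝ) ≤ 2 * t + 1)
  exact ⟨k, 1, fun N hN => ⟨iterativeConst k r t N, iterativeConst_pos hr1, 1,
    fun X hX hJ p hp hkp hMp hpM a b hab hb hta => exists_normK_le hkt ht2 ht hr1 hr2 hrt hN hX hJ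
      hp (by exact_mod_cast hkp) hMp.le hpM hab hb hta⟩⟩

end
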